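/- For every positive integer k there exists a constant C > 0 (depending only on k) with the following property. Let g(x) = a_0 + a_1x + ⋯ + a_kx^k ∈ ℤ[x] with a_k > 0, let X, Y, Z ≥ 2 with Y·Z ≤ X, let a, q be positive integers with gcd(a,q) = 1, and let α ∈ ℝ with |α − a/q| < 1/q². Then | ∑_{1 ≤ n ≤ X, n ∈ W(g;Y)} e(g(n)α) | ≤ C·cont(g)⁶·(log Y)^{e·k}·X·( e^{−(log Z)/(log Y)} + ( a_k·(log(a_k·q·X))^{k²}·( q^{−1} + Z/X + q·Z^k/(a_k·X^k) ) )^{2^{−k}} ). -/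

import Mathlib

/-- `γ(g;p)`: the smallest positive integer `γ` such that the derivative `g'` does not vanish
identically modulo `p^γ`. -/
noncomputable def gammaExp (g : Polynomial ℤ) (p : ℕ) : ℕ :=
  sInf {c : ℕ | 0 < c ∧ ¬ ∀ n : ℤ, ((p : ℤ) ^ c) ∣ (Polynomial.derivative g).eval n}

/-- `j(g;p)`: the number of residues `s` modulo `p^{γ(g;p)}` with `g'(s) ≡ 0 (mod p^{γ(g;p)})`. -/
noncomputable def jCount (g : Polynomial ℤ) (p : ℕ) : ℕ := by
  classical
  exact ((Finset.range (p ^ gammaExp g p)).filter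
    (fun s => ((p : ℤ) ^ gammaExp g p) ∣ (Polynomial.derivative g).eval (s : ℤ))).card

/-- `∏_{p ≤ Y} (1 - j(g;p)/p^{γ(g;p)})`, the product being over primes `p ≤ Y`. -/
noncomputable def wProd (g : Polynomial ℤ) (Y : ℝ) : ℝ := by
  classical
  exact ∏ p ∈ (Finset.range (⌊Y⌋₊ + 1)).filter Nat.Prime,
    (1 - (jCount g p : ℝ) / (p : ℝ) ^ gammaExp g p)

/-- `W(g;Y) = {n ∈ ℤ : g'(n) ≢ 0 (mod p^{γ(g;p)}) for all primes p ≤ Y}`. -/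
def WSet (g : Polynomial ℤ) (Y : ℝ) : Set ℤ :=
  {n : ℤ | ∀ p : ℕ, p.Prime → (p : ℝ) ≤ Y →
    ¬ ((p : ℤ) ^ gammaExp g p ∣ (Polynomial.derivative g).eval n)}

/-- `W_q(g;Y) = {n ∈ ℤ : g'(n) ≢ 0 (mod p^{γ(g;p)}) for all primes p ≤ Y with p^{γ(g;p)} ∣ q}`. -/
def WqSet (g : Polynomial ℤ) (Y : ℝ) (q : ℕ) : Set ℤ :=
  {n : ℤ | ∀ p : ℕ, p.Prime → (p : ℝ) ≤ Y → p ^ gammaExp g p ∣ q →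
    ¬ ((p : ℤ) ^ gammaExp g p ∣ (Polynomial.derivative g).eval n)}
/-- `cont(g)`: the gcd of the nonconstant coefficients of `g`. -/
noncomputable def cont (g : Polynomial ℤ) : ℕ :=
  (Finset.Icc 1 g.natDegree).gcd (fun i => (g.coeff i).natAbs)
/-- `e(x) = e^{2πix}`. -/
noncomputable def e (x : ℝ) : ℂ := Complex.exp (2 * Real.pi * Complex.I * x)

/-- distance to nearest integer -/
noncomputable def ndist (x : ℝ) : ℝ := |x - round x|

lemma ndist_nonneg (x : ℝ) : 0 ≤ ndist x := abs_nonneg _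

lemma ndist_le (x : ℝ) (z : ℤ) : ndist x ≤ |x - z| := round_le x z

/-- smooth version of `min (N, 1/‖x‖)` -/
noncomputable def GG (N : ℝ) (x : ℝ) : ℝ := 2 * N / (1 + N * ndist x)

lemma GG_nonneg {N : ℝ} (hN : 0 ≤ N) (x : ℝ) : 0 ≤ GG N x := by
  unfold GG
  have := ndist_nonneg x
  positivity

lemma GG_le {N : ℝ} (hN : 0 ≤ N) (x : ℝ) : GG N x ≤ 2 * N := by
  unfold GG
  have := ndist_nonneg x
  apply div_le_self (by positivity)
  nlinarith [mul_nonneg hN this]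

lemma GG_le_inv {N : ℝ} (hN : 0 ≤ N) (x y : ℝ) (hy : 0 < y) (hxy : y ≤ ndist x) :
    GG N x ≤ 2 / y := by
  unfold GG
  have := ndist_nonneg x
  rw [div_le_div_iff₀ (by positivity) hy]
  nlinarith [mul_le_mul_of_nonneg_left hxy hN]

lemma e_add (x y : ℝ) : e (x + y) = e x * e y := by
  unfold e
  rw [← Complex.exp_add]; congr 1; push_cast; ring

lemma e_int (n : ℤ) : e n = 1 := by
  unfold e
  rw [Complex.exp_eq_one_iff]
  exact ⟨n, by push_cast; ring⟩

lemma norm_e (x : ℝ) : ‖e x‖ = 1 := by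
  unfold e
  rw [show (2 * Real.pi * Complex.I * x : ℂ) = ((2 * Real.pi * x : ℝ) : ℂ) * Complex.I by
    push_cast; ring]
  exact Complex.norm_exp_ofReal_mul_I _

lemma e_neg_conj (x : ℝ) : (starRingEnd ℂ) (e x) = e (-x) := by
  unfold e
  rw [← Complex.exp_conj]
  congr 1
  simp only [map_mul, Complex.conj_I, Complex.conj_ofReal, map_ofNat]
  push_cast; ring

lemma norm_e_sub_one (x : ℝ) : 4 * ndist x ≤ ‖e x - 1‖ := by
  have h1 : e x = e (x - round x) := by
    have : x = (x - round x) + (round x : ℤ) := by ring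
    conv_lhs => rw [this]
    rw [e_add, e_int, mul_one]
  rw [h1]
  unfold ndist
  set y := x - round x with hy
  have hy2 : |y| ≤ 1 / 2 := abs_sub_round x
  have h2 : e y = Complex.exp (Complex.I * ((2 * Real.pi * y : ℝ) : ℂ)) := by
    unfold e; congr 1; push_cast; ring
  rw [h2, Complex.norm_exp_I_mul_ofReal_sub_one, Real.norm_eq_abs, abs_mul]
  have h3 : |Real.sin (2 * Real.pi * y / 2)| = Real.sin (Real.pi * |y|) := by
    rw [show 2 * Real.pi * y / 2 = Real.pi * y by ring]
    rcases le_total 0 y with h | h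
    · rw [abs_of_nonneg h, abs_of_nonneg]
      rw [abs_of_nonneg h] at hy2
      apply Real.sin_nonneg_of_nonneg_of_le_pi
      · positivity
      · nlinarith [Real.pi_pos]
    · rw [abs_of_nonpos h, mul_neg, Real.sin_neg, abs_of_nonpos]
      rw [abs_of_nonpos h] at hy2
      have := Real.sin_nonneg_of_nonneg_of_le_pi (x := Real.pi * (-y))
        (by have := Real.pi_pos; apply mul_nonneg <;> linarith) (by nlinarith [Real.pi_pos])
      rw [mul_neg, Real.sin_neg] at this
      linarith
  rw [h3]
  have h4 := Real.mul_le_sin (x := Real.pi * |y|) (by positivity) (by nlinarith [Real.pi_pos])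
  rw [show 2 / Real.pi * (Real.pi * |y|) = 2 * |y| by field_simp] at h4
  simp only [abs_two]
  linarith

lemma lin_sum (N : ℕ) (x c : ℝ) (u v : ℤ) (huv : v - u ≤ N) :
    ‖∑ m ∈ Finset.Ico u v, e (c + m * x)‖ ≤ GG N x := by
  set S := ∑ m ∈ Finset.Ico u v, e (c + m * x) with hS
  have h1 : ‖S‖ ≤ N := by
    calc ‖S‖ ≤ ∑ m ∈ Finset.Ico u v, ‖e (c + m * x)‖ := norm_sum_le _ _
      _ = ((Finset.Ico u v).card : ℝ) := by simp [norm_e]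
      _ ≤ N := by
        rw [Int.card_Ico]
        have : (v - u).toNat ≤ N := by omega
        exact_mod_cast this
  have h2 : ‖S‖ * ‖e x - 1‖ ≤ 2 := by
    rw [← norm_mul]
    rcases le_or_gt v u with h | h
    · rw [hS, Finset.Ico_eq_empty (by omega)]; simp
    have : S * (e x - 1) = e (c + v * x) - e (c + u * x) := by
      rw [hS]
      clear_value S
      clear h1 hS huv
      induction v, h using Int.leInduction with
      | base =>
        rw [show Finset.Ico u (u+1) = {u} by ext; simp; omega]
        simp only [Finset.sum_singleton]
        rw [mul_sub, ← e_add, mul_one]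
        congr 2
        push_cast; ring
      | succ v hv ih =>
        rw [show Finset.Ico u (v+1) = insert v (Finset.Ico u v) by ext; simp; omega]
        rw [Finset.sum_insert (by simp), add_mul, ih, mul_sub, ← e_add]
        rw [show c + ((v + 1 : ℤ) : ℝ) * x = c + v * x + x by push_cast; ring]
        ring
    rw [this]
    calc _ ≤ ‖e (c + v * x)‖ + ‖e (c + u * x)‖ := norm_sub_le _ _
      _ = 2 := by rw [norm_e, norm_e]; norm_num
  have h3 := norm_e_sub_one x
  have h4 := ndist_nonneg x
  unfold GG
  rw [le_div_iff₀ (by positivity)]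
  have h5 : ‖S‖ * (4 * ndist x) ≤ 2 := le_trans (mul_le_mul_of_nonneg_left h3 (norm_nonneg _)) h2
  have hN : (0:ℝ) ≤ N := Nat.cast_nonneg N
  nlinarith [mul_le_mul_of_nonneg_left h5 hN]

/-- iterated sum over products -/
noncomputable def TT (N : ℕ) : ℕ → (ℤ → ℝ) → ℝ
  | 0, F => F 1
  | (j+1), F => ∑ h ∈ Finset.Ioo (-(N:ℤ)) N, TT N j (fun m => F (h * m))

lemma diff_poly (φ : Polynomial ℝ) (j : ℕ) (hφ : φ.natDegree ≤ j + 2) (h : ℝ) :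
    ∃ ψ : Polynomial ℝ, ψ.natDegree ≤ j + 1 ∧ ψ.coeff (j+1) = (j+2) * h * φ.coeff (j+2) ∧
      ∀ x, ψ.eval x = φ.eval (x + h) - φ.eval x := by
  refine ⟨Polynomial.taylor h φ - φ, ?_, ?_, ?_⟩
  · rw [Polynomial.natDegree_le_iff_coeff_eq_zero]
    intro n hn
    rw [Polynomial.coeff_sub, Polynomial.taylor_coeff]
    have h1 : (Polynomial.hasseDeriv n φ) = Polynomial.C (φ.coeff n) := by
      ext i
      rw [Polynomial.hasseDeriv_coeff, Polynomial.coeff_C]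
      split_ifs with hi
      · subst hi; simp
      · rw [Polynomial.coeff_eq_zero_of_natDegree_lt (by omega)]; simp
    rw [h1]; simp
  · rw [Polynomial.coeff_sub, Polynomial.taylor_coeff]
    have h1 : (Polynomial.hasseDeriv (j+1) φ) = Polynomial.C (φ.coeff (j+1))
        + Polynomial.C ((j+2) * φ.coeff (j+2)) * Polynomial.X := by
      ext i
      rw [Polynomial.hasseDeriv_coeff, Polynomial.coeff_add, Polynomial.coeff_C,
        Polynomial.coeff_C_mul, Polynomial.coeff_X]
      rcases i with _ | _ | i
      · simp
      · have h2 : 0 + 1 + (j + 1) = j + 2 := by ring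
        rw [h2, show (j+2).choose (j+1) = j + 2 by
          rw [show j + 2 = (j+1) + 1 by ring, Nat.choose_succ_self_right]]
        simp
      · rw [Polynomial.coeff_eq_zero_of_natDegree_lt (by omega)]; simp
    rw [h1]; simp; ring
  · intro x
    simp [Polynomial.taylor_eval]

lemma sq_norm_sum (N : ℕ) (φ : ℝ → ℝ) (u v : ℤ) (huv : v - u ≤ N) :
    ‖∑ m ∈ Finset.Ico u v, e (φ m)‖ ^ 2 ≤ ∑ h ∈ Finset.Ioo (-(N:ℤ)) N,
      ‖∑ m ∈ Finset.Ico (max u (u-h)) (min v (v-h)), e (φ (m + h) - φ m)‖ := by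
  set S := ∑ m ∈ Finset.Ico u v, e (φ m) with hS
  have h1 : ((‖S‖ ^ 2 : ℝ) : ℂ) = ∑ h ∈ Finset.Ioo (-(N:ℤ)) N,
      ∑ m ∈ Finset.Ico (max u (u-h)) (min v (v-h)), e (φ (m + h) - φ m) := by
    have h2 : ((‖S‖ ^ 2 : ℝ) : ℂ) = S * (starRingEnd ℂ) S := by
      rw [Complex.mul_conj, Complex.normSq_eq_norm_sq]
    rw [h2, hS, map_sum, Finset.sum_mul_sum, ← Finset.sum_product',
      Finset.sum_sigma']
    symm
    refine Finset.sum_bij' (fun x _ => ((x.2 + x.1, x.2) : ℤ × ℤ))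
      (fun y _ => ⟨y.1 - y.2, y.2⟩) ?_ ?_ ?_ ?_ ?_
    · rintro ⟨h, m⟩ hx
      simp at hx ⊢
      omega
    · rintro ⟨a, b⟩ hx
      simp at hx ⊢
      omega
    · rintro ⟨h, m⟩ hx
      simp
    · rintro ⟨a, b⟩ hx
      simp
    · rintro ⟨h, m⟩ hx
      simp only
      rw [e_neg_conj, ← e_add, ← sub_eq_add_neg]
      push_cast
      rfl
  have h3 : ‖S‖ ^ 2 = ‖((‖S‖ ^ 2 : ℝ) : ℂ)‖ := by
    rw [Complex.norm_real, Real.norm_eq_abs, abs_of_nonneg (by positivity)]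
  rw [h3, h1]
  exact norm_sum_le _ _

theorem weyl (N : ℕ) (hN : 1 ≤ N) (j : ℕ) : ∀ (φ : Polynomial ℝ), φ.natDegree ≤ j + 1 →
    ∀ (u v : ℤ), v - u ≤ N →
    (2 * N : ℝ) ^ (j+1) * ‖∑ m ∈ Finset.Ico u v, e (φ.eval (m:ℝ))‖ ^ (2 ^ j) ≤
      (2 * N : ℝ) ^ (2 ^ j) *
        TT N j (fun m => GG N (m * ((j+1).factorial * φ.coeff (j+1)))) := by
  induction j with
  | zero =>
    intro φ hφ u v huv
    have := lin_sum N (φ.coeff 1) (φ.coeff 0) u v huv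
    simp only [TT]
    have h2 : ∀ m : ℤ, φ.eval (m:ℝ) = φ.coeff 0 + m * φ.coeff 1 := by
      intro m
      conv_lhs => rw [Polynomial.eq_X_add_C_of_natDegree_le_one hφ]
      simp; ring
    simp only [h2]
    simp only [zero_add, pow_one, pow_zero, Nat.factorial_one, Nat.cast_one, Int.cast_one, one_mul]
    gcongr
  | succ j ih =>
    intro φ hφ u v huv
    set S := ∑ m ∈ Finset.Ico u v, e (φ.eval (m:ℝ)) with hS
    have hsq := sq_norm_sum N (fun x => φ.eval x) u v huv
    rw [← hS] at hsq
    set Sh : ℤ → ℝ := fun h => ‖∑ m ∈ Finset.Ico (max u (u-h)) (min v (v-h)),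
      e (φ.eval ((m:ℝ) + h) - φ.eval (m:ℝ))‖ with hSh
    have hbound : ∀ h : ℤ, (2 * N : ℝ) ^ (j+1) * Sh h ^ (2 ^ j) ≤ (2 * N : ℝ) ^ (2 ^ j) *
        TT N j (fun m => GG N (((h * m : ℤ) : ℝ) * ((j+2).factorial * φ.coeff (j+2)))) := by
      intro h
      obtain ⟨ψ, h1, h2, h3⟩ := diff_poly φ j hφ h
      have := ih ψ h1 (max u (u-h)) (min v (v-h)) (by omega)
      simp only [h3] at this
      convert this using 5 with m
      rw [h2, Nat.factorial_succ (j+1)]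
      push_cast; ring
    have hpm : (∑ h ∈ Finset.Ioo (-(N:ℤ)) N, Sh h) ^ (2 ^ j) * (2 * N : ℝ) ≤
        (2 * N : ℝ) ^ (2 ^ j) * ∑ h ∈ Finset.Ioo (-(N:ℤ)) N, Sh h ^ (2 ^ j) := by
      obtain ⟨n, hn⟩ : ∃ n, 2 ^ j = n + 1 := ⟨2 ^ j - 1, by have := Nat.one_le_two_pow (n := j); omega⟩
      rw [hn]
      have h4 := pow_sum_div_card_le_sum_pow (s := Finset.Ioo (-(N:ℤ)) N) (f := Sh)
        (fun i _ => norm_nonneg _) n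
      have hc : ((Finset.Ioo (-(N:ℤ)) N).card : ℝ) ≤ 2 * N := by
        rw [Int.card_Ioo]
        have : ((N:ℤ) - -(N:ℤ) - 1).toNat ≤ 2 * N := by omega
        exact_mod_cast this
      have hc0 : (0:ℝ) < ((Finset.Ioo (-(N:ℤ)) N).card : ℝ) := by
        rw [Int.card_Ioo]
        have : 0 < ((N:ℤ) - -(N:ℤ) - 1).toNat := by omega
        exact_mod_cast this
      rw [div_le_iff₀ (by positivity)] at h4
      have h5 : (0:ℝ) ≤ ∑ h ∈ Finset.Ioo (-(N:ℤ)) N, Sh h ^ (n+1) :=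
        Finset.sum_nonneg fun i _ => pow_nonneg (norm_nonneg _) _
      calc _ ≤ ((∑ h ∈ Finset.Ioo (-(N:ℤ)) N, Sh h ^ (n+1)) *
            ((Finset.Ioo (-(N:ℤ)) N).card : ℝ) ^ n) * (2 * N) := by gcongr
        _ ≤ ((∑ h ∈ Finset.Ioo (-(N:ℤ)) N, Sh h ^ (n+1)) * (2 * N) ^ n) * (2 * N) := by gcongr
        _ = _ := by ring
    have hN0 : (0:ℝ) < 2 * N := by positivity
    calc (2 * N : ℝ) ^ (j+1+1) * ‖S‖ ^ (2 ^ (j+1))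
        = (2 * N : ℝ) ^ (j+1) * ((‖S‖ ^ 2) ^ (2 ^ j) * (2 * N)) := by
          rw [← pow_mul, pow_succ 2 j, mul_comm 2 (2 ^ j), mul_comm (2 ^ j) 2]; ring
      _ ≤ (2 * N : ℝ) ^ (j+1) * ((∑ h ∈ Finset.Ioo (-(N:ℤ)) N, Sh h) ^ (2 ^ j) * (2 * N)) := by
          gcongr
      _ ≤ (2 * N : ℝ) ^ (j+1) * ((2 * N : ℝ) ^ (2 ^ j) * ∑ h ∈ Finset.Ioo (-(N:ℤ)) N, Sh h ^ (2 ^ j)) := by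
          gcongr
      _ = (2 * N : ℝ) ^ (2 ^ j) * ∑ h ∈ Finset.Ioo (-(N:ℤ)) N, (2 * N : ℝ) ^ (j+1) * Sh h ^ (2 ^ j) := by
          rw [← Finset.mul_sum]; ring
      _ ≤ (2 * N : ℝ) ^ (2 ^ j) * ∑ h ∈ Finset.Ioo (-(N:ℤ)) N, (2 * N : ℝ) ^ (2 ^ j) *
        TT N j (fun m => GG N (((h * m : ℤ) : ℝ) * ((j+2).factorial * φ.coeff (j+2)))) := by
          refine mul_le_mul_of_nonneg_left ?_ (by positivity)
          exact Finset.sum_le_sum fun h _ => hbound h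
      _ = _ := by
          rw [← Finset.mul_sum, ← mul_assoc, ← pow_add]
          simp only [TT]
          congr 2
          rw [pow_succ]; ring

lemma sum_Ioo_sym (f : ℤ → ℝ) (n : ℕ) :
    ∑ h ∈ Finset.Ioo (-((n+1:ℕ):ℤ)) ((n+1:ℕ):ℤ), f h
      = f 0 + ∑ i ∈ Finset.Icc 1 n, (f i + f (-(i:ℤ))) := by
  induction n with
  | zero =>
    rw [show Finset.Ioo (-((0+1:ℕ):ℤ)) ((0+1:ℕ):ℤ) = {0} by ext; simp; omega]
    simp
  | succ n ih =>
    rw [show Finset.Ioo (-((n+1+1:ℕ):ℤ)) ((n+1+1:ℕ):ℤ) =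
      insert ((n+1:ℕ):ℤ) (insert (-((n+1:ℕ):ℤ)) (Finset.Ioo (-((n+1:ℕ):ℤ)) ((n+1:ℕ):ℤ))) by
        ext; simp; omega]
    rw [Finset.sum_insert (by simp; omega), Finset.sum_insert (by simp), ih,
      Finset.sum_Icc_succ_top (by omega)]
    ring

lemma sum_Ioo_le (f : ℤ → ℝ) (N : ℕ) (hN : 1 ≤ N) (hf : ∀ h, 0 ≤ f h)
    (hs : ∀ h, f (-h) = f h) :
    ∑ h ∈ Finset.Ioo (-(N:ℤ)) (N:ℤ), f h ≤ f 0 + 2 * ∑ i ∈ Finset.Icc 1 N, f (i:ℤ) := by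
  obtain ⟨n, rfl⟩ : ∃ n, N = n + 1 := ⟨N - 1, by omega⟩
  rw [sum_Ioo_sym, Finset.mul_sum, Finset.sum_Icc_succ_top (by omega)]
  have h1 : ∑ i ∈ Finset.Icc 1 n, (f i + f (-(i:ℤ))) = ∑ i ∈ Finset.Icc 1 n, 2 * f i := by
    apply Finset.sum_congr rfl
    intro i _
    rw [hs]; ring
  rw [h1]
  linarith [hf ((n+1:ℕ):ℤ)]

lemma TT_mono (N j : ℕ) : ∀ (F G : ℤ → ℝ), (∀ m, F m ≤ G m) → TT N j F ≤ TT N j G := by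
  induction j with
  | zero => intro F G h; exact h 1
  | succ j ih =>
    intro F G h
    simp only [TT]
    exact Finset.sum_le_sum fun i _ => ih _ _ fun m => h _

lemma TT_add (N j : ℕ) : ∀ (F G : ℤ → ℝ), TT N j (fun m => F m + G m) = TT N j F + TT N j G := by
  induction j with
  | zero => intro F G; simp only [TT]
  | succ j ih =>
    intro F G
    simp only [TT]
    rw [← Finset.sum_add_distrib]
    exact Finset.sum_congr rfl fun i _ => ih (fun m => F (i * m)) (fun m => G (i * m))

lemma TT_smul (N j : ℕ) (c : ℝ) : ∀ (F : ℤ → ℝ), TT N j (fun m => c * F m) = c * TT N j F := by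
  induction j with
  | zero => intro F; simp only [TT]
  | succ j ih =>
    intro F
    simp only [TT]
    rw [Finset.mul_sum]
    exact Finset.sum_congr rfl fun i _ => ih (fun m => F (i * m))

lemma TT_nonneg (N j : ℕ) : ∀ (F : ℤ → ℝ), (∀ m, 0 ≤ F m) → 0 ≤ TT N j F := by
  induction j with
  | zero => intro F h; exact h 1
  | succ j ih =>
    intro F h
    simp only [TT]
    exact Finset.sum_nonneg fun i _ => ih _ fun m => h _

lemma TT_sum {ι : Type*} (N j : ℕ) (s : Finset ι) (F : ι → ℤ → ℝ) :
    TT N j (fun m => ∑ i ∈ s, F i m) = ∑ i ∈ s, TT N j (F i) := by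
  classical
  induction s using Finset.induction_on with
  | empty =>
    simp only [Finset.sum_empty]
    have := TT_smul N j 0 (fun _ => 0)
    simpa using this
  | insert a s ha ih =>
    simp only [Finset.sum_insert ha]
    rw [TT_add, ih]

lemma card_Ioo_le (N : ℕ) : ((Finset.Ioo (-(N:ℤ)) (N:ℤ)).card : ℝ) ≤ 2 * N := by
  rw [Int.card_Ioo]
  have : ((N:ℤ) - -(N:ℤ) - 1).toNat ≤ 2 * N := by omega
  exact_mod_cast this

lemma TT_one_le (N j : ℕ) : TT N j (fun _ => 1) ≤ (2 * N : ℝ) ^ j := by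
  induction j with
  | zero => simp [TT]
  | succ j ih =>
    simp only [TT]
    rw [Finset.sum_const, nsmul_eq_mul, pow_succ']
    have := card_Ioo_le N
    have h0 : 0 ≤ TT N j (fun _ => 1) := TT_nonneg _ _ _ (fun _ => by norm_num)
    exact mul_le_mul this ih h0 (by positivity)

/-- indicator of zero -/
noncomputable def indZ (m : ℤ) : ℝ := if m = 0 then 1 else 0

lemma indZ_nonneg (m : ℤ) : 0 ≤ indZ m := by unfold indZ; split_ifs <;> norm_num

lemma indZ_mul (h m : ℤ) (hh : h ≠ 0) : indZ (h * m) = indZ m := by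
  unfold indZ; simp [hh]

lemma TT_indZ (N j : ℕ) (hN : 1 ≤ N) : (2 * N : ℝ) * TT N j indZ ≤ j * (2 * N : ℝ) ^ j := by
  induction j with
  | zero => simp [TT, indZ]
  | succ j ih =>
    simp only [TT]
    have hI : (0:ℤ) ∈ Finset.Ioo (-(N:ℤ)) (N:ℤ) := by simp; omega
    rw [← Finset.add_sum_erase _ _ hI]
    have h1 : TT N j (fun m => indZ (0 * m)) ≤ (2 * N : ℝ) ^ j := by
      have : (fun m => indZ (0 * m)) = fun _ : ℤ => (1:ℝ) := by ext; simp [indZ]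
      rw [this]; exact TT_one_le N j
    have h2 : ∑ h ∈ (Finset.Ioo (-(N:ℤ)) (N:ℤ)).erase 0, TT N j (fun m => indZ (h * m)) ≤
        2 * N * TT N j indZ := by
      have : ∀ h ∈ (Finset.Ioo (-(N:ℤ)) (N:ℤ)).erase 0, TT N j (fun m => indZ (h * m)) = TT N j indZ := by
        intro h hh
        congr 1; ext m; exact indZ_mul h m (Finset.ne_of_mem_erase hh)
      rw [Finset.sum_congr rfl this, Finset.sum_const, nsmul_eq_mul]
      apply mul_le_mul_of_nonneg_right _ (TT_nonneg _ _ _ indZ_nonneg)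
      refine le_trans ?_ (card_Ioo_le N)
      exact_mod_cast Finset.card_le_card (Finset.erase_subset _ _)
    have hN0 : (0:ℝ) < 2 * N := by positivity
    calc _ ≤ (2 * N : ℝ) * ((2 * N : ℝ) ^ j + 2 * N * TT N j indZ) := by
            apply mul_le_mul_of_nonneg_left (add_le_add h1 h2) hN0.le
      _ ≤ (2 * N : ℝ) * ((2 * N : ℝ) ^ j + j * (2 * N : ℝ) ^ j) := by gcongr
      _ = _ := by push_cast; ring

lemma sum_mul_le (F : ℤ → ℝ) (hF : ∀ m, 0 ≤ F m) (A B K : ℕ)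
    (hK : ∀ m, 1 ≤ m → m ≤ A * B → m.divisors.card ≤ K) :
    ∑ h ∈ Finset.Icc 1 A, ∑ m ∈ Finset.Icc 1 B, F ((h:ℤ) * (m:ℤ)) ≤
      K * ∑ m ∈ Finset.Icc 1 (A * B), F m := by
  rw [← Finset.sum_product' (Finset.Icc 1 A) (Finset.Icc 1 B) (fun h m => F ((h:ℤ) * (m:ℤ)))]
  have hmaps : ∀ x ∈ Finset.Icc 1 A ×ˢ Finset.Icc 1 B, x.1 * x.2 ∈ Finset.Icc 1 (A * B) := by
    rintro ⟨a, b⟩ hx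
    simp at hx ⊢
    exact ⟨Nat.mul_pos hx.1.1 hx.2.1, Nat.mul_le_mul hx.1.2 hx.2.2⟩
  rw [← Finset.sum_fiberwise_of_maps_to hmaps, Finset.mul_sum]
  apply Finset.sum_le_sum
  intro m hm
  rw [Finset.mem_Icc] at hm
  have h1 : ∀ x ∈ (Finset.Icc 1 A ×ˢ Finset.Icc 1 B).filter (fun x => x.1 * x.2 = m),
      F ((x.1:ℤ) * (x.2:ℤ)) = F m := by
    intro x hx
    rw [← (Finset.mem_filter.mp hx).2]; push_cast; rfl
  rw [Finset.sum_congr rfl h1, Finset.sum_const, nsmul_eq_mul]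
  apply mul_le_mul_of_nonneg_right _ (hF _)
  have h2 : ((Finset.Icc 1 A ×ˢ Finset.Icc 1 B).filter (fun x => x.1 * x.2 = m)).card ≤
      m.divisors.card := by
    apply Finset.card_le_card_of_injOn (fun x => x.1)
    · intro x hx
      simp at hx
      simp only [Finset.mem_coe, Nat.mem_divisors]
      exact ⟨⟨x.2, hx.2.symm⟩, by omega⟩
    · intro x hx y hy hxy
      simp at hx hy hxy
      have : x.1 * x.2 = x.1 * y.2 := by rw [hx.2, hxy, hy.2]
      ext
      · exact hxy
      · exact Nat.eq_of_mul_eq_mul_left (by omega) this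
  exact_mod_cast h2.trans (hK m hm.1 hm.2)

lemma TT_div (N : ℕ) (hN : 1 ≤ N) (K J : ℕ) (hK : ∀ m, 1 ≤ m → m ≤ N ^ J → m.divisors.card ≤ K)
    (j : ℕ) : j ≤ J → ∀ F : ℤ → ℝ, (∀ m, 0 ≤ F m) → (∀ m, F (-m) = F m) →
    TT N j F ≤ F 0 * TT N j indZ + (2 * K) ^ j * ∑ m ∈ Finset.Icc 1 (N ^ j), F (m:ℤ) := by
  induction j with
  | zero => intro _ F _ _; simp [TT, indZ]
  | succ j ih =>
    intro hj F hF hs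
    have ih := ih (by omega)
    simp only [TT]
    have hI : (0:ℤ) ∈ Finset.Ioo (-(N:ℤ)) (N:ℤ) := by simp; omega
    set R : ℤ → ℝ := fun h => if h = 0 then 0 else
      (2 * K : ℝ) ^ j * ∑ m ∈ Finset.Icc 1 (N ^ j), F (h * (m:ℤ)) with hR
    have hpt : ∀ h ∈ Finset.Ioo (-(N:ℤ)) (N:ℤ), TT N j (fun m => F (h * m)) ≤
        F 0 * TT N j (fun m => indZ (h * m)) + R h := by
      intro h _
      by_cases hh : h = 0
      · simp only [hh, hR, zero_mul, if_true, add_zero]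
        have : (fun _ : ℤ => F 0) = fun m => F 0 * (fun _ => 1) m := by ext; simp
        rw [this, TT_smul]
        simp [indZ]
      · simp only [hR, hh, if_false]
        have := ih (fun m => F (h * m)) (fun m => hF _) (fun m => by
          rw [mul_neg]; exact hs _)
        simp only [mul_zero] at this
        have h3 : (fun m => indZ (h * m)) = indZ := by ext m; exact indZ_mul h m hh
        rw [h3]
        exact this
    refine (Finset.sum_le_sum hpt).trans ?_
    rw [Finset.sum_add_distrib, ← Finset.mul_sum]
    refine add_le_add le_rfl ?_
    have hRnn : ∀ h, 0 ≤ R h := by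
      intro h
      simp only [hR]
      split_ifs
      · exact le_rfl
      · have := Finset.sum_nonneg (s := Finset.Icc 1 (N ^ j)) (f := fun m : ℕ => F (h * (m:ℤ)))
          (fun m _ => hF _)
        positivity
    have hRs : ∀ h, R (-h) = R h := by
      intro h
      simp only [hR, neg_eq_zero, neg_mul, hs]
    refine (sum_Ioo_le R N hN hRnn hRs).trans ?_
    have h0 : R 0 = 0 := by simp [hR]
    rw [h0, zero_add]
    have h4 : ∑ i ∈ Finset.Icc 1 N, R (i:ℤ) = (2 * K : ℝ) ^ j *
        ∑ i ∈ Finset.Icc 1 N, ∑ m ∈ Finset.Icc 1 (N ^ j), F ((i:ℤ) * (m:ℤ)) := by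
      rw [Finset.mul_sum]
      apply Finset.sum_congr rfl
      intro i hi
      have : (i:ℤ) ≠ 0 := by simp at hi; omega
      simp only [hR, this, if_false]
    rw [h4]
    have h5 := sum_mul_le F hF N (N ^ j) K (fun m h1 h2 => hK m h1 (h2.trans (by
      rw [← pow_succ']; exact Nat.pow_le_pow_right hN hj)))
    rw [← pow_succ'] at h5
    calc _ ≤ 2 * ((2 * K : ℝ) ^ j * (K * ∑ m ∈ Finset.Icc 1 (N ^ (j+1)), F m)) := by gcongr
      _ = _ := by ring

/-- power function on nonzero multiples of `u` -/
noncomputable def Fu (s : ℝ) (u : ℕ) (m : ℤ) : ℝ :=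
  if m ≠ 0 ∧ (u:ℤ) ∣ m then (m.natAbs : ℝ) ^ (-s) else 0

lemma Fu_nonneg (s : ℝ) (u : ℕ) (m : ℤ) : 0 ≤ Fu s u m := by
  unfold Fu; split_ifs <;> positivity

lemma Fu_neg (s : ℝ) (u : ℕ) (m : ℤ) : Fu s u (-m) = Fu s u m := by
  unfold Fu; simp

lemma Fu_mul (s : ℝ) (u : ℕ) (hu : 1 ≤ u) (h m : ℤ) :
    Fu s u (h * m) ≤ ∑ d ∈ u.divisors, Fu s d h * Fu s (u / d) m := by
  by_cases hc : h * m ≠ 0 ∧ (u:ℤ) ∣ h * m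
  · have hh : h ≠ 0 := left_ne_zero_of_mul hc.1
    have hm : m ≠ 0 := right_ne_zero_of_mul hc.1
    set d := Nat.gcd u h.natAbs with hd
    have hdu : d ∣ u := Nat.gcd_dvd_left _ _
    have hdmem : d ∈ u.divisors := by
      rw [Nat.mem_divisors]; exact ⟨hdu, by omega⟩
    have h1 : Fu s u (h * m) = Fu s d h * Fu s (u / d) m := by
      have h2 : (d:ℤ) ∣ h := by
        rw [Int.natCast_dvd]; exact Nat.gcd_dvd_right _ _
      have h3 : ((u / d : ℕ) : ℤ) ∣ m := by
        rw [Int.natCast_dvd]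
        have h4 : u ∣ h.natAbs * m.natAbs := by
          rw [← Int.natAbs_mul, ← Int.natCast_dvd]; exact hc.2
        have hdpos : 0 < d := Nat.gcd_pos_of_pos_left _ (by omega)
        have hcop : Nat.Coprime (u / d) (h.natAbs / d) := Nat.coprime_div_gcd_div_gcd hdpos
        apply hcop.dvd_of_dvd_mul_left
        have h5 : h.natAbs = d * (h.natAbs / d) := (Nat.mul_div_cancel' (Nat.gcd_dvd_right _ _)).symm
        have h6 : u = d * (u / d) := (Nat.mul_div_cancel' hdu).symm
        rw [h5, h6, mul_assoc] at h4
        have := Nat.dvd_of_mul_dvd_mul_left hdpos h4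
        simpa [Nat.mul_div_cancel_left _ hdpos] using this
      unfold Fu
      rw [if_pos hc, if_pos ⟨hh, h2⟩, if_pos ⟨hm, h3⟩, Int.natAbs_mul, Nat.cast_mul,
        Real.mul_rpow (by positivity) (by positivity)]
    rw [h1]
    exact Finset.single_le_sum (f := fun d => Fu s d h * Fu s (u / d) m)
      (fun i _ => mul_nonneg (Fu_nonneg _ _ _) (Fu_nonneg _ _ _)) hdmem
  · have : Fu s u (h * m) = 0 := by unfold Fu; rw [if_neg hc]
    rw [this]
    exact Finset.sum_nonneg fun i _ => mul_nonneg (Fu_nonneg _ _ _) (Fu_nonneg _ _ _)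

lemma sum_rpow (t : ℝ) (ht : 0 < t) (ht1 : t ≤ 1) (n : ℕ) :
    t * ∑ i ∈ Finset.Icc 1 n, (i:ℝ) ^ (t - 1) ≤ (n:ℝ) ^ t := by
  induction n with
  | zero => simp [ht.ne']
  | succ n ih =>
    rw [Finset.sum_Icc_succ_top (by omega), mul_add]
    have hpos : (0:ℝ) < ((n+1:ℕ):ℝ) := by positivity
    have h1 : (n:ℝ) ^ t ≤ ((n+1:ℕ):ℝ) ^ t * (1 + t * (-1 / ((n+1:ℕ):ℝ))) := by
      have h2 : (n:ℝ) = ((n+1:ℕ):ℝ) * (1 + (-1 / ((n+1:ℕ):ℝ))) := by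
        field_simp; push_cast; ring
      have h3 : -1 ≤ (-1 / ((n+1:ℕ):ℝ)) := by
        rw [le_div_iff₀ hpos]; push_cast; linarith [(Nat.cast_nonneg n : (0:ℝ) ≤ n)]
      conv_lhs => rw [h2]
      rw [Real.mul_rpow hpos.le (by linarith)]
      exact mul_le_mul_of_nonneg_left (rpow_one_add_le_one_add_mul_self h3 ht.le ht1)
        (by positivity)
    have h4 : ((n+1:ℕ):ℝ) ^ t * (1 + t * (-1 / ((n+1:ℕ):ℝ))) =
        ((n+1:ℕ):ℝ) ^ t - t * ((n+1:ℕ):ℝ) ^ (t - 1) := by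
      rw [Real.rpow_sub_one hpos.ne']
      field_simp
      ring
    linarith

lemma sum_Fu (s : ℝ) (hs : 0 ≤ s) (hs1 : s < 1) (d : ℕ) (hd : 1 ≤ d) (N : ℕ) :
    ∑ h ∈ Finset.Icc 1 N, Fu s d (h:ℤ) ≤ 1 / (1 - s) * (N:ℝ) ^ (1 - s) / d := by
  have h1 : ∑ h ∈ Finset.Icc 1 N, Fu s d (h:ℤ) ≤
      ∑ i ∈ Finset.Icc 1 (N / d), ((d * i : ℕ) : ℝ) ^ (-s) := by
    have : ∀ h ∈ Finset.Icc 1 N, Fu s d (h:ℤ) = if d ∣ h then (h:ℝ) ^ (-s) else 0 := by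
      intro h hh
      have h0 : h ≠ 0 := by simp at hh; omega
      unfold Fu
      simp [Int.natCast_dvd_natCast, h0]
    rw [Finset.sum_congr rfl this, ← Finset.sum_filter]
    have himg : (Finset.Icc 1 N).filter (fun h => d ∣ h) ⊆ (Finset.Icc 1 (N / d)).image (fun i => d * i) := by
      intro h hh
      simp only [Finset.mem_filter, Finset.mem_Icc, Finset.mem_image] at hh ⊢
      obtain ⟨⟨h1, h2⟩, i, rfl⟩ := hh
      refine ⟨i, ⟨Nat.pos_of_ne_zero (by rintro rfl; simp at h1), ?_⟩, rfl⟩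
      rw [Nat.le_div_iff_mul_le hd, mul_comm]; exact h2
    refine (Finset.sum_le_sum_of_subset_of_nonneg himg (fun i _ _ => by positivity)).trans ?_
    rw [Finset.sum_image]
    intro a _ b _ hab
    exact Nat.eq_of_mul_eq_mul_left hd hab
  refine h1.trans ?_
  have ht : 0 < 1 - s := by linarith
  have h2 := sum_rpow (1 - s) ht (by linarith) (N / d)
  have hd0 : (0:ℝ) < d := by exact_mod_cast hd
  have h3 : ∑ i ∈ Finset.Icc 1 (N / d), ((d * i : ℕ) : ℝ) ^ (-s) =
      (d:ℝ) ^ (-s) * ∑ i ∈ Finset.Icc 1 (N / d), (i : ℝ) ^ (1 - s - 1) := by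
    rw [Finset.mul_sum]
    apply Finset.sum_congr rfl
    intro i _
    push_cast
    rw [Real.mul_rpow (by positivity) (by positivity)]
    congr 2; ring
  rw [h3]
  have h4 : ((N / d : ℕ) : ℝ) ^ (1 - s) ≤ ((N:ℝ) / d) ^ (1 - s) :=
    Real.rpow_le_rpow (by positivity) Nat.cast_div_le ht.le
  have h5 : ∑ i ∈ Finset.Icc 1 (N / d), (i : ℝ) ^ (1 - s - 1) ≤ 1 / (1 - s) * ((N:ℝ) / d) ^ (1 - s) := by
    rw [one_div, ← div_eq_inv_mul, le_div_iff₀ ht]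
    linarith
  calc _ ≤ (d:ℝ) ^ (-s) * (1 / (1 - s) * ((N:ℝ) / d) ^ (1 - s)) := by gcongr
    _ = _ := by
      rw [Real.div_rpow (by positivity) hd0.le, Real.rpow_sub hd0, Real.rpow_one, Real.rpow_neg hd0.le]
      field_simp

lemma TT_Fu (s : ℝ) (hs : 0 ≤ s) (hs1 : s < 1) (N : ℕ) (hN : 1 ≤ N) (j : ℕ) :
    ∀ u : ℕ, 1 ≤ u →
    TT N j (Fu s u) ≤ (2 / (1 - s)) ^ j * (u.divisors.card : ℝ) ^ j * ((N:ℝ) ^ (1 - s)) ^ j / u := by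
  have ht : 0 < 1 - s := by linarith
  induction j with
  | zero =>
    intro u hu
    simp only [TT, pow_zero, mul_one]
    unfold Fu
    split_ifs with h
    · have : u = 1 := by
        have := h.2
        rw [Int.natCast_dvd] at this
        simpa using this
      subst this; simp
    · positivity
  | succ j ih =>
    intro u hu
    simp only [TT]
    have hN1 : ∀ h : ℤ, TT N j (fun m => Fu s u (h * m)) ≤
        ∑ d ∈ u.divisors, Fu s d h * TT N j (Fu s (u / d)) := by
      intro h
      calc _ ≤ TT N j (fun m => ∑ d ∈ u.divisors, Fu s d h * Fu s (u / d) m) :=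
            TT_mono _ _ _ _ (fun m => Fu_mul s u hu h m)
        _ = _ := by
          rw [TT_sum]
          exact Finset.sum_congr rfl fun d _ => TT_smul _ _ _ _
    refine (Finset.sum_le_sum fun h _ => hN1 h).trans ?_
    rw [Finset.sum_comm]
    have hterm : ∀ d ∈ u.divisors, ∑ h ∈ Finset.Ioo (-(N:ℤ)) (N:ℤ), Fu s d h * TT N j (Fu s (u / d)) ≤
        (2 / (1 - s)) ^ (j+1) * (u.divisors.card : ℝ) ^ j * ((N:ℝ) ^ (1 - s)) ^ (j+1) / u := by
      intro d hd
      rw [Nat.mem_divisors] at hd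
      have hd1 : 1 ≤ d := Nat.pos_of_dvd_of_pos hd.1 (by omega)
      have hud : 1 ≤ u / d := Nat.div_pos (Nat.le_of_dvd (by omega) hd.1) hd1
      rw [← Finset.sum_mul]
      have h1 : ∑ h ∈ Finset.Ioo (-(N:ℤ)) (N:ℤ), Fu s d h ≤ 2 * (1 / (1 - s) * (N:ℝ) ^ (1 - s) / d) := by
        refine (sum_Ioo_le (Fu s d) N hN (Fu_nonneg s d) (Fu_neg s d)).trans ?_
        have : Fu s d 0 = 0 := by simp [Fu]
        rw [this, zero_add]
        exact mul_le_mul_of_nonneg_left (sum_Fu s hs hs1 d hd1 N) (by norm_num)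
      have h2 := ih (u / d) hud
      have h3 : ((u / d).divisors.card : ℝ) ≤ (u.divisors.card : ℝ) := by
        exact_mod_cast Finset.card_le_card (Nat.divisors_subset_of_dvd (by omega) (Nat.div_dvd_of_dvd hd.1))
      have hdd : (0:ℝ) < d := by exact_mod_cast hd1
      have hu0 : (0:ℝ) < u := by exact_mod_cast hu
      have h4 : ((u / d : ℕ) : ℝ) = (u:ℝ) / d := Nat.cast_div hd.1 hdd.ne'
      calc _ ≤ (2 * (1 / (1 - s) * (N:ℝ) ^ (1 - s) / d)) *
          ((2 / (1 - s)) ^ j * ((u / d).divisors.card : ℝ) ^ j * ((N:ℝ) ^ (1 - s)) ^ j / (u / d : ℕ)) :=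
            mul_le_mul h1 h2 (TT_nonneg _ _ _ (Fu_nonneg _ _)) (by positivity)
        _ ≤ (2 * (1 / (1 - s) * (N:ℝ) ^ (1 - s) / d)) *
          ((2 / (1 - s)) ^ j * (u.divisors.card : ℝ) ^ j * ((N:ℝ) ^ (1 - s)) ^ j / (u / d : ℕ)) := by
            gcongr
        _ = _ := by
          rw [h4, pow_succ, pow_succ ((N:ℝ) ^ (1 - s))]
          field_simp
    refine (Finset.sum_le_sum hterm).trans ?_
    rw [Finset.sum_const, nsmul_eq_mul]
    apply le_of_eq
    ring

lemma divisor_bound (ε : ℝ) (hε : 0 < ε) : ∃ C : ℝ, 1 ≤ C ∧ ∀ n : ℕ, 1 ≤ n →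
    (n.divisors.card : ℝ) ≤ C * (n:ℝ) ^ ε := by
  set C1 : ℝ := 1 + 1 / (ε * Real.log 2) with hC1
  have hl2 : 0 < Real.log 2 := Real.log_pos (by norm_num)
  have hC1' : 1 ≤ C1 := by rw [hC1]; have : 0 < 1 / (ε * Real.log 2) := by positivity
                           linarith
  obtain ⟨P0, hP0⟩ := exists_nat_ge ((2:ℝ) ^ (1 / ε))
  refine ⟨C1 ^ P0, one_le_pow₀ hC1', fun n hn => ?_⟩
  have hn0 : n ≠ 0 := by omega
  have hbase : ∀ p ∈ n.primeFactors, ((n.factorization p + 1 : ℕ) : ℝ) ≤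
      (if p < P0 then C1 else 1) * ((p:ℝ) ^ ε) ^ (n.factorization p) := by
    intro p hp
    have hpp := Nat.prime_of_mem_primeFactors hp
    set a := n.factorization p
    have hp2 : (2:ℝ) ≤ p := by exact_mod_cast hpp.two_le
    split_ifs with h
    · have h1 : (2:ℝ) ^ ε ≤ (p:ℝ) ^ ε := Real.rpow_le_rpow (by norm_num) hp2 hε.le
      have h2 : 1 + a * (ε * Real.log 2) ≤ ((2:ℝ) ^ ε) ^ a := by
        rw [← Real.rpow_natCast, ← Real.rpow_mul (by norm_num), Real.rpow_def_of_pos (by norm_num)]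
        have := Real.add_one_le_exp (Real.log 2 * (ε * a))
        linarith
      have h3 : ((2:ℝ) ^ ε) ^ a ≤ ((p:ℝ) ^ ε) ^ a := pow_le_pow_left₀ (by positivity) h1 _
      calc ((a + 1 : ℕ) : ℝ) ≤ C1 * (1 + a * (ε * Real.log 2)) := by
            rw [hC1]; push_cast
            have : (1 + 1 / (ε * Real.log 2)) * (1 + a * (ε * Real.log 2)) =
              1 + a + a * (ε * Real.log 2) + 1 / (ε * Real.log 2) := by field_simp; ring
            rw [this]
            have h5 : 0 ≤ a * (ε * Real.log 2) := by positivity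
            have h6 : 0 ≤ 1 / (ε * Real.log 2) := by positivity
            linarith
        _ ≤ C1 * ((p:ℝ) ^ ε) ^ a := by gcongr; linarith
    · push Not at h
      have h1 : (2:ℝ) ≤ (p:ℝ) ^ ε := by
        have h2 : (2:ℝ) ^ (1 / ε) ≤ p := hP0.trans (by exact_mod_cast h)
        calc (2:ℝ) = ((2:ℝ) ^ (1 / ε)) ^ ε := by
              rw [← Real.rpow_mul (by norm_num)]; field_simp; simp
          _ ≤ _ := Real.rpow_le_rpow (by positivity) h2 hε.le
      rw [one_mul]
      calc ((a + 1 : ℕ) : ℝ) ≤ (2:ℝ) ^ a := by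
            have : a + 1 ≤ 2 ^ a := Nat.lt_two_pow_self
            exact_mod_cast this
        _ ≤ _ := pow_le_pow_left₀ (by norm_num) h1 _
  rw [Nat.card_divisors hn0]
  push_cast
  calc ∏ p ∈ n.primeFactors, ((n.factorization p : ℝ) + 1)
      ≤ ∏ p ∈ n.primeFactors, ((if p < P0 then C1 else 1) * ((p:ℝ) ^ ε) ^ (n.factorization p)) := by
        apply Finset.prod_le_prod
        · intro i _; positivity
        · intro i hi; have := hbase i hi; push_cast at this; exact this
    _ = (∏ p ∈ n.primeFactors, (if p < P0 then C1 else 1)) *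
        ∏ p ∈ n.primeFactors, ((p:ℝ) ^ ε) ^ (n.factorization p) := Finset.prod_mul_distrib
    _ ≤ C1 ^ P0 * (n:ℝ) ^ ε := by
        apply mul_le_mul
        · rw [← Finset.prod_filter, Finset.prod_const]
          apply pow_le_pow_right₀ hC1'
          calc _ ≤ (Finset.range P0).card := Finset.card_le_card (by
                intro x hx; simp at hx ⊢; exact hx.2)
            _ = P0 := by simp
        · apply le_of_eq
          conv_rhs => rw [← Nat.prod_factorization_pow_eq_self hn0]
          rw [Nat.prod_factorization_eq_prod_primeFactors]
          push_cast
          rw [← Real.finsetProd_rpow _ _ (fun i _ => by positivity)]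
          apply Finset.prod_congr rfl
          intro p _
          rw [← Real.rpow_natCast, ← Real.rpow_natCast, ← Real.rpow_mul (by positivity),
            ← Real.rpow_mul (by positivity), mul_comm]
        · exact Finset.prod_nonneg fun i _ => by positivity
        · positivity

lemma ndist_lip (x y : ℝ) (z : ℤ) : ndist y ≤ ndist x + |x - y - z| := by
  have h := ndist_le y (round x - z)
  refine h.trans ?_
  have : y - ((round x - z : ℤ) : ℝ) = (x - round x) - (x - y - z) := by push_cast; ring
  rw [this]
  exact abs_sub _ _

lemma ndist_neg (x : ℝ) : ndist (-x) = ndist x := by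
  have key : ∀ x, ndist (-x) ≤ ndist x := by
    intro x
    have := ndist_le (-x) (-round x)
    refine this.trans (le_of_eq ?_)
    unfold ndist
    rw [← abs_neg]; congr 1; push_cast; ring
  apply le_antisymm (key x)
  have := key (-x)
  rwa [neg_neg] at this

lemma GG_neg (N x : ℝ) : GG N (-x) = GG N x := by unfold GG; rw [ndist_neg]

lemma ndist_frac (r : ℕ) (hr : 1 ≤ r) (t : ℕ) (ht : t < r) (y : ℝ) (hy1 : y ≤ t) (hy2 : y ≤ r - t) :
    y / r ≤ ndist ((t:ℝ) / r) := by
  have hr0 : (0:ℝ) < r := by exact_mod_cast hr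
  unfold ndist
  set z := round ((t:ℝ) / r)
  have : (t:ℝ) / r - z = (t - z * r) / r := by field_simp
  rw [this, abs_div, abs_of_pos hr0]
  apply div_le_div_of_nonneg_right _ hr0.le
  rcases le_or_gt z 0 with h | h
  · have : (z:ℝ) ≤ 0 := by exact_mod_cast h
    refine le_trans ?_ (le_abs_self _)
    nlinarith
  · have : (1:ℝ) ≤ z := by exact_mod_cast h
    refine le_trans ?_ (neg_le_abs _)
    nlinarith

lemma harm_bd (r : ℕ) (hr : 1 ≤ r) :
    ∑ t ∈ Finset.range r, (1 / (t:ℝ) + 1 / ((r:ℝ) - t)) ≤ 2 * (1 + Real.log r) := by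
  have hh : ∑ i ∈ Finset.range r, 1 / ((i:ℝ) + 1) ≤ 1 + Real.log r := by
    have := harmonic_le_one_add_log r
    refine le_trans (le_of_eq ?_) this
    unfold harmonic
    push_cast
    simp
  rw [Finset.sum_add_distrib]
  have h1 : ∑ t ∈ Finset.range r, 1 / (t:ℝ) ≤ ∑ i ∈ Finset.range r, 1 / ((i:ℝ) + 1) := by
    obtain ⟨n, rfl⟩ : ∃ n, r = n + 1 := ⟨r - 1, by omega⟩
    rw [Finset.sum_range_succ', Finset.sum_range_succ]
    push_cast
    simp
    positivity
  have h2 : ∑ t ∈ Finset.range r, 1 / ((r:ℝ) - t) = ∑ i ∈ Finset.range r, 1 / ((i:ℝ) + 1) := by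
    rw [← Finset.sum_range_reflect]
    apply Finset.sum_congr rfl
    intro t ht
    rw [Finset.mem_range] at ht
    have : ((r - 1 - t : ℕ) : ℝ) = (r:ℝ) - 1 - t := by
      rw [Nat.cast_sub (by omega), Nat.cast_sub (by omega)]; simp
    rw [this]; congr 1; ring
  linarith

lemma block (N : ℕ) (β : ℝ) (b : ℤ) (r : ℕ) (hr : 1 ≤ r) (hbr : IsCoprime b (r:ℤ))
    (hβ : |β - b / r| ≤ 1 / (r:ℝ) ^ 2) (y : ℝ) :
    ∑ i ∈ Finset.range r, GG N (y + i * β) ≤ 10 * N + 12 * r * (1 + Real.log r) := by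
  have hr0 : (0:ℝ) < r := by exact_mod_cast hr
  have hrz : (0:ℤ) < r := by exact_mod_cast hr
  set c0 : ℤ := ⌊r * y⌋ with hc0
  set t : ℕ → ℕ := fun i => ((c0 + i * b) % r).toNat with ht
  have htc : ∀ i, ((t i : ℕ) : ℤ) = (c0 + i * b) % r := by
    intro i; simp only [ht]; rw [Int.toNat_of_nonneg (Int.emod_nonneg _ hrz.ne')]
  have htlt : ∀ i, t i < r := by
    intro i
    have := Int.emod_lt_of_pos (c0 + i * b) hrz
    rw [← htc] at this; exact_mod_cast this
  set w : ℕ → ℝ := fun t => (if t ∈ ({0, 1, 2, r-1, r-2} : Finset ℕ) then 2 * (N:ℝ) else 0) +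
    6 * r * (1 / (t:ℝ) + 1 / ((r:ℝ) - t)) with hw
  have hwt : ∀ s, s < r → 0 ≤ 6 * r * (1 / (s:ℝ) + 1 / ((r:ℝ) - s)) := by
    intro s hs
    have : (s:ℝ) < r := by exact_mod_cast hs
    have : 0 < (r:ℝ) - s := by linarith
    positivity
  have hpt : ∀ i ∈ Finset.range r, GG N (y + i * β) ≤ w (t i) := by
    intro i hi
    rw [Finset.mem_range] at hi
    have hh := hwt (t i) (htlt i)
    simp only [hw]
    split_ifs with hmem
    · have := GG_le (Nat.cast_nonneg N) (y + i * β)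
      linarith
    · simp only [Finset.mem_insert, Finset.mem_singleton, not_or] at hmem
      have hlt := htlt i
      set s := t i with hs
      have hs3 : (3:ℝ) ≤ s := by
        have : 3 ≤ s := by omega
        exact_mod_cast this
      have hrs3 : (3:ℝ) ≤ (r:ℝ) - s := by
        have : s + 3 ≤ r := by omega
        have : (s:ℝ) + 3 ≤ r := by exact_mod_cast this
        linarith
      set μ := min (s:ℝ) ((r:ℝ) - s) with hμ
      have hμ3 : 3 ≤ μ := le_min hs3 hrs3
      have h1 : μ / r ≤ ndist ((s:ℝ) / r) :=
        ndist_frac r hr s hlt μ (min_le_left _ _) (min_le_right _ _)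
      -- distance
      have h2 : ndist ((s:ℝ) / r) ≤ ndist (y + i * β) + 2 / r := by
        refine (ndist_lip (y + i * β) ((s:ℝ) / r) ((c0 + i * b) / r)).trans ?_
        gcongr
        have h3 : (c0:ℝ) + i * b = s + r * (((c0 + i * b) / r : ℤ) : ℝ) := by
          have h4 := Int.emod_add_mul_ediv (c0 + i * b) r
          rw [← htc i] at h4
          have h5 : (((t i : ℤ) + r * ((c0 + i * b) / r) : ℤ) : ℝ) = ((c0 + i * b : ℤ) : ℝ) := by
            rw [h4]
          push_cast at h5
          linarith
        have h6 : y + i * β - (s:ℝ) / r - (((c0 + i * b) / r : ℤ) : ℝ) =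
            (r * y - c0) / r + i * (β - b / r) := by
          field_simp
          linarith
        rw [h6]
        have h7 : |(r * y - c0) / r| ≤ 1 / r := by
          rw [abs_div, abs_of_pos hr0]
          apply div_le_div_of_nonneg_right _ hr0.le
          rw [abs_of_nonneg (by linarith [Int.floor_le (r * y)])]
          linarith [Int.lt_floor_add_one (r * y)]
        have h8 : |(i:ℝ) * (β - b / r)| ≤ 1 / r := by
          rw [abs_mul, Nat.abs_cast]
          have hi' : (i:ℝ) ≤ r := by exact_mod_cast hi.le
          calc _ ≤ (r:ℝ) * (1 / (r:ℝ) ^ 2) := by gcongr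
            _ = 1 / r := by field_simp
        refine (abs_add_le _ _).trans ((add_le_add h7 h8).trans (le_of_eq ?_))
        ring
      have h9 : μ / (3 * r) ≤ ndist (y + i * β) := by
        have : μ / (3 * r) + 2 / r ≤ μ / r := by
          rw [div_add_div _ _ (by positivity) (by positivity), div_le_div_iff₀ (by positivity) (by positivity)]
          nlinarith [mul_pos hr0 (mul_pos hr0 hr0), mul_le_mul_of_nonneg_right hμ3 (mul_pos hr0 hr0).le]
        linarith
      have h10 := GG_le_inv (Nat.cast_nonneg N) (y + i * β) (μ / (3 * r)) (by positivity) h9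
      have h11 : 2 / (μ / (3 * r)) = 6 * r * (1 / μ) := by field_simp; ring
      rw [h11] at h10
      have h12 : 1 / μ ≤ 1 / (s:ℝ) + 1 / ((r:ℝ) - s) := by
        have ha : 0 < 1 / (s:ℝ) := by positivity
        have hb : 0 < 1 / ((r:ℝ) - s) := by apply one_div_pos.mpr; linarith
        rcases min_choice (s:ℝ) ((r:ℝ) - s) with h | h
        · rw [hμ, h]; linarith
        · rw [hμ, h]; linarith
      rw [zero_add]
      exact h10.trans (mul_le_mul_of_nonneg_left h12 (by positivity))
  have hinj : Set.InjOn t (Finset.range r : Set ℕ) := by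
    intro i hi i' hi' hii
    simp only [Finset.coe_range, Set.mem_Iio] at hi hi'
    have h1 : (c0 + i * b) % r = (c0 + i' * b) % (r:ℤ) := by rw [← htc, ← htc, hii]
    have h2 : (r:ℤ) ∣ (i - i') * b := by
      have := Int.emod_emod_of_dvd (c0 + i * b) (dvd_refl (r:ℤ))
      have h3 := Int.emod_eq_emod_iff_emod_sub_eq_zero.mp h1
      have h4 := Int.dvd_of_emod_eq_zero h3
      have h5 : c0 + i * b - (c0 + i' * b) = ((i:ℤ) - i') * b := by ring
      rwa [h5] at h4
    have h3 : (r:ℤ) ∣ (i:ℤ) - i' := hbr.symm.dvd_of_dvd_mul_right h2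
    have h4 : |(i:ℤ) - i'| < r := by rw [abs_lt]; constructor <;> omega
    have := Int.eq_zero_of_abs_lt_dvd h3 h4
    omega
  calc ∑ i ∈ Finset.range r, GG N (y + i * β) ≤ ∑ i ∈ Finset.range r, w (t i) := Finset.sum_le_sum hpt
    _ = ∑ s ∈ (Finset.range r).image t, w s := by rw [Finset.sum_image hinj]
    _ ≤ ∑ s ∈ Finset.range r, w s := by
      apply Finset.sum_le_sum_of_subset_of_nonneg
      · intro s hs
        rw [Finset.mem_image] at hs
        obtain ⟨i, _, rfl⟩ := hs
        exact Finset.mem_range.mpr (htlt i)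
      · intro s hs _
        have := hwt s (Finset.mem_range.mp hs)
        simp only [hw]
        split_ifs
        · have : (0:ℝ) ≤ N := Nat.cast_nonneg N
          linarith
        · linarith
    _ ≤ 10 * N + 12 * r * (1 + Real.log r) := by
      simp only [hw]
      rw [Finset.sum_add_distrib, ← Finset.mul_sum, ← Finset.sum_filter, Finset.sum_const, nsmul_eq_mul]
      have h1 : (((Finset.range r).filter (fun s => s ∈ ({0, 1, 2, r-1, r-2} : Finset ℕ))).card : ℝ) ≤ 5 := by
        have : ((Finset.range r).filter (fun s => s ∈ ({0, 1, 2, r-1, r-2} : Finset ℕ))).card ≤ 5 := by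
          refine (Finset.card_le_card (t := ({0, 1, 2, r-1, r-2} : Finset ℕ)) ?_).trans Finset.card_le_five
          intro x hx; exact (Finset.mem_filter.mp hx).2
        exact_mod_cast this
      have h2 := harm_bd r hr
      have hN0 : (0:ℝ) ≤ N := Nat.cast_nonneg N
      nlinarith [mul_le_mul_of_nonneg_right h1 hN0, mul_le_mul_of_nonneg_left h2 hr0.le]

lemma spacing (N : ℕ) (β : ℝ) (b : ℤ) (r : ℕ) (hr : 1 ≤ r) (hbr : IsCoprime b (r:ℤ))
    (hβ : |β - b / r| ≤ 1 / (r:ℝ) ^ 2) (M : ℕ) :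
    ∑ m ∈ Finset.Icc 1 M, GG N (m * β) ≤
      ((M:ℝ) / r + 1) * (10 * N + 12 * r * (1 + Real.log r)) := by
  set B := 10 * (N:ℝ) + 12 * r * (1 + Real.log r) with hB
  have hr1 : (1:ℝ) ≤ r := by exact_mod_cast hr
  have hB0 : 0 ≤ B := by have := Real.log_nonneg hr1; positivity
  have hblk : ∀ n : ℕ, ∑ i ∈ Finset.range (n * r), GG N ((i + 1 : ℕ) * β) ≤ n * B := by
    intro n
    induction n with
    | zero => simp
    | succ n ih =>
      rw [Nat.succ_mul, Finset.sum_range_add]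
      have := block N β b r hr hbr hβ ((n * r + 1 : ℕ) * β)
      have h2 : ∑ x ∈ Finset.range r, GG N ((n * r + x + 1 : ℕ) * β) =
          ∑ i ∈ Finset.range r, GG N (((n * r + 1 : ℕ) : ℝ) * β + i * β) := by
        apply Finset.sum_congr rfl
        intro i _
        congr 1; push_cast; ring
      rw [h2]
      push_cast at *
      linarith
  have h1 : ∑ m ∈ Finset.Icc 1 M, GG N (m * β) = ∑ i ∈ Finset.range M, GG N ((i + 1 : ℕ) * β) := by
    rw [Finset.range_eq_Ico, Finset.sum_Ico_add' (fun i : ℕ => GG N ((i:ℕ) * β)) 0 M 1]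
    rfl
  rw [h1]
  have h2 : M ≤ (M / r + 1) * r := by
    have := Nat.div_add_mod M r
    have := Nat.mod_lt M hr
    nlinarith
  calc _ ≤ ∑ i ∈ Finset.range ((M / r + 1) * r), GG N ((i + 1 : ℕ) * β) := by
        apply Finset.sum_le_sum_of_subset_of_nonneg
        · intro x hx; simp at hx ⊢; omega
        · intro i _ _; exact GG_nonneg (Nat.cast_nonneg N) _
    _ ≤ ((M / r + 1 : ℕ) : ℝ) * B := hblk _
    _ ≤ _ := by
      gcongr
      push_cast
      gcongr
      exact Nat.cast_div_le

lemma weylL (N : ℕ) (hN : 1 ≤ N) (j K : ℕ) (hK : ∀ m, 1 ≤ m → m ≤ N ^ j → m.divisors.card ≤ K)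
    (β : ℝ) (b : ℤ) (r : ℕ) (hr : 1 ≤ r) (hbr : IsCoprime b (r:ℤ))
    (hβ : |β - b / r| ≤ 1 / (r:ℝ) ^ 2) (c : ℕ) (hc : 1 ≤ c) :
    TT N j (fun m => GG N (m * (c * β))) ≤ j * (2 * N : ℝ) ^ j +
      (2 * K : ℝ) ^ j * (((c:ℝ) * (N:ℝ) ^ j / r + 1) * (10 * N + 12 * r * (1 + Real.log r))) := by
  have h1 := TT_div N hN K j hK j le_rfl (fun m => GG N (m * (c * β)))
    (fun m => GG_nonneg (Nat.cast_nonneg N) _) (fun m => by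
      push_cast; rw [neg_mul, GG_neg])
  refine h1.trans ?_
  apply add_le_add
  · refine le_trans ?_ (TT_indZ N j hN)
    exact mul_le_mul_of_nonneg_right (GG_le (Nat.cast_nonneg N) _) (TT_nonneg _ _ _ indZ_nonneg)
  · apply mul_le_mul_of_nonneg_left _ (by positivity)
    have h2 := spacing N β b r hr hbr hβ (c * N ^ j)
    push_cast at h2
    refine le_trans ?_ h2
    have h3 : ∑ m ∈ Finset.Icc 1 (N ^ j), GG N (((m:ℤ):ℝ) * (c * β)) =
        ∑ m ∈ (Finset.Icc 1 (N ^ j)).image (fun m => c * m), GG N (m * β) := by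
      rw [Finset.sum_image]
      · apply Finset.sum_congr rfl
        intro m _
        congr 1; push_cast; ring
      · intro x _ y _ hxy
        exact Nat.eq_of_mul_eq_mul_left hc hxy
    rw [h3]
    apply Finset.sum_le_sum_of_subset_of_nonneg
    · intro x hx
      simp only [Finset.mem_image, Finset.mem_Icc] at hx ⊢
      obtain ⟨m, hm, rfl⟩ := hx
      exact ⟨Nat.mul_pos hc hm.1, Nat.mul_le_mul_left _ hm.2⟩
    · intro i _ _; exact GG_nonneg (Nat.cast_nonneg N) _

lemma TT_mono' (N : ℕ) (hN : 1 ≤ N) (j : ℕ) : ∀ (F G : ℤ → ℝ),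
    (∀ m : ℤ, |m| ≤ (N:ℤ) ^ j → F m ≤ G m) → TT N j F ≤ TT N j G := by
  induction j with
  | zero => intro F G h; exact h 1 (by simp)
  | succ j ih =>
    intro F G h
    simp only [TT]
    refine Finset.sum_le_sum fun i hi => ih _ _ fun m hm => h _ ?_
    rw [abs_mul, pow_succ']
    simp at hi
    apply mul_le_mul _ hm (abs_nonneg _) (by positivity)
    rw [abs_le]; omega

lemma ndist_add_int (z : ℤ) (x : ℝ) (hx : |x| ≤ 1 / 2) : |x| ≤ ndist (z + x) := by
  unfold ndist
  set w : ℤ := round ((z:ℝ) + x) - z with hw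
  have h1 : (z:ℝ) + x - round ((z:ℝ) + x) = x - w := by rw [hw]; push_cast; ring
  rw [h1]
  by_cases h : w = 0
  · rw [h]; simp
  · have h2 : (1:ℝ) ≤ |(w:ℝ)| := by exact_mod_cast Int.one_le_abs h
    have h3 : |(w:ℝ)| ≤ |x| + |x - w| := by
      have : (w:ℝ) = x - (x - w) := by ring
      conv_lhs => rw [this]
      exact abs_sub _ _
    linarith

lemma weylS (N : ℕ) (hN : 1 ≤ N) (j : ℕ) (β : ℝ) (b : ℤ) (r : ℕ) (hr : 1 ≤ r)
    (hbr : IsCoprime b (r:ℤ)) (c : ℕ) (hc : 1 ≤ c) (s : ℝ) (hs : 0 ≤ s) (hs1 : s < 1)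
    (hsη : s = 0 ∨ 0 < |β - b / r|)
    (hη : 2 * (N:ℝ) ^ j * c * |β - b / r| ≤ 1 / r) :
    TT N j (fun m => GG N (m * (c * β))) ≤ j * (2 * N : ℝ) ^ j + 4 * r * (2 * N : ℝ) ^ j +
      2 * N * (N * c * |β - b / r|) ^ (-s) * ((2 / (1 - s)) ^ j *
        ((r / Nat.gcd r c).divisors.card : ℝ) ^ j * ((N:ℝ) ^ (1 - s)) ^ j / (r / Nat.gcd r c : ℕ)) := by
  set η := |β - b / r| with hηd
  set r1 := r / Nat.gcd r c with hr1
  have hr0 : (0:ℝ) < r := by exact_mod_cast hr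
  have hN0 : (0:ℝ) < N := by exact_mod_cast hN
  have hc0 : (0:ℝ) < c := by exact_mod_cast hc
  have hη0 : 0 ≤ η := abs_nonneg _
  have hgpos : 0 < Nat.gcd r c := Nat.gcd_pos_of_pos_left _ hr
  have hr1pos : 1 ≤ r1 := Nat.div_pos (Nat.le_of_dvd hr (Nat.gcd_dvd_left _ _)) hgpos
  have hpt : ∀ m : ℤ, |m| ≤ (N:ℤ) ^ j → GG N (m * (c * β)) ≤
      2 * N * indZ m + 4 * r * (fun _ => 1 : ℤ → ℝ) m + (2 * N * (N * c * η) ^ (-s)) * Fu s r1 m := by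
    intro m hm
    have hmr : |(m:ℝ)| ≤ (N:ℝ) ^ j := by
      have : ((|m| : ℤ) : ℝ) ≤ (((N:ℤ) ^ j : ℤ) : ℝ) := by exact_mod_cast hm
      push_cast at this; exact this
    have hA := indZ_nonneg m
    have hB := Fu_nonneg s r1 m
    have hB' : 0 ≤ (2 * N * (N * c * η) ^ (-s)) * Fu s r1 m := by positivity
    have herr : |(m:ℝ) * c * (β - b / r)| ≤ 1 / (2 * r) := by
      rw [abs_mul, abs_mul, Nat.abs_cast, ← hηd]
      calc |(m:ℝ)| * c * η ≤ (N:ℝ) ^ j * c * η := by gcongr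
        _ ≤ 1 / (2 * r) := by
          rw [show 1 / (2 * (r:ℝ)) = (1 / r) / 2 by field_simp]
          linarith
    have hid : (m:ℝ) * (c * β) = ((m * c * b : ℤ) : ℝ) / r + (m:ℝ) * c * (β - b / r) := by
      push_cast; ring
    by_cases h0 : m = 0
    · have : indZ m = 1 := by simp [indZ, h0]
      rw [this]
      have := GG_le hN0.le ((m:ℝ) * (c * β))
      simp only []
      linarith
    by_cases hd : (r1:ℤ) ∣ m
    · -- multiple
      have hF : Fu s r1 m = (m.natAbs : ℝ) ^ (-s) := by unfold Fu; rw [if_pos ⟨h0, hd⟩]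
      have hdiv : (r:ℤ) ∣ m * c * b := by
        apply Dvd.dvd.mul_right
        have h1 : (r:ℤ) = r1 * (Nat.gcd r c : ℕ) := by
          have := Nat.div_mul_cancel (Nat.gcd_dvd_left r c)
          rw [hr1]; exact_mod_cast this.symm
        rw [h1]
        exact mul_dvd_mul hd (by exact_mod_cast Nat.gcd_dvd_right r c)
      obtain ⟨z, hz⟩ := hdiv
      have hid2 : (m:ℝ) * (c * β) = (z:ℝ) + (m:ℝ) * c * (β - b / r) := by
        rw [hid, hz]; push_cast; field_simp
      have hhalf : |(m:ℝ) * c * (β - b / r)| ≤ 1 / 2 := herr.trans (by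
        apply one_div_le_one_div_of_le (by norm_num)
        have : (1:ℝ) ≤ r := by exact_mod_cast hr
        linarith)
      have hnd := ndist_add_int z _ hhalf
      rw [← hid2] at hnd
      have hm0 : (0:ℝ) < |(m:ℝ)| := by
        rw [abs_pos]; exact_mod_cast h0
      have hmn : (m.natAbs : ℝ) = |(m:ℝ)| := by
        rw [Nat.cast_natAbs]; push_cast; rfl
      have hmain : GG N (m * (c * β)) ≤ (2 * N * (N * c * η) ^ (-s)) * Fu s r1 m := by
        rw [hF, hmn]
        rcases hsη with h | h
        · subst h
          simp
          exact GG_le hN0.le _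
        · rw [mul_assoc, ← Real.mul_rpow (by positivity) (by positivity)]
          set x := N * c * η * |(m:ℝ)| with hx
          have hxpos : 0 < x := by positivity
          have hxle : x ≤ N * ndist (m * (c * β)) := by
            calc x = N * |(m:ℝ) * c * (β - b / r)| := by
                  rw [abs_mul, abs_mul, Nat.abs_cast, ← hηd, hx]; ring
              _ ≤ _ := by gcongr
          unfold GG
          rw [Real.rpow_neg hxpos.le, ← div_eq_mul_inv]
          apply div_le_div_of_nonneg_left (by positivity) (by positivity)
          have : x ^ s ≤ 1 + x := by
            rcases le_total x 1 with h1 | h1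
            · have := Real.rpow_le_one hxpos.le h1 hs
              linarith
            · have := Real.rpow_le_rpow_of_exponent_le h1 hs1.le
              rw [Real.rpow_one] at this
              linarith
          linarith
      have : 0 ≤ 2 * (N:ℝ) * indZ m := by positivity
      simp only [mul_one]
      linarith
    · have hnd : (1:ℝ) / (2 * r) ≤ ndist (m * (c * β)) := by
        have hndvd : ¬ (r:ℤ) ∣ m * c * b := by
          intro h
          have h1 : (r:ℤ) ∣ m * c := hbr.symm.dvd_of_dvd_mul_right h
          apply hd
          rw [Int.natCast_dvd] at h1 ⊢
          rw [Int.natAbs_mul, Int.natAbs_natCast] at h1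
          have hcop : Nat.Coprime r1 (c / Nat.gcd r c) := Nat.coprime_div_gcd_div_gcd hgpos
          apply hcop.dvd_of_dvd_mul_right
          have h5 : c = (c / Nat.gcd r c) * Nat.gcd r c := (Nat.div_mul_cancel (Nat.gcd_dvd_right _ _)).symm
          have h6 : r = r1 * Nat.gcd r c := (Nat.div_mul_cancel (Nat.gcd_dvd_left _ _)).symm
          apply Nat.dvd_of_mul_dvd_mul_right hgpos
          rw [← h6, mul_assoc, ← h5]
          exact h1
        have h1 : (1:ℝ) / r ≤ |(m:ℝ) * (c * β) - (m:ℝ) * c * (β - b / r) - round ((m:ℝ) * (c * β))| := by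
          rw [hid]
          set w := round (((m * c * b : ℤ) : ℝ) / r + (m:ℝ) * c * (β - b / r))
          have h2 : ((m * c * b : ℤ) : ℝ) / r + (m:ℝ) * c * (β - b / r) - (m:ℝ) * c * (β - b / r) - w =
              ((m * c * b - w * r : ℤ) : ℝ) / r := by
            push_cast; field_simp; ring
          rw [h2, abs_div, abs_of_pos hr0]
          apply div_le_div_of_nonneg_right _ hr0.le
          have : m * c * b - w * r ≠ 0 := by
            intro h
            apply hndvd
            exact ⟨w, by linarith⟩
          exact_mod_cast Int.one_le_abs this
        have h3 : |(m:ℝ) * (c * β) - (m:ℝ) * c * (β - b / r) - round ((m:ℝ) * (c * β))| ≤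
            ndist (m * (c * β)) + |(m:ℝ) * c * (β - b / r)| := by
          unfold ndist
          have : (m:ℝ) * (c * β) - (m:ℝ) * c * (β - b / r) - round ((m:ℝ) * (c * β)) =
            ((m:ℝ) * (c * β) - round ((m:ℝ) * (c * β))) - (m:ℝ) * c * (β - b / r) := by ring
          rw [this]
          exact abs_sub _ _
        have h4 : 1 / (r:ℝ) = 1 / (2 * r) + 1 / (2 * r) := by field_simp; norm_num
        linarith
      have h1 := GG_le_inv hN0.le _ _ (by positivity) hnd
      have h2 : 2 / (1 / (2 * (r:ℝ))) = 4 * r := by field_simp; norm_num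
      rw [h2] at h1
      have : 0 ≤ 2 * (N:ℝ) * indZ m := by positivity
      simp only [mul_one]
      linarith
  refine (TT_mono' N hN j _ _ hpt).trans ?_
  rw [TT_add N j (fun m => 2 * N * indZ m + 4 * r * (fun _ => 1 : ℤ → ℝ) m),
    TT_add N j (fun m => 2 * N * indZ m), TT_smul, TT_smul, TT_smul]
  apply add_le_add (add_le_add (TT_indZ N j hN) _) _
  · exact mul_le_mul_of_nonneg_left (TT_one_le N j) (by positivity)
  · exact mul_le_mul_of_nonneg_left (TT_Fu s hs hs1 N hN j r1 hr1pos) (by positivity)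

lemma gamma_mem (g : Polynomial ℤ) (hg : Polynomial.derivative g ≠ 0) (p : ℕ) (hp : p.Prime) :
    0 < gammaExp g p ∧ (∀ n : ℤ, (p:ℤ) ^ (gammaExp g p - 1) ∣ (Polynomial.derivative g).eval n) ∧
      ∃ n : ℤ, ¬ (p:ℤ) ^ gammaExp g p ∣ (Polynomial.derivative g).eval n := by
  have hne : {c : ℕ | 0 < c ∧ ¬ ∀ n : ℤ, ((p : ℤ) ^ c) ∣ (Polynomial.derivative g).eval n}.Nonempty := by
    have h1 : ∃ n : ℤ, (Polynomial.derivative g).eval n ≠ 0 := by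
      by_contra h
      push Not at h
      apply hg
      apply Polynomial.funext
      intro n; simp [h n]
    obtain ⟨n, hn⟩ := h1
    refine ⟨((Polynomial.derivative g).eval n).natAbs + 1, by omega, fun h => ?_⟩
    have h2 := h n
    have h3 := Int.natAbs_dvd_natAbs.mpr h2
    have h4 := Nat.le_of_dvd (Int.natAbs_pos.mpr hn) h3
    rw [Int.natAbs_pow, Int.natAbs_natCast] at h4
    have h5 := Nat.lt_pow_self hp.one_lt (n := ((Polynomial.derivative g).eval n).natAbs + 1)
    omega
  have hmem := Nat.sInf_mem hne
  change 0 < gammaExp g p ∧ ¬ ∀ n : ℤ, ((p : ℤ) ^ gammaExp g p) ∣ _ at hmem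
  refine ⟨hmem.1, ?_, by push Not at hmem; exact hmem.2⟩
  rcases Nat.eq_zero_or_pos (gammaExp g p - 1) with h | h
  · intro n; rw [h]; simp
  · by_contra hc
    have := Nat.sInf_le (s := {c : ℕ | 0 < c ∧ ¬ ∀ n : ℤ, ((p : ℤ) ^ c) ∣ (Polynomial.derivative g).eval n}) ⟨h, hc⟩
    change gammaExp g p ≤ _ at this
    omega

lemma fwd_dvd (d : ℤ) (F : ℤ → ℤ) (hF : ∀ n, d ∣ F n) (i : ℕ) : ∀ n, d ∣ (fwdDiff 1)^[i] F n := by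
  induction i with
  | zero => simpa using hF
  | succ i ih =>
    intro n
    rw [Function.iterate_succ_apply', fwdDiff]
    exact dvd_sub (ih _) (ih _)

lemma small_period (k : ℕ) (f : Polynomial ℤ) (hf : f.natDegree ≤ k - 1) (hk : 0 < k) (p : ℕ) (hp : p.Prime)
    (hpk : p ≤ k) (c : ℕ) (hc : 0 < c) (hdv : ∀ n : ℤ, (p:ℤ) ^ (c - 1) ∣ f.eval n) (n : ℤ) :
    (p:ℤ) ^ c ∣ f.eval (n + ((k.factorial ^ 2 : ℕ) : ℤ)) ↔ (p:ℤ) ^ c ∣ f.eval n := by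
  have hmain : (p:ℤ) ^ c ∣ f.eval (n + ((k.factorial ^ 2 : ℕ) : ℤ)) - f.eval n := by
    have h1 := shift_eq_sum_fwdDiff_iter (1:ℤ) (fun x => f.eval x) (k.factorial ^ 2) n
    simp only [nsmul_eq_mul, mul_one] at h1
    rw [h1, Finset.sum_range_succ']
    simp only [Nat.choose_zero_right, Nat.cast_one, one_mul, Function.iterate_zero, id]
    rw [add_sub_cancel_right]
    apply Finset.dvd_sum
    intro i hi
    rcases Nat.lt_or_ge (i + 1) k with hik | hik
    · have h2 : (p:ℤ) ∣ (((k.factorial ^ 2).choose (i + 1) : ℕ) : ℤ) := by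
        rw [Int.natCast_dvd_natCast]
        have hpos : 0 < k.factorial := Nat.factorial_pos k
        have h3 := Nat.add_one_mul_choose_eq (k.factorial ^ 2 - 1) i
        have h4 : k.factorial ^ 2 - 1 + 1 = k.factorial ^ 2 := Nat.sub_add_cancel (Nat.one_le_pow _ _ hpos)
        rw [h4] at h3
        obtain ⟨w, hw⟩ := Nat.dvd_factorial (Nat.succ_pos i) hik.le
        have hpd : p ∣ k.factorial := (Nat.dvd_factorial hp.pos hpk)
        have h5 : (k.factorial ^ 2).choose (i+1) = k.factorial * w * (k.factorial ^ 2 - 1).choose i := by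
          apply Nat.eq_of_mul_eq_mul_right (Nat.succ_pos i)
          rw [Nat.succ_eq_add_one, ← h3]
          have : k.factorial ^ 2 = k.factorial * ((i+1) * w) := by rw [sq]; exact congrArg _ hw
          rw [this]
          have h6 : k.factorial * ((i+1) * w) - 1 = k.factorial ^ 2 - 1 := by rw [← this]
          ring
        rw [h5]
        exact Dvd.dvd.mul_right (Dvd.dvd.mul_right hpd _) _
      have h3 := fwd_dvd _ (fun x => f.eval x) hdv (i+1) n
      have h4 : (p:ℤ)^c = p * p ^ (c-1) := by
        rw [← pow_succ', Nat.sub_add_cancel hc]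
      rw [h4]
      exact mul_dvd_mul h2 h3
    · have h2 := Polynomial.fwdDiff_iter_eq_zero_of_degree_lt (P := f) (n := i + 1) (by omega)
      have h3 := congrFun h2 n
      have h4 : (fwdDiff 1)^[i + 1] (fun x => f.eval x) n = 0 := by
        simpa using h3
      rw [h4]; simp
  constructor
  · intro h
    have := dvd_sub h hmain
    simpa using this
  · intro h
    have := dvd_add h hmain
    simpa using this

lemma const_dvd (f : Polynomial ℤ) (p : ℕ) (hp : p.Prime) (hf : f.natDegree < p) (c : ℕ) :
    (∀ n : ℤ, (p:ℤ) ^ c ∣ f.eval n) → Polynomial.C ((p:ℤ) ^ c) ∣ f := by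
  haveI : Fact p.Prime := ⟨hp⟩
  have hp0 : (p:ℤ) ≠ 0 := by exact_mod_cast hp.ne_zero
  induction c with
  | zero => intro _; simp
  | succ c ih =>
    intro h
    obtain ⟨f1, hf1⟩ := ih (fun n => (pow_dvd_pow _ (Nat.le_succ c)).trans (h n))
    have h1 : ∀ n : ℤ, (p:ℤ) ∣ f1.eval n := by
      intro n
      have h2 := h n
      rw [hf1, Polynomial.eval_mul, Polynomial.eval_C, pow_succ] at h2
      exact Int.dvd_of_mul_dvd_mul_left (pow_ne_zero _ hp0) h2
    have hdeg : f1.natDegree < p := by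
      rw [hf1, Polynomial.natDegree_C_mul (pow_ne_zero _ hp0)] at hf
      exact hf
    have h3 : f1.map (Int.castRingHom (ZMod p)) = 0 := by
      apply Polynomial.eq_zero_of_natDegree_lt_card_of_eval_eq_zero _ (f := fun x : ZMod p => x) Function.injective_id
      · intro x
        obtain ⟨n, rfl⟩ := ZMod.intCast_surjective x
        have h4 : (f1.map (Int.castRingHom (ZMod p))).eval ((Int.castRingHom (ZMod p)) n) = Int.castRingHom (ZMod p) (f1.eval n) := by
          rw [Polynomial.eval_map, Polynomial.eval₂_hom]
        simp only [eq_intCast] at h4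
        rw [h4]
        exact (ZMod.intCast_zmod_eq_zero_iff_dvd _ _).mpr (h1 n)
      · rw [ZMod.card]
        exact lt_of_le_of_lt Polynomial.natDegree_map_le hdeg
    have h5 : Polynomial.C (p:ℤ) ∣ f1 := by
      rw [Polynomial.C_dvd_iff_dvd_coeff]
      intro i
      have := congrArg (fun P => Polynomial.coeff P i) h3
      simp only [Polynomial.coeff_map, Polynomial.coeff_zero, eq_intCast] at this
      exact (ZMod.intCast_zmod_eq_zero_iff_dvd _ _).mp this
    obtain ⟨f2, hf2⟩ := h5
    exact ⟨f2, by rw [hf1, hf2, ← mul_assoc, ← Polynomial.C_mul, pow_succ]⟩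

lemma large_res (k : ℕ) (hk : 0 < k) (f : Polynomial ℤ) (hf : f.natDegree ≤ k - 1) (p : ℕ) (hp : p.Prime)
    (hpk : k < p) (c : ℕ) (hc : 0 < c) (hdv : ∀ n : ℤ, (p:ℤ) ^ (c - 1) ∣ f.eval n)
    (hnd : ∃ n : ℤ, ¬ (p:ℤ) ^ c ∣ f.eval n) :
    ∃ R : Finset (ZMod p), R.card ≤ k - 1 ∧ ∀ n : ℤ, (p:ℤ) ^ c ∣ f.eval n ↔ (n : ZMod p) ∈ R := by
  haveI : Fact p.Prime := ⟨hp⟩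
  have hp0 : (p:ℤ) ≠ 0 := by exact_mod_cast hp.ne_zero
  obtain ⟨f1, hf1⟩ := const_dvd f p hp (by omega) (c - 1) hdv
  have hdeg : f1.natDegree ≤ k - 1 := by
    rw [hf1, Polynomial.natDegree_C_mul (pow_ne_zero _ hp0)] at hf
    exact hf
  have key : ∀ n : ℤ, (p:ℤ) ^ c ∣ f.eval n ↔ (f1.map (Int.castRingHom (ZMod p))).eval (n : ZMod p) = 0 := by
    intro n
    have h4 : (f1.map (Int.castRingHom (ZMod p))).eval ((Int.castRingHom (ZMod p)) n) = Int.castRingHom (ZMod p) (f1.eval n) := by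
      rw [Polynomial.eval_map, Polynomial.eval₂_hom]
    simp only [eq_intCast] at h4
    rw [h4, ZMod.intCast_zmod_eq_zero_iff_dvd, hf1, Polynomial.eval_mul, Polynomial.eval_C]
    have : (p:ℤ)^c = p ^ (c-1) * p := by
      rw [← pow_succ, Nat.sub_add_cancel hc]
    rw [this]
    exact Int.mul_dvd_mul_iff_left (pow_ne_zero _ hp0)
  have hne : f1.map (Int.castRingHom (ZMod p)) ≠ 0 := by
    intro h
    obtain ⟨n, hn⟩ := hnd
    apply hn
    rw [key, h]; simp
  classical
  refine ⟨(f1.map (Int.castRingHom (ZMod p))).roots.toFinset, ?_, ?_⟩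
  · exact (Multiset.toFinset_card_le _).trans ((Polynomial.card_roots' _).trans (Polynomial.natDegree_map_le.trans hdeg))
  · intro n
    rw [key, Multiset.mem_toFinset, Polynomial.mem_roots hne]
    rfl

noncomputable def PP (k : ℕ) (Y : ℝ) : Finset ℕ :=
  (Finset.range (⌊Y⌋₊ + 1)).filter (fun p => p.Prime ∧ k < p)

lemma mem_PP {k : ℕ} {Y : ℝ} (hY : 0 ≤ Y) {p : ℕ} : p ∈ PP k Y ↔ p.Prime ∧ k < p ∧ (p:ℝ) ≤ Y := by
  unfold PP
  rw [Finset.mem_filter, Finset.mem_range, Nat.lt_succ_iff, Nat.le_floor_iff hY]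
  tauto

lemma block_log (n : ℕ) (hn : 1 ≤ n) :
    ∑ p ∈ (Finset.Ioc n (2 * n)).filter Nat.Prime, Real.log p ≤ n * (2 * Real.log 2) := by
  have h1 : (∏ p ∈ (Finset.Ioc n (2 * n)).filter Nat.Prime, p) ∣ (2 * n).choose n := by
    apply Finset.prod_primes_dvd
    · intro p hp
      exact (Finset.mem_filter.mp hp).2.prime
    · intro p hp
      rw [Finset.mem_filter, Finset.mem_Ioc] at hp
      exact hp.2.dvd_choose hp.1.1 (by omega) hp.1.2
  have h2 := Nat.le_of_dvd (Nat.choose_pos (by omega)) h1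
  have h3 : (2 * n).choose n ≤ 2 ^ (2 * n) := Nat.choose_le_two_pow _ _
  have h4 : ((∏ p ∈ (Finset.Ioc n (2 * n)).filter Nat.Prime, p : ℕ) : ℝ) ≤ 2 ^ (2 * n) := by
    exact_mod_cast h2.trans h3
  have hpos : 0 < ((∏ p ∈ (Finset.Ioc n (2 * n)).filter Nat.Prime, p : ℕ) : ℝ) := by
    have : 0 < ∏ p ∈ (Finset.Ioc n (2 * n)).filter Nat.Prime, p := by
      apply Finset.prod_pos
      intro p hp
      exact (Finset.mem_filter.mp hp).2.pos
    exact_mod_cast this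
  have h5 := Real.log_le_log hpos h4
  rw [Real.log_pow] at h5
  push_cast at h5
  rw [Real.log_prod] at h5
  · linarith
  · intro p hp
    have := (Finset.mem_filter.mp hp).2.ne_zero
    exact_mod_cast this

lemma block_inv (j : ℕ) (hj : 1 ≤ j) :
    ∑ p ∈ (Finset.Ioc (2 ^ j) (2 * 2 ^ j)).filter Nat.Prime, (1:ℝ) / p ≤ 2 / j := by
  have h := block_log (2 ^ j) Nat.one_le_two_pow
  have hl2 : 0 < Real.log 2 := Real.log_pos (by norm_num)
  have hj0 : (0:ℝ) < j := by exact_mod_cast hj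
  have h1 : ∀ p ∈ (Finset.Ioc (2 ^ j) (2 * 2 ^ j)).filter Nat.Prime, (1:ℝ) / p ≤ (1 / (2 ^ j * (j * Real.log 2))) * Real.log p := by
    intro p hp
    rw [Finset.mem_filter, Finset.mem_Ioc] at hp
    have h2 : (2:ℝ) ^ j ≤ p := by exact_mod_cast hp.1.1.le
    have h3 : j * Real.log 2 ≤ Real.log p := by
      rw [← Real.log_pow]; exact Real.log_le_log (by positivity) h2
    have hjl : 0 < j * Real.log 2 := by positivity
    calc (1:ℝ) / p ≤ 1 / 2 ^ j := by gcongr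
      _ = (1 / (2 ^ j * (j * Real.log 2))) * (j * Real.log 2) := by field_simp
      _ ≤ _ := by gcongr
  calc _ ≤ _ := Finset.sum_le_sum h1
    _ = (1 / (2 ^ j * (j * Real.log 2))) * ∑ p ∈ (Finset.Ioc (2 ^ j) (2 * 2 ^ j)).filter Nat.Prime, Real.log p := by
      rw [Finset.mul_sum]
    _ ≤ (1 / (2 ^ j * (j * Real.log 2))) * (((2 ^ j : ℕ) : ℝ) * (2 * Real.log 2)) := by gcongr
    _ = 2 / j := by push_cast; field_simp

lemma block_loginv (j : ℕ) :
    ∑ p ∈ (Finset.Ioc (2 ^ j) (2 * 2 ^ j)).filter Nat.Prime, Real.log p / p ≤ 2 * Real.log 2 := by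
  have h := block_log (2 ^ j) Nat.one_le_two_pow
  have h1 : ∀ p ∈ (Finset.Ioc (2 ^ j) (2 * 2 ^ j)).filter Nat.Prime, Real.log p / p ≤ (1 / 2 ^ j) * Real.log p := by
    intro p hp
    rw [Finset.mem_filter, Finset.mem_Ioc] at hp
    have h2 : (2:ℝ) ^ j ≤ p := by exact_mod_cast hp.1.1.le
    have h3 : 0 ≤ Real.log p := Real.log_natCast_nonneg p
    rw [div_eq_mul_one_div, mul_comm]
    gcongr
  calc _ ≤ _ := Finset.sum_le_sum h1
    _ = (1 / 2 ^ j) * ∑ p ∈ (Finset.Ioc (2 ^ j) (2 * 2 ^ j)).filter Nat.Prime, Real.log p := by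
      rw [Finset.mul_sum]
    _ ≤ (1 / 2 ^ j) * (((2 ^ j : ℕ) : ℝ) * (2 * Real.log 2)) := by gcongr
    _ = 2 * Real.log 2 := by push_cast; field_simp

lemma dyadic_sum (F : ℕ → ℝ) (G : ℕ → ℝ)
    (hb : ∀ j, 1 ≤ j → ∑ p ∈ (Finset.Ioc (2 ^ j) (2 * 2 ^ j)).filter Nat.Prime, F p ≤ G j) (J : ℕ) :
    ∑ p ∈ (Finset.Icc 1 (2 ^ (J + 1))).filter Nat.Prime, F p ≤ F 2 + ∑ j ∈ Finset.Icc 1 J, G j := by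
  induction J with
  | zero =>
    have : (Finset.Icc 1 (2 ^ (0 + 1))).filter Nat.Prime = {2} := by decide
    rw [this]; simp
  | succ J ih =>
    have h1 : (Finset.Icc 1 (2 ^ (J + 1 + 1))).filter Nat.Prime =
        (Finset.Icc 1 (2 ^ (J + 1))).filter Nat.Prime ∪ (Finset.Ioc (2 ^ (J+1)) (2 * 2 ^ (J+1))).filter Nat.Prime := by
      rw [← Finset.filter_union]
      congr 1
      ext x
      simp only [Finset.mem_Icc, Finset.mem_union, Finset.mem_Ioc]
      have : 2 ^ (J + 1 + 1) = 2 * 2 ^ (J + 1) := by ring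
      have h3 : 1 ≤ 2 ^ (J + 1) := Nat.one_le_two_pow
      omega
    have h2 : Disjoint ((Finset.Icc 1 (2 ^ (J + 1))).filter Nat.Prime) ((Finset.Ioc (2 ^ (J+1)) (2 * 2 ^ (J+1))).filter Nat.Prime) := by
      rw [Finset.disjoint_left]
      intro x hx hy
      simp only [Finset.mem_filter, Finset.mem_Icc, Finset.mem_Ioc] at hx hy
      omega
    rw [h1, Finset.sum_union h2, Finset.sum_Icc_succ_top (by omega)]
    have := hb (J + 1) (by omega)
    linarith

lemma mertens_sums : ∃ C : ℝ, 0 < C ∧ ∀ (k : ℕ) (Y : ℝ), 2 ≤ Y →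
    ∑ p ∈ PP k Y, (1:ℝ) / p ≤ 2 * Real.log (Real.log Y) + C ∧
    ∑ p ∈ PP k Y, Real.log p / p ≤ C * Real.log Y := by
  have hl2 : 0 < Real.log 2 := Real.log_pos (by norm_num)
  refine ⟨3 + 2 * |Real.log (Real.log 2)|, by positivity, fun k Y hY => ?_⟩
  have hY0 : 0 ≤ Y := by linarith
  have hly : Real.log 2 ≤ Real.log Y := Real.log_le_log (by norm_num) hY
  set J := Nat.log 2 ⌊Y⌋₊ with hJ
  have hfl : 2 ≤ ⌊Y⌋₊ := Nat.le_floor (by exact_mod_cast hY)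
  have hJ1 : 1 ≤ J := by
    rw [hJ]; exact Nat.log_pos (by norm_num) hfl
  have hJlow : (2:ℝ) ^ J ≤ Y := by
    have h1 : 2 ^ J ≤ ⌊Y⌋₊ := Nat.pow_log_le_self 2 (by omega)
    have h2 := Nat.floor_le hY0
    have h3 : ((2 ^ J : ℕ) : ℝ) ≤ ⌊Y⌋₊ := by exact_mod_cast h1
    push_cast at h3
    linarith
  have hJlog : J * Real.log 2 ≤ Real.log Y := by
    rw [← Real.log_pow]; exact Real.log_le_log (by positivity) hJlow
  have hsub : PP k Y ⊆ (Finset.Icc 1 (2 ^ (J + 1))).filter Nat.Prime := by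
    intro p hp
    rw [PP, Finset.mem_filter, Finset.mem_range] at hp
    rw [Finset.mem_filter, Finset.mem_Icc]
    have : ⌊Y⌋₊ < 2 ^ (J + 1) := Nat.lt_pow_succ_log_self (by norm_num) _
    exact ⟨⟨hp.2.1.one_lt.le, by omega⟩, hp.2.1⟩
  have hJ0 : (0:ℝ) < J := by exact_mod_cast hJ1
  constructor
  · calc _ ≤ _ := Finset.sum_le_sum_of_subset_of_nonneg hsub (fun p _ _ => by positivity)
      _ ≤ _ := dyadic_sum (fun p => (1:ℝ) / p) (fun j => 2 / j) (fun j hj => block_inv j hj) J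
      _ = 1 / 2 + 2 * ((harmonic J : ℚ) : ℝ) := by
        rw [harmonic_eq_sum_Icc]
        push_cast
        rw [Finset.mul_sum]
        simp [div_eq_mul_inv]
      _ ≤ 1 / 2 + 2 * (1 + Real.log J) := by
        have := harmonic_le_one_add_log J
        gcongr
      _ ≤ 1 / 2 + 2 * (1 + (Real.log (Real.log Y) - Real.log (Real.log 2))) := by
        have h1 : Real.log J + Real.log (Real.log 2) ≤ Real.log (Real.log Y) := by
          rw [← Real.log_mul (by positivity) (by positivity)]
          exact Real.log_le_log (by positivity) hJlog
        linarith
      _ ≤ _ := by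
        have := neg_abs_le (Real.log (Real.log 2))
        linarith
  · calc _ ≤ _ := Finset.sum_le_sum_of_subset_of_nonneg hsub (fun p _ _ => by
            have := Real.log_natCast_nonneg p
            positivity)
      _ ≤ _ := dyadic_sum (fun p => Real.log p / p) (fun j => 2 * Real.log 2) (fun j hj => block_loginv j) J
      _ = Real.log 2 / 2 + 2 * (J * Real.log 2) := by
        simp; ring
      _ ≤ 3 * Real.log Y := by linarith
      _ ≤ _ := by
        have : 0 ≤ 2 * |Real.log (Real.log 2)| := by positivity
        gcongr
        · linarith
        · linarith

lemma prodP (k : ℕ) (hk : 1 ≤ k) (B : ℝ) (hB : 0 ≤ B) : ∃ C : ℝ, 1 ≤ C ∧ ∀ Y : ℝ, 2 ≤ Y →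
    ∏ p ∈ PP k Y, (1 + ((k - 1 : ℕ) : ℝ) * (p:ℝ) ^ (B / Real.log Y - 1)) ≤ C * Real.log Y ^ (2 * (k - 1)) := by
  obtain ⟨C, hC, h⟩ := mertens_sums
  refine ⟨Real.exp ((k - 1 : ℕ) * (C + Real.exp B * B * C)), Real.one_le_exp (by positivity), fun Y hY => ?_⟩
  obtain ⟨h1, h2⟩ := h k Y hY
  have hly : 0 < Real.log Y := Real.log_pos (by linarith)
  have hterm : ∀ p ∈ PP k Y, (p:ℝ) ^ (B / Real.log Y - 1) ≤ 1 / p + (Real.exp B * B / Real.log Y) * (Real.log p / p) := by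
    intro p hp
    rw [mem_PP (by linarith)] at hp
    have hp0 : (0:ℝ) < p := by exact_mod_cast hp.1.pos
    have hlp : 0 ≤ Real.log p := Real.log_natCast_nonneg p
    have hlpy : Real.log p ≤ Real.log Y := Real.log_le_log hp0 hp.2.2
    rw [Real.rpow_sub_one hp0.ne', Real.rpow_def_of_pos hp0]
    set x := Real.log p * (B / Real.log Y) with hx
    have hx0 : 0 ≤ x := by positivity
    have hxB : x ≤ B := by
      rw [hx, mul_div_assoc', div_le_iff₀ hly, mul_comm]; gcongr
    have h3 : Real.exp x ≤ 1 + x * Real.exp B := by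
      have h4 := Real.add_one_le_exp (-x)
      have h5 : Real.exp x * Real.exp (-x) = 1 := by rw [← Real.exp_add]; simp
      have h6 : Real.exp x ≤ Real.exp B := Real.exp_le_exp.mpr hxB
      nlinarith [Real.exp_pos x, mul_le_mul_of_nonneg_left h4 (Real.exp_pos x).le, mul_le_mul_of_nonneg_left h6 hx0]
    calc Real.exp x / p ≤ (1 + x * Real.exp B) / p := by gcongr
      _ = _ := by rw [hx]; field_simp
  calc _ ≤ ∏ p ∈ PP k Y, Real.exp (((k - 1 : ℕ) : ℝ) * (p:ℝ) ^ (B / Real.log Y - 1)) := by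
        apply Finset.prod_le_prod
        · intro p _; positivity
        · intro p _
          rw [add_comm]; exact Real.add_one_le_exp _
    _ = Real.exp (((k - 1 : ℕ) : ℝ) * ∑ p ∈ PP k Y, (p:ℝ) ^ (B / Real.log Y - 1)) := by
        rw [← Real.exp_sum, Finset.mul_sum]
    _ ≤ Real.exp (((k - 1 : ℕ) : ℝ) * (2 * Real.log (Real.log Y) + (C + Real.exp B * B * C))) := by
        apply Real.exp_le_exp.mpr
        apply mul_le_mul_of_nonneg_left _ (by positivity)
        calc _ ≤ _ := Finset.sum_le_sum hterm
          _ = ∑ p ∈ PP k Y, (1:ℝ) / p + (Real.exp B * B / Real.log Y) * ∑ p ∈ PP k Y, (Real.log p / p) := by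
            rw [Finset.sum_add_distrib, Finset.mul_sum]
          _ ≤ (2 * Real.log (Real.log Y) + C) + (Real.exp B * B / Real.log Y) * (C * Real.log Y) := by gcongr
          _ = _ := by field_simp; ring
    _ = _ := by
        rw [mul_add, Real.exp_add, mul_comm]
        congr 1
        rw [← Real.exp_log (pow_pos hly _), Real.log_pow]
        push_cast
        ring_nf

open scoped Classical in
lemma sieve_comb (T : Finset ℕ) (hT : ∀ p ∈ T, 1 ≤ p) (Y Z1 : ℝ) (hY : ∀ p ∈ T, (p:ℝ) ≤ Y) (hZ1 : 1 ≤ Z1) :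
    |(if T = ∅ then (1:ℝ) else 0) - ∑ S ∈ T.powerset, (if ((∏ p ∈ S, p : ℕ) : ℝ) ≤ Z1 then (-1:ℝ) ^ S.card else 0)| ≤
      ∑ S ∈ T.powerset, (if Z1 < ((∏ p ∈ S, p : ℕ) : ℝ) ∧ ((∏ p ∈ S, p : ℕ) : ℝ) ≤ Y * Z1 then (1:ℝ) else 0) := by
  rcases T.eq_empty_or_nonempty with h | ⟨p, hp⟩
  · subst h
    simp [hZ1]
  · have hne : T ≠ ∅ := Finset.ne_empty_of_mem hp
    rw [if_neg hne, zero_sub, abs_neg]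
    obtain ⟨T', hpT, rfl⟩ : ∃ T', p ∉ T' ∧ T = insert p T' :=
      ⟨T.erase p, Finset.notMem_erase _ _, (Finset.insert_erase hp).symm⟩
    rw [Finset.sum_powerset_insert hpT, Finset.sum_powerset_insert hpT]
    rw [← Finset.sum_add_distrib]
    have hp1 : (1:ℝ) ≤ p := by exact_mod_cast hT p hp
    have hpY := hY p hp
    refine (Finset.abs_sum_le_sum_abs _ _).trans ?_
    rw [← Finset.sum_add_distrib]
    apply Finset.sum_le_sum
    intro S hS
    have hpS : p ∉ S := fun h => hpT (Finset.mem_powerset.mp hS h)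
    rw [Finset.prod_insert hpS, Finset.card_insert_of_notMem hpS]
    set d : ℕ := ∏ p ∈ S, p
    push_cast
    have hd0 : (0:ℝ) ≤ d := Nat.cast_nonneg d
    rw [pow_succ]
    have hdp : (d:ℝ) ≤ p * d := le_mul_of_one_le_left hd0 hp1
    by_cases h1 : (d:ℝ) ≤ Z1
    · by_cases h2 : (p:ℝ) * d ≤ Z1
      · rw [if_pos h1, if_pos h2]
        have : |(-1:ℝ) ^ S.card + (-1) ^ S.card * -1| = 0 := by simp
        rw [this]
        apply add_nonneg <;> split_ifs <;> norm_num
      · rw [if_pos h1, if_neg h2]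
        have h3 : Z1 < (p:ℝ) * d ∧ (p:ℝ) * d ≤ Y * Z1 := by
          refine ⟨by linarith, ?_⟩
          have : 0 ≤ Y := by linarith
          gcongr
        rw [if_pos h3]
        have : |(-1:ℝ) ^ S.card + 0| = 1 := by simp [abs_pow]
        rw [this]
        split_ifs <;> norm_num
    · rw [if_neg h1, if_neg (by linarith)]
      simp only [add_zero, abs_zero]
      apply add_nonneg <;> split_ifs <;> norm_num

lemma residue_sum (M D t : ℕ) (hD : 1 ≤ D) (ht : t < D) (F : ℤ → ℂ) :
    ∃ u v : ℤ, v - u ≤ ((M / D + 1 : ℕ) : ℤ) ∧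
      ∑ n ∈ (Finset.Icc 1 M).filter (fun n => n % D = t), F (n:ℤ) = ∑ m ∈ Finset.Ico u v, F (t + D * m) := by
  have hD0 : (0:ℤ) < D := by exact_mod_cast hD
  refine ⟨if t = 0 then 1 else 0, ((M:ℤ) - t) / D + 1, ?_, ?_⟩
  · have h1 : ((M:ℤ) - t) / D ≤ (M:ℤ) / D := Int.ediv_le_ediv hD0 (by omega)
    push_cast
    split_ifs <;> linarith
  · apply Finset.sum_nbij' (fun n => ((n / D : ℕ) : ℤ)) (fun m => (t + D * m).toNat)
    · intro n hn
      rw [Finset.mem_filter, Finset.mem_Icc] at hn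
      have hdm := Nat.div_add_mod n D
      rw [hn.2] at hdm
      rw [Finset.mem_Ico, Int.lt_add_one_iff, Int.le_ediv_iff_mul_le hD0]
      constructor
      · split_ifs with h
        · have : 0 < n / D := by
            rcases Nat.eq_zero_or_pos (n / D) with h0 | h0
            · rw [h0] at hdm; omega
            · exact h0
          exact_mod_cast this
        · positivity
      · have : (n:ℤ) = D * (n / D : ℕ) + t := by exact_mod_cast hdm.symm
        have h3 : (n:ℤ) ≤ M := by exact_mod_cast hn.1.2
        linarith [mul_comm (D:ℤ) (n / D : ℕ)]
    · intro m hm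
      rw [Finset.mem_Ico, Int.lt_add_one_iff, Int.le_ediv_iff_mul_le hD0] at hm
      have hm0 : 0 ≤ m := by
        have := hm.1
        split_ifs at this <;> omega
      lift m to ℕ using hm0
      have h1 : ((t:ℤ) + D * m).toNat = t + D * m := by
        have : ((t:ℤ) + D * m) = ((t + D * m : ℕ) : ℤ) := by push_cast; ring
        rw [this, Int.toNat_natCast]
      rw [h1, Finset.mem_filter, Finset.mem_Icc]
      refine ⟨⟨?_, ?_⟩, ?_⟩
      · have := hm.1
        split_ifs at this with h
        · have h2 : 1 ≤ m := by exact_mod_cast this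
          have : 1 ≤ D * m := Nat.mul_pos hD h2
          omega
        · omega
      · have := hm.2
        have h2 : ((m * D : ℕ) : ℤ) ≤ M - t := by push_cast; exact this
        have h3 : m * D = D * m := mul_comm _ _
        omega
      · rw [Nat.add_mul_mod_self_left, Nat.mod_eq_of_lt ht]
    · intro n hn
      rw [Finset.mem_filter, Finset.mem_Icc] at hn
      have hdm := Nat.div_add_mod n D
      rw [hn.2] at hdm
      have : ((t:ℤ) + D * ((n / D : ℕ) : ℤ)) = ((n : ℕ) : ℤ) := by
        have : (n:ℤ) = D * (n / D : ℕ) + t := by exact_mod_cast hdm.symm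
        linarith
      rw [this, Int.toNat_natCast]
    · intro m hm
      rw [Finset.mem_Ico] at hm
      have hm0 : 0 ≤ m := by
        have := hm.1
        split_ifs at this <;> omega
      lift m to ℕ using hm0
      have h1 : ((t:ℤ) + D * m).toNat = t + D * m := by
        have : ((t:ℤ) + D * m) = ((t + D * m : ℕ) : ℤ) := by push_cast; ring
        rw [this, Int.toNat_natCast]
      rw [h1, Nat.add_mul_div_left _ _ hD, Nat.div_eq_of_lt ht, zero_add]
    · intro n hn
      rw [Finset.mem_filter, Finset.mem_Icc] at hn
      have hdm := Nat.div_add_mod n D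
      rw [hn.2] at hdm
      congr 1
      have : (n:ℤ) = D * (n / D : ℕ) + t := by exact_mod_cast hdm.symm
      linarith

open scoped Classical in
lemma residue_count (S : Finset ℕ) (hS : ∀ p ∈ S, p.Prime) (Q : ℕ) (hQ : 1 ≤ Q)
    (hcop : ∀ p ∈ S, Nat.Coprime p Q) (κ : ℕ) (R : (p : ℕ) → Finset (ZMod p)) (hR : ∀ p ∈ S, (R p).card ≤ κ) :
    ((Finset.range (Q * ∏ p ∈ S, p)).filter (fun t : ℕ => ∀ p ∈ S, (t : ZMod p) ∈ R p)).card ≤ Q * κ ^ S.card := by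
  calc _ ≤ (Finset.range Q ×ˢ S.pi R).card := by
        apply Finset.card_le_card_of_injOn (fun t => (t % Q, fun p _ => (t : ZMod p)))
        · intro t ht
          rw [Finset.mem_coe, Finset.mem_filter] at ht
          rw [Finset.mem_coe, Finset.mem_product, Finset.mem_range, Finset.mem_pi]
          exact ⟨Nat.mod_lt _ hQ, fun p hp => ht.2 p hp⟩
        · intro t ht s hs h
          rw [Finset.mem_coe, Finset.mem_filter, Finset.mem_range] at ht hs
          simp only [Prod.mk.injEq] at h
          obtain ⟨h1, h2⟩ := h
          have h3 : ∀ p ∈ S, p ∣ ((t:ℤ) - s).natAbs := by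
            intro p hp
            have h4 := congrFun (congrFun h2 p) hp
            rw [← Int.natCast_dvd, ← ZMod.intCast_zmod_eq_zero_iff_dvd]
            push_cast
            rw [sub_eq_zero]; exact h4
          have h4 : (∏ p ∈ S, p) ∣ ((t:ℤ) - s).natAbs :=
            Finset.prod_primes_dvd _ (fun p hp => (hS p hp).prime) h3
          have h5 : Q ∣ ((t:ℤ) - s).natAbs := by
            rw [← Int.natCast_dvd]
            exact (Nat.modEq_iff_dvd.mp (Eq.symm h1))
          have h6 : Nat.Coprime Q (∏ p ∈ S, p) := Nat.Coprime.prod_right (fun p hp => (hcop p hp).symm)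
          have h7 := h6.mul_dvd_of_dvd_of_dvd h5 h4
          have h8 := Nat.eq_zero_of_dvd_of_lt h7 (by omega)
          omega
    _ = Q * ∏ p ∈ S, (R p).card := by
        rw [Finset.card_product, Finset.card_range, Finset.card_pi]
    _ ≤ Q * κ ^ S.card := by
        apply Nat.mul_le_mul_left
        exact Finset.prod_le_pow_card _ _ _ hR

lemma periodic_mod (W0 : ℤ → Prop) (Q : ℕ) (hW0 : ∀ n, W0 (n + Q) ↔ W0 n) (n m : ℕ) : W0 ((n + Q * m : ℕ) : ℤ) ↔ W0 n := by
  induction m with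
  | zero => simp
  | succ m ih =>
    rw [← ih, ← hW0 ((n + Q * m : ℕ) : ℤ)]
    have : ((n + Q * (m + 1) : ℕ) : ℤ) = ((n + Q * m : ℕ) : ℤ) + Q := by push_cast; ring
    rw [this]

open scoped Classical in
lemma inner_res_sum (S : Finset ℕ) (hS : ∀ p ∈ S, p.Prime) (Q : ℕ) (hQ : 1 ≤ Q)
    (hcop : ∀ p ∈ S, Nat.Coprime p Q) (κ : ℕ) (R : (p : ℕ) → Finset (ZMod p)) (hR : ∀ p ∈ S, (R p).card ≤ κ)
    (W0 : ℤ → Prop) (hW0 : ∀ n, W0 (n + Q) ↔ W0 n) (M : ℕ) (F : ℤ → ℂ) (E : ℝ) (hE0 : 0 ≤ E)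
    (hE : ∀ t : ℕ, ∀ u v : ℤ, v - u ≤ ((M / (Q * ∏ p ∈ S, p) + 1 : ℕ) : ℤ) →
      ‖∑ m ∈ Finset.Ico u v, F (t + ((Q * ∏ p ∈ S, p : ℕ) : ℤ) * m)‖ ≤ E) :
    ‖∑ n ∈ (Finset.Icc 1 M).filter (fun n : ℕ => W0 n ∧ ∀ p ∈ S, (n : ZMod p) ∈ R p), F n‖ ≤ Q * κ ^ S.card * E := by
  set D := Q * ∏ p ∈ S, p with hD
  have hD1 : 1 ≤ D := Nat.mul_pos hQ (Finset.prod_pos fun p hp => (hS p hp).pos)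
  set A := (Finset.range D).filter (fun t : ℕ => W0 t ∧ ∀ p ∈ S, (t : ZMod p) ∈ R p) with hA
  have hmod : ∀ n : ℕ, (W0 n ∧ ∀ p ∈ S, (n : ZMod p) ∈ R p) ↔
      (W0 (n % D : ℕ) ∧ ∀ p ∈ S, ((n % D : ℕ) : ZMod p) ∈ R p) := by
    intro n
    have hn : n % D + D * (n / D) = n := Nat.mod_add_div n D
    have h1 : W0 n ↔ W0 (n % D : ℕ) := by
      have h2 := periodic_mod W0 Q hW0 (n % D) ((∏ p ∈ S, p) * (n / D))
      rw [← mul_assoc, ← hD, hn] at h2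
      exact h2
    have h3 : ∀ p ∈ S, ((n % D : ℕ) : ZMod p) = (n : ZMod p) := by
      intro p hp
      rw [ZMod.natCast_eq_natCast_iff]
      have h4 : p ∣ D := (Finset.dvd_prod_of_mem (fun p => p) hp).trans (Dvd.intro_left _ rfl)
      exact (Nat.mod_modEq n D).of_dvd h4
    rw [h1]
    constructor
    · rintro ⟨a, b⟩
      exact ⟨a, fun p hp => by rw [h3 p hp]; exact b p hp⟩
    · rintro ⟨a, b⟩
      exact ⟨a, fun p hp => by rw [← h3 p hp]; exact b p hp⟩
  have hmaps : ∀ n ∈ (Finset.Icc 1 M).filter (fun n : ℕ => W0 n ∧ ∀ p ∈ S, (n : ZMod p) ∈ R p), n % D ∈ A := by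
    intro n hn
    rw [Finset.mem_filter] at hn
    rw [hA, Finset.mem_filter, Finset.mem_range]
    exact ⟨Nat.mod_lt _ hD1, (hmod n).mp hn.2⟩
  rw [← Finset.sum_fiberwise_of_maps_to hmaps]
  have hcard : (A.card : ℝ) ≤ Q * κ ^ S.card := by
    have h1 : A.card ≤ Q * κ ^ S.card := by
      refine le_trans (Finset.card_le_card ?_) (residue_count S hS Q hQ hcop κ R hR)
      intro t ht
      rw [hA, Finset.mem_filter] at ht
      rw [Finset.mem_filter]
      exact ⟨ht.1, ht.2.2⟩
    exact_mod_cast h1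
  calc _ ≤ ∑ t ∈ A, E := by
        refine (norm_sum_le _ _).trans (Finset.sum_le_sum ?_)
        intro t ht
        rw [hA, Finset.mem_filter, Finset.mem_range] at ht
        have h1 : ((Finset.Icc 1 M).filter (fun n : ℕ => W0 n ∧ ∀ p ∈ S, (n : ZMod p) ∈ R p)).filter (fun n => n % D = t) =
            (Finset.Icc 1 M).filter (fun n => n % D = t) := by
          ext n
          simp only [Finset.mem_filter]
          constructor
          · rintro ⟨⟨a, _⟩, b⟩; exact ⟨a, b⟩
          · rintro ⟨a, b⟩
            refine ⟨⟨a, ?_⟩, b⟩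
            rw [hmod, b]; exact ht.2
        rw [h1]
        obtain ⟨u, v, huv, h2⟩ := residue_sum M D t hD1 ht.1 F
        rw [h2]
        exact hE t u v huv
    _ = A.card * E := by rw [Finset.sum_const, nsmul_eq_mul]
    _ ≤ _ := by gcongr

open scoped Classical in
theorem sieve_abs (P : Finset ℕ) (hP : ∀ p ∈ P, p.Prime) (Q : ℕ) (hQ : 1 ≤ Q)
    (hcop : ∀ p ∈ P, Nat.Coprime p Q) (κ : ℕ) (R : (p : ℕ) → Finset (ZMod p)) (hR : ∀ p ∈ P, (R p).card ≤ κ)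
    (W0 : ℤ → Prop) (hW0 : ∀ n, W0 (n + Q) ↔ W0 n) (M : ℕ) (F : ℤ → ℂ) (hF : ∀ n, ‖F n‖ ≤ 1)
    (Y Z1 : ℝ) (hY : ∀ p ∈ P, (p:ℝ) ≤ Y) (hZ1 : 1 ≤ Z1) (E : ℕ → ℝ) (hE0 : ∀ d, 0 ≤ E d)
    (hE : ∀ S ⊆ P, ((∏ p ∈ S, p : ℕ) : ℝ) ≤ Z1 → ∀ t : ℕ, ∀ u v : ℤ, v - u ≤ ((M / (Q * ∏ p ∈ S, p) + 1 : ℕ) : ℤ) →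
      ‖∑ m ∈ Finset.Ico u v, F (t + ((Q * ∏ p ∈ S, p : ℕ) : ℤ) * m)‖ ≤ E (∏ p ∈ S, p)) :
    ‖∑ n ∈ (Finset.Icc 1 M).filter (fun n : ℕ => W0 n ∧ ∀ p ∈ P, (n : ZMod p) ∉ R p), F n‖ ≤
      ∑ S ∈ P.powerset.filter (fun S => ((∏ p ∈ S, p : ℕ) : ℝ) ≤ Z1), (Q:ℝ) * (κ:ℝ) ^ S.card * E (∏ p ∈ S, p) +
      ∑ S ∈ P.powerset.filter (fun S => Z1 < ((∏ p ∈ S, p : ℕ) : ℝ) ∧ ((∏ p ∈ S, p : ℕ) : ℝ) ≤ Y * Z1),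
        (Q:ℝ) * (κ:ℝ) ^ S.card * ((M / (Q * ∏ p ∈ S, p) + 1 : ℕ) : ℝ) := by
  set T : ℕ → Finset ℕ := fun n => P.filter (fun p => (n : ZMod p) ∈ R p) with hT
  have hTe : ∀ n, T n = ∅ ↔ ∀ p ∈ P, (n : ZMod p) ∉ R p := by
    intro n; rw [hT]; simp only [Finset.filter_eq_empty_iff]
  have hpw : ∀ n (G : Finset ℕ → ℝ), ∑ S ∈ (T n).powerset, G S = ∑ S ∈ P.powerset, if (∀ p ∈ S, (n : ZMod p) ∈ R p) then G S else 0 := by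
    intro n G
    rw [← Finset.sum_filter]
    apply Finset.sum_congr _ (fun _ _ => rfl)
    ext S
    simp only [Finset.mem_powerset, Finset.mem_filter, hT, Finset.subset_iff]
    constructor
    · intro h
      exact ⟨fun x hx => (h hx).1, fun x hx => (h hx).2⟩
    · rintro ⟨a, b⟩ x hx
      exact ⟨a hx, b x hx⟩
  set w : Finset ℕ → ℝ := fun S => if ((∏ p ∈ S, p : ℕ) : ℝ) ≤ Z1 then (-1:ℝ) ^ S.card else 0 with hw
  set z : Finset ℕ → ℝ := fun S => if Z1 < ((∏ p ∈ S, p : ℕ) : ℝ) ∧ ((∏ p ∈ S, p : ℕ) : ℝ) ≤ Y * Z1 then (1:ℝ) else 0 with hz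
  have hmain : ∀ n : ℕ, |(if T n = ∅ then (1:ℝ) else 0) - ∑ S ∈ (T n).powerset, w S| ≤ ∑ S ∈ (T n).powerset, z S := by
    intro n
    apply sieve_comb (T n) (fun p hp => (hP p (Finset.mem_filter.mp hp).1).pos) Y Z1 (fun p hp => hY p (Finset.mem_filter.mp hp).1) hZ1
  set I := (Finset.Icc 1 M).filter (fun n : ℕ => W0 n) with hI
  have e1 : ∑ n ∈ (Finset.Icc 1 M).filter (fun n : ℕ => W0 n ∧ ∀ p ∈ P, (n : ZMod p) ∉ R p), F n =
      ∑ n ∈ I, (((if T n = ∅ then (1:ℝ) else 0 : ℝ)) : ℂ) * F n := by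
    rw [← Finset.filter_filter, ← hI, Finset.sum_filter]
    apply Finset.sum_congr rfl
    intro n _
    by_cases h : T n = ∅
    · rw [if_pos h, if_pos ((hTe n).mp h)]; simp
    · rw [if_neg h, if_neg (fun h' => h ((hTe n).mpr h'))]; simp
  have e2 : ∑ n ∈ I, (((if T n = ∅ then (1:ℝ) else 0 : ℝ)) : ℂ) * F n =
      ∑ n ∈ I, ((∑ S ∈ (T n).powerset, w S : ℝ) : ℂ) * F n +
      ∑ n ∈ I, (((if T n = ∅ then (1:ℝ) else 0) - ∑ S ∈ (T n).powerset, w S : ℝ) : ℂ) * F n := by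
    rw [← Finset.sum_add_distrib]
    apply Finset.sum_congr rfl
    intro n _
    push_cast; ring
  have e3 : ∑ n ∈ I, ((∑ S ∈ (T n).powerset, w S : ℝ) : ℂ) * F n =
      ∑ S ∈ P.powerset, (w S : ℂ) * ∑ n ∈ (Finset.Icc 1 M).filter (fun n : ℕ => W0 n ∧ ∀ p ∈ S, (n : ZMod p) ∈ R p), F n := by
    have : ∀ n ∈ I, ((∑ S ∈ (T n).powerset, w S : ℝ) : ℂ) * F n =
        ∑ S ∈ P.powerset, (w S : ℂ) * (if (∀ p ∈ S, (n : ZMod p) ∈ R p) then F n else 0) := by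
      intro n _
      rw [hpw n w]
      push_cast
      rw [Finset.sum_mul]
      apply Finset.sum_congr rfl
      intro S _
      split_ifs <;> simp
    rw [Finset.sum_congr rfl this, Finset.sum_comm]
    apply Finset.sum_congr rfl
    intro S _
    rw [← Finset.mul_sum, ← Finset.filter_filter, Finset.sum_filter (p := fun n : ℕ => ∀ p ∈ S, (n : ZMod p) ∈ R p)]
  rw [e1, e2, e3]
  refine (norm_add_le _ _).trans (add_le_add ?_ ?_)
  · rw [Finset.sum_filter]
    refine (norm_sum_le _ _).trans (Finset.sum_le_sum ?_)
    intro S hS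
    have hSP := Finset.mem_powerset.mp hS
    rw [norm_mul]
    by_cases h : ((∏ p ∈ S, p : ℕ) : ℝ) ≤ Z1
    · rw [if_pos h]
      have h1 : ‖(w S : ℂ)‖ = 1 := by
        rw [hw]; simp only; rw [if_pos h]; simp
      rw [h1, one_mul]
      exact inner_res_sum S (fun p hp => hP p (hSP hp)) Q hQ (fun p hp => hcop p (hSP hp)) κ R (fun p hp => hR p (hSP hp))
        W0 hW0 M F _ (hE0 _) (hE S hSP h)
    · rw [if_neg h]
      have h1 : ‖(w S : ℂ)‖ = 0 := by
        rw [hw]; simp only; rw [if_neg h]; simp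
      rw [h1, zero_mul]
  · calc _ ≤ ∑ n ∈ I, ∑ S ∈ (T n).powerset, z S := by
          refine (norm_sum_le _ _).trans (Finset.sum_le_sum ?_)
          intro n _
          rw [norm_mul, Complex.norm_real, Real.norm_eq_abs]
          calc _ ≤ |(if T n = ∅ then (1:ℝ) else 0) - ∑ S ∈ (T n).powerset, w S| * 1 := by
                gcongr; exact hF n
            _ ≤ _ := by rw [mul_one]; exact hmain n
      _ = ∑ S ∈ P.powerset, z S * ∑ n ∈ I, (if (∀ p ∈ S, (n : ZMod p) ∈ R p) then (1:ℝ) else 0) := by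
          rw [Finset.sum_congr rfl (fun n _ => hpw n z), Finset.sum_comm]
          apply Finset.sum_congr rfl
          intro S _
          rw [Finset.mul_sum]
          apply Finset.sum_congr rfl
          intro n _
          split_ifs <;> simp
      _ ≤ _ := by
          rw [Finset.sum_filter]
          apply Finset.sum_le_sum
          intro S hS
          have hSP := Finset.mem_powerset.mp hS
          by_cases h : Z1 < ((∏ p ∈ S, p : ℕ) : ℝ) ∧ ((∏ p ∈ S, p : ℕ) : ℝ) ≤ Y * Z1
          · rw [if_pos h]
            have h1 : z S = 1 := by rw [hz]; simp only; rw [if_pos h]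
            rw [h1, one_mul]
            have h2 := inner_res_sum S (fun p hp => hP p (hSP hp)) Q hQ (fun p hp => hcop p (hSP hp)) κ R (fun p hp => hR p (hSP hp))
              W0 hW0 M (fun _ => 1) ((M / (Q * ∏ p ∈ S, p) + 1 : ℕ) : ℝ) (by positivity) (by
                intro t u v huv
                simp only [Finset.sum_const, Int.card_Ico, nsmul_eq_mul, mul_one, Complex.norm_natCast]
                have : (v - u).toNat ≤ M / (Q * ∏ p ∈ S, p) + 1 := Int.toNat_le.mpr huv
                exact_mod_cast this)
            rw [← Finset.filter_filter, ← hI] at h2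
            refine le_trans (le_of_eq ?_) h2
            simp only [Finset.sum_const, nsmul_eq_mul, mul_one, Complex.norm_natCast]
            rw [← Finset.sum_filter]
            simp
          · rw [if_neg h]
            have h1 : z S = 0 := by rw [hz]; simp only; rw [if_neg h]
            rw [h1, zero_mul]

lemma expand_prod (P : Finset ℕ) (κ : ℝ) (h : ℕ → ℝ) :
    ∑ S ∈ P.powerset, κ ^ S.card * ∏ p ∈ S, h p = ∏ p ∈ P, (1 + κ * h p) := by
  rw [Finset.prod_one_add]
  apply Finset.sum_congr rfl
  intro S _
  rw [Finset.prod_mul_distrib, Finset.prod_const]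

open scoped Classical in
lemma rankin (P : Finset ℕ) (hP : ∀ p ∈ P, p.Prime) (Q : ℕ) (hQ : 1 ≤ Q) (κ : ℕ) (M : ℕ) (X Y Z1 δ : ℝ) (hδ : 0 ≤ δ)
    (hM : (M:ℝ) ≤ X) (hZ1 : 1 ≤ Z1) (hYZ : Y * Z1 ≤ X) :
    ∑ S ∈ P.powerset.filter (fun S => Z1 < ((∏ p ∈ S, p : ℕ) : ℝ) ∧ ((∏ p ∈ S, p : ℕ) : ℝ) ≤ Y * Z1),
        (Q:ℝ) * (κ:ℝ) ^ S.card * ((M / (Q * ∏ p ∈ S, p) + 1 : ℕ) : ℝ) ≤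
    (1 + Q) * X * (Z1 ^ (-δ) * ∏ p ∈ P, (1 + (κ:ℝ) * (p:ℝ) ^ (δ - 1))) := by
  have hX0 : 0 ≤ X := le_trans (Nat.cast_nonneg M) hM
  have hQ0 : (0:ℝ) < Q := by exact_mod_cast hQ
  have hZ0 : 0 < Z1 := by linarith
  rw [← expand_prod, Finset.mul_sum, Finset.mul_sum]
  have hsub : P.powerset.filter (fun S => Z1 < ((∏ p ∈ S, p : ℕ) : ℝ) ∧ ((∏ p ∈ S, p : ℕ) : ℝ) ≤ Y * Z1) ⊆ P.powerset :=
    Finset.filter_subset _ _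
  refine le_trans (Finset.sum_le_sum ?_) (Finset.sum_le_sum_of_subset_of_nonneg hsub ?_)
  · intro S hS
    rw [Finset.mem_filter, Finset.mem_powerset] at hS
    obtain ⟨hSP, h1, h2⟩ := hS
    have hpos : ∀ p ∈ S, (0:ℝ) < p := fun p hp => by exact_mod_cast (hP p (hSP hp)).pos
    set d : ℕ := ∏ p ∈ S, p with hd
    have hd0 : (0:ℝ) < d := by linarith
    have h3 : ∏ p ∈ S, (p:ℝ) ^ (δ - 1) = (d:ℝ) ^ (δ - 1) := by
      rw [hd]; push_cast
      rw [← Real.finsetProd_rpow]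
      intro p hp; exact (hpos p hp).le
    rw [h3]
    have h4 : ((M / (Q * d) + 1 : ℕ) : ℝ) ≤ X / (Q * d) + X / d := by
      push_cast
      have h5 : ((M / (Q * d) : ℕ) : ℝ) ≤ (M:ℝ) / ((Q * d : ℕ) : ℝ) := Nat.cast_div_le
      have h6 : (M:ℝ) / ((Q * d : ℕ) : ℝ) ≤ X / (Q * d) := by push_cast; gcongr
      have h7 : 1 ≤ X / d := by rw [le_div_iff₀ hd0]; linarith
      linarith
    have h5 : (1:ℝ) / d ≤ Z1 ^ (-δ) * (d:ℝ) ^ (δ - 1) := by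
      rw [Real.rpow_sub_one hd0.ne', Real.rpow_neg hZ0.le, mul_div_assoc', inv_mul_eq_div, ← Real.div_rpow hd0.le hZ0.le]
      gcongr
      apply Real.one_le_rpow _ hδ
      rw [le_div_iff₀ hZ0]; linarith
    calc (Q:ℝ) * (κ:ℝ) ^ S.card * ((M / (Q * d) + 1 : ℕ) : ℝ) ≤ (Q:ℝ) * (κ:ℝ) ^ S.card * (X / (Q * d) + X / d) := by gcongr
      _ = (1 + Q) * X * ((κ:ℝ) ^ S.card * (1 / d)) := by field_simp
      _ ≤ (1 + Q) * X * ((κ:ℝ) ^ S.card * (Z1 ^ (-δ) * (d:ℝ) ^ (δ - 1))) := by gcongr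
      _ = _ := by ring
  · intro S hS _
    have : 0 ≤ ∏ p ∈ S, (p:ℝ) ^ (δ - 1) := Finset.prod_nonneg (fun p _ => by positivity)
    positivity

open scoped Classical in
theorem sieve_main (k : ℕ) (hk : 0 < k) (B : ℝ) (hB : 1 ≤ B) : ∃ C : ℝ, 1 ≤ C ∧
    ∀ g : Polynomial ℤ, g.natDegree = k → ∀ X Y Z : ℝ, 2 ≤ X → 2 ≤ Y → 2 ≤ Z → Y * Z ≤ X → ∀ α : ℝ,
    ∀ E : ℕ → ℝ, (∀ d, 0 ≤ E d) →
    (∀ d : ℕ, 1 ≤ d → (d:ℝ) ≤ Z ^ (1 / B) → ∀ t : ℕ, ∀ u v : ℤ, v - u ≤ ((⌊X⌋₊ / (k.factorial ^ 2 * d) + 1 : ℕ) : ℤ) →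
      ‖∑ m ∈ Finset.Ico u v, e (((g.eval ((t:ℤ) + ((k.factorial ^ 2 * d : ℕ) : ℤ) * m) : ℤ) : ℝ) * α)‖ ≤ E d) →
    ‖∑ n ∈ (Finset.Icc 1 ⌊X⌋₊).filter (fun n : ℕ => (n : ℤ) ∈ WSet g Y),
                  e (((g.eval (n : ℤ) : ℤ) : ℝ) * α)‖ ≤
      ∑ S ∈ (PP k Y).powerset.filter (fun S => ((∏ p ∈ S, p : ℕ) : ℝ) ≤ Z ^ (1 / B)),
        ((k.factorial ^ 2 : ℕ):ℝ) * ((k - 1 : ℕ):ℝ) ^ S.card * E (∏ p ∈ S, p) +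
      C * Real.log Y ^ (2 * (k - 1)) * X * Real.exp (-Real.log Z / Real.log Y) := by
  obtain ⟨C, hC, hprod⟩ := prodP k hk B (by linarith)
  have hQ : 1 ≤ k.factorial ^ 2 := Nat.one_le_pow _ _ (Nat.factorial_pos k)
  refine ⟨(1 + (k.factorial ^ 2 : ℕ)) * C, ?_, ?_⟩
  · have : (0:ℝ) ≤ (k.factorial ^ 2 : ℕ) := Nat.cast_nonneg _
    nlinarith
  intro g hg X Y Z hX hY hZ hYZ α E hE0 hE
  have hY0 : (0:ℝ) ≤ Y := by linarith
  have hder : Polynomial.derivative g ≠ 0 := by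
    intro h
    have := Polynomial.derivative_eq_zero.mp h
    omega
  have hdeg : (Polynomial.derivative g).natDegree ≤ k - 1 := by
    rw [← hg]; exact Polynomial.natDegree_derivative_le g
  have hres : ∀ p : ℕ, ∃ R : Finset (ZMod p), (p.Prime ∧ k < p) → (R.card ≤ k - 1 ∧
      ∀ n : ℤ, (p:ℤ) ^ gammaExp g p ∣ (Polynomial.derivative g).eval n ↔ (n : ZMod p) ∈ R) := by
    intro p
    by_cases hp : p.Prime ∧ k < p
    · obtain ⟨h1, h2, h3⟩ := gamma_mem g hder p hp.1
      obtain ⟨R, hR⟩ := large_res k hk _ hdeg p hp.1 hp.2 _ h1 h2 h3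
      exact ⟨R, fun _ => hR⟩
    · exact ⟨∅, fun h => absurd h hp⟩
  choose R hR using hres
  set W0 : ℤ → Prop := fun n => ∀ p : ℕ, p.Prime → (p : ℝ) ≤ Y → p ≤ k →
    ¬ ((p : ℤ) ^ gammaExp g p ∣ (Polynomial.derivative g).eval n) with hW0d
  have hW0 : ∀ n : ℤ, W0 (n + ((k.factorial ^ 2 : ℕ) : ℤ)) ↔ W0 n := by
    intro n
    simp only [hW0d]
    apply forall_congr'; intro p
    apply forall_congr'; intro hp
    apply forall_congr'; intro _
    apply forall_congr'; intro hpk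
    obtain ⟨h1, h2, h3⟩ := gamma_mem g hder p hp
    rw [small_period k _ hdeg hk p hp hpk _ h1 h2 n]
  have hZ1 : 1 ≤ Z ^ (1 / B) := Real.one_le_rpow (by linarith) (by positivity)
  have hZ1Z : Z ^ (1 / B) ≤ Z := by
    conv_rhs => rw [← Real.rpow_one Z]
    apply Real.rpow_le_rpow_of_exponent_le (by linarith)
    rw [div_le_one (by linarith)]; exact hB
  have hP : ∀ p ∈ PP k Y, p.Prime := fun p hp => ((mem_PP hY0).mp hp).1
  have hs := sieve_abs (PP k Y) hP (k.factorial ^ 2) hQ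
    (fun p hp => by
      apply Nat.Coprime.pow_right
      rw [(hP p hp).coprime_iff_not_dvd, (hP p hp).dvd_factorial]
      have := ((mem_PP hY0).mp hp).2.1
      omega)
    (k - 1) R (fun p hp => (hR p ⟨hP p hp, ((mem_PP hY0).mp hp).2.1⟩).1) W0 hW0 ⌊X⌋₊
    (fun n => e (((g.eval n : ℤ) : ℝ) * α)) (fun n => by rw [norm_e]) Y (Z ^ (1 / B))
    (fun p hp => ((mem_PP hY0).mp hp).2.2) hZ1 E hE0
    (fun S hS hd t u v huv => hE _ (Finset.prod_pos fun p hp => (hP p (hS hp)).pos) hd t u v huv)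
  have hset : (Finset.Icc 1 ⌊X⌋₊).filter (fun n : ℕ => (n : ℤ) ∈ WSet g Y) =
      (Finset.Icc 1 ⌊X⌋₊).filter (fun n : ℕ => W0 n ∧ ∀ p ∈ PP k Y, (n : ZMod p) ∉ R p) := by
    apply Finset.filter_congr
    intro n _
    simp only [WSet, Set.mem_ofPred_eq, hW0d]
    constructor
    · intro h
      refine ⟨fun p hp hpY _ => h p hp hpY, fun p hp hm => ?_⟩
      obtain ⟨h1, h2, h3⟩ := (mem_PP hY0).mp hp
      apply h p h1 h3
      rw [(hR p ⟨h1, h2⟩).2]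
      push_cast; exact hm
    · rintro ⟨h1, h2⟩ p hp hpY
      rcases Nat.lt_or_ge k p with hpk | hpk
      · rw [(hR p ⟨hp, hpk⟩).2]
        push_cast
        exact h2 p ((mem_PP hY0).mpr ⟨hp, hpk, hpY⟩)
      · exact h1 p hp hpY hpk
  rw [hset]
  refine hs.trans (add_le_add le_rfl ?_)
  have hly : 0 < Real.log Y := Real.log_pos (by linarith)
  refine (rankin (PP k Y) hP _ hQ (k - 1) ⌊X⌋₊ X Y (Z ^ (1 / B)) (B / Real.log Y) (by positivity)
    (Nat.floor_le (by linarith)) hZ1 (le_trans (by gcongr) hYZ)).trans ?_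
  have hexp : (Z ^ (1 / B)) ^ (-(B / Real.log Y)) = Real.exp (-Real.log Z / Real.log Y) := by
    rw [← Real.rpow_mul (by linarith), Real.rpow_def_of_pos (by linarith)]
    congr 1
    field_simp
  rw [hexp]
  have hX0 : 0 ≤ X := by linarith
  calc _ ≤ (1 + ((k.factorial ^ 2 : ℕ) : ℝ)) * X * (Real.exp (-Real.log Z / Real.log Y) * (C * Real.log Y ^ (2 * (k - 1)))) := by
        gcongr
        exact hprod Y hY
    _ = _ := by ring

lemma algL (j : ℕ) (hj : 1 ≤ j) (N D X K L r c1 U : ℝ) (hX : 0 < X) (hNX : X ≤ N * D) (hD : 1 ≤ D) (hL : 1 ≤ L) (hK : 1 ≤ K)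
    (hN : 1 ≤ N) (hr : 0 < r) (hc1 : 1 ≤ c1) (h1 : c1 / r ≤ U) (h2 : c1 / X ≤ U) (h3 : r / X ^ (j+1) ≤ U) :
    (j * (2 * N) ^ j + (2 * K) ^ j * ((c1 * D ^ (j+1) * N ^ j / r + 1) * (10 * N + 12 * r * L))) / (2 * N) ^ (j+1) ≤
      (j + 22) * (K ^ j * L * D ^ (j+2) * U) := by
  have hN0 : 0 < N := by linarith
  have hD0 : 0 < D := by linarith
  have hL0 : 0 < L := by linarith
  have hK0 : 0 < K := by linarith
  have hU : 0 < U := lt_of_lt_of_le (by positivity) h1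
  have hinv : 1 / N ≤ D / X := by
    rw [div_le_div_iff₀ hN0 hX]; linarith
  set M := L * D ^ (j+2) * U with hM
  have hDD : D ^ (j+1) ≤ D ^ (j+2) := pow_le_pow_right₀ hD (by omega)
  have t1 : c1 * D ^ (j+1) / r ≤ M := by
    calc c1 * D ^ (j+1) / r = 1 * D ^ (j+1) * (c1 / r) := by ring
      _ ≤ L * D ^ (j+2) * U := by gcongr
  have t2 : c1 * D ^ (j+1) * L / N ≤ M := by
    calc c1 * D ^ (j+1) * L / N = c1 * D ^ (j+1) * L * (1 / N) := by ring
      _ ≤ c1 * D ^ (j+1) * L * (D / X) := by gcongr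
      _ = L * D ^ (j+2) * (c1 / X) := by ring
      _ ≤ M := by rw [hM]; gcongr
  have t0 : 1 / N ≤ M := by
    calc 1 / N ≤ D / X := hinv
      _ = 1 * D ^ 1 * (1 / X) := by ring
      _ ≤ L * D ^ (j+2) * (c1 / X) := by
        have : D ^ 1 ≤ D ^ (j+2) := pow_le_pow_right₀ hD (by omega)
        gcongr
      _ ≤ M := by rw [hM]; gcongr
  have t3 : 1 / N ^ j ≤ M := by
    refine le_trans ?_ t0
    apply one_div_le_one_div_of_le hN0
    exact le_self_pow₀ hN (by omega)
  have t4 : r * L / N ^ (j+1) ≤ M := by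
    calc r * L / N ^ (j+1) = r * L * (1 / N) ^ (j+1) := by rw [one_div, inv_pow]; ring
      _ ≤ r * L * (D / X) ^ (j+1) := by gcongr
      _ = L * D ^ (j+1) * (r / X ^ (j+1)) := by rw [div_pow]; ring
      _ ≤ L * D ^ (j+2) * U := by gcongr
  have hK1 : 1 ≤ K ^ j := one_le_pow₀ hK
  have hM0 : 0 < M := by positivity
  have heq : (j * (2 * N) ^ j + (2 * K) ^ j * ((c1 * D ^ (j+1) * N ^ j / r + 1) * (10 * N + 12 * r * L))) / (2 * N) ^ (j+1)
      = j / 2 * (1 / N) + K ^ j / 2 * (10 * (c1 * D ^ (j+1) / r) + 12 * (c1 * D ^ (j+1) * L / N) + 10 * (1 / N ^ j) + 12 * (r * L / N ^ (j+1))) := by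
    rw [mul_pow, mul_pow, mul_pow, pow_succ 2 j, pow_succ N j]
    field_simp
    ring
  rw [heq]
  calc _ ≤ j / 2 * (K ^ j * M) + K ^ j / 2 * (10 * M + 12 * M + 10 * M + 12 * M) := by
        have h5 : 1 / N ≤ K ^ j * M := t0.trans (le_mul_of_one_le_left hM0.le hK1)
        gcongr
    _ = (j / 2 + 22) * (K ^ j * M) := by ring
    _ ≤ (j + 22) * (K ^ j * M) := by
        have : (0:ℝ) ≤ j := Nat.cast_nonneg j
        gcongr
        linarith
    _ = _ := by rw [hM]; ring

lemma N_bounds (X : ℝ) (hX : 1 ≤ X) (Q d : ℕ) (hQ : 1 ≤ Q) (hd : 1 ≤ d) (hdX : (d:ℝ) ≤ X) :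
    X ≤ ((⌊X⌋₊ / (Q * d) + 1 : ℕ) : ℝ) * ((Q * d : ℕ) : ℝ) ∧
    ((⌊X⌋₊ / (Q * d) + 1 : ℕ) : ℝ) * ((Q * d : ℕ) : ℝ) ≤ 2 * Q * X := by
  have hQd : 0 < Q * d := Nat.mul_pos hQ hd
  have h1 := Nat.div_add_mod ⌊X⌋₊ (Q * d)
  have h2 := Nat.mod_lt ⌊X⌋₊ hQd
  have hQ1 : (1:ℝ) ≤ Q := by exact_mod_cast hQ
  have hfl := Nat.floor_le (by linarith : 0 ≤ X)
  constructor
  · have h3 : ⌊X⌋₊ + 1 ≤ (⌊X⌋₊ / (Q * d) + 1) * (Q * d) := by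
      rw [add_mul, one_mul, mul_comm]; omega
    have h4 := Nat.lt_floor_add_one X
    have h5 : ((⌊X⌋₊ + 1 : ℕ) : ℝ) ≤ (((⌊X⌋₊ / (Q * d) + 1) * (Q * d) : ℕ) : ℝ) := by exact_mod_cast h3
    rw [Nat.cast_mul] at h5
    refine le_trans ?_ h5
    push_cast; linarith
  · have h3 : (⌊X⌋₊ / (Q * d) + 1) * (Q * d) ≤ ⌊X⌋₊ + Q * d := by
      rw [add_mul, one_mul, mul_comm]; omega
    have h5 : (((⌊X⌋₊ / (Q * d) + 1) * (Q * d) : ℕ) : ℝ) ≤ ((⌊X⌋₊ + Q * d : ℕ) : ℝ) := by exact_mod_cast h3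
    rw [Nat.cast_mul] at h5
    refine h5.trans ?_
    push_cast
    nlinarith [mul_le_mul_of_nonneg_left hdX (by linarith : (0:ℝ) ≤ Q)]

noncomputable def PT (N k : ℕ) (ξ : ℝ) : ℝ := TT N (k - 1) (fun m => GG N (m * ξ)) / (2 * N : ℝ) ^ k

lemma caseL (k : ℕ) (hk : 2 ≤ k) (c0 : ℝ) (hc0 : 1 ≤ c0) : ∃ C : ℝ, 1 ≤ C ∧ ∀ X : ℝ, 2 ≤ X → ∀ d : ℕ, 1 ≤ d →
    (d:ℝ) ≤ X ^ (1 / (16 * ((k:ℝ) + 1))) → ∀ τ : ℝ, 0 < τ → τ ≤ 1 →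
    ∀ (β : ℝ) (b : ℤ) (r c1 : ℕ), 1 ≤ r → IsCoprime b (r:ℤ) → |β - b / r| ≤ 1 / (r:ℝ) ^ 2 → 1 ≤ c1 →
    (c1:ℝ) / r ≤ c0 * τ → (c1:ℝ) / X ≤ c0 * τ → (r:ℝ) / X ^ k ≤ c0 * τ →
    PT (⌊X⌋₊ / (k.factorial ^ 2 * d) + 1) k (((c1 * (k.factorial ^ 2 * d) ^ k : ℕ) : ℝ) * β) ≤ C * X ^ (1 / 4 : ℝ) * τ := by
  obtain ⟨j, rfl⟩ : ∃ j, k = j + 1 := ⟨k - 1, by omega⟩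
  have hj : 1 ≤ j := by omega
  have hj0 : (0:ℝ) < j := by exact_mod_cast hj
  set Q := (j+1).factorial ^ 2 with hQd
  have hQ : 1 ≤ Q := Nat.one_le_pow _ _ (Nat.factorial_pos _)
  have hQ1 : (1:ℝ) ≤ Q := by exact_mod_cast hQ
  set ε : ℝ := 1 / (16 * (j:ℝ) ^ 2) with hε
  obtain ⟨C1, hC1, hdiv⟩ := divisor_bound ε (by positivity)
  have hlogc0 : 0 ≤ Real.log c0 := Real.log_nonneg hc0
  set CL : ℝ := 1 + Real.log c0 + (j+1) * 16 with hCL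
  have hCL1 : 1 ≤ CL := by
    have : 0 ≤ ((j:ℝ)+1) * 16 := by positivity
    rw [hCL]; linarith
  have hCK1 : 1 ≤ C1 ^ j * (2 * Q) := by
    have := one_le_pow₀ hC1 (n := j)
    nlinarith
  refine ⟨(j + 22) * (C1 ^ j * (2 * Q) * CL * (Q:ℝ) ^ (j + 2) * c0), ?_, ?_⟩
  · have h1 : 1 ≤ (Q:ℝ) ^ (j+2) := one_le_pow₀ hQ1
    have h2 : 1 ≤ C1 ^ j * (2 * Q) * CL * (Q:ℝ) ^ (j + 2) * c0 :=
      one_le_mul_of_one_le_of_one_le (one_le_mul_of_one_le_of_one_le (one_le_mul_of_one_le_of_one_le hCK1 hCL1) h1) hc0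
    nlinarith
  intro X hX d hd hdX τ hτ hτ1 β b r c1 hr hbr hβ hc1 h1 h2 h3
  have hX0 : 0 < X := by linarith
  have hX1 : 1 ≤ X := by linarith
  have hdX' : (d:ℝ) ≤ X := by
    refine hdX.trans ?_
    conv_rhs => rw [← Real.rpow_one X]
    apply Real.rpow_le_rpow_of_exponent_le hX1
    rw [div_le_one (by positivity)]
    push_cast
    nlinarith
  obtain ⟨hN1, hN2⟩ := N_bounds X hX1 Q d hQ hd hdX'
  set D := Q * d with hD
  set N := ⌊X⌋₊ / D + 1 with hN
  have hNn : 1 ≤ N := Nat.le_add_left 1 _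
  have hNr : (1:ℝ) ≤ N := by exact_mod_cast hNn
  have hDn : 1 ≤ D := Nat.mul_pos hQ hd
  have hDr : (1:ℝ) ≤ D := by exact_mod_cast hDn
  have hNX : (N:ℝ) ≤ 2 * Q * X := by
    refine le_trans ?_ hN2
    exact le_mul_of_one_le_right (by positivity) hDr
  set Kr : ℝ := C1 * (2 * Q * X) ^ (j * ε) with hKr
  set K : ℕ := ⌊Kr⌋₊ with hK
  have hKr0 : 0 ≤ Kr := by positivity
  have hKr1 : 1 ≤ Kr := by
    rw [hKr]
    apply one_le_mul_of_one_le_of_one_le hC1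
    apply Real.one_le_rpow _ (by positivity)
    nlinarith
  have hKle : (K:ℝ) ≤ Kr := Nat.floor_le hKr0
  have hK1 : (1:ℝ) ≤ K := by
    have : 1 ≤ K := Nat.le_floor (by simpa using hKr1)
    exact_mod_cast this
  have hdivK : ∀ m, 1 ≤ m → m ≤ N ^ j → m.divisors.card ≤ K := by
    intro m hm hmN
    apply Nat.le_floor
    refine (hdiv m hm).trans ?_
    rw [hKr, Real.rpow_mul (by positivity), Real.rpow_natCast]
    gcongr
    calc (m:ℝ) ≤ ((N ^ j : ℕ) : ℝ) := by exact_mod_cast hmN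
      _ = (N:ℝ) ^ j := by push_cast; rfl
      _ ≤ _ := by gcongr
  have hmain := weylL N hNn j K hdivK β b r hr hbr hβ (c1 * D ^ (j+1)) (Nat.mul_pos hc1 (Nat.pow_pos hDn))
  have hr0 : (0:ℝ) < r := by exact_mod_cast hr
  have hr1 : (1:ℝ) ≤ r := by exact_mod_cast hr
  have hlogr : 0 ≤ Real.log r := Real.log_nonneg hr1
  have hL1 : 1 ≤ 1 + Real.log r := by linarith
  have halg := algL j hj N D X K (1 + Real.log r) r c1 (c0 * τ) hX0 hN1 hDr hL1 hK1 hNr hr0 (by exact_mod_cast hc1) h1 h2 h3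
  have hPT : PT N (j+1) (((c1 * D ^ (j+1) : ℕ) : ℝ) * β) ≤ (j + 22) * ((K:ℝ) ^ j * (1 + Real.log r) * (D:ℝ) ^ (j+2) * (c0 * τ)) := by
    refine le_trans ?_ halg
    unfold PT
    simp only [Nat.add_sub_cancel]
    apply div_le_div_of_nonneg_right _ (by positivity)
    refine hmain.trans (le_of_eq ?_)
    push_cast
    ring
  refine hPT.trans ?_
  have hLb : 1 + Real.log r ≤ CL * X ^ (1/16 : ℝ) := by
    have h4 : (r:ℝ) ≤ c0 * X ^ (j+1) := by
      rw [div_le_iff₀ (by positivity)] at h3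
      refine h3.trans ?_
      have : c0 * τ ≤ c0 := mul_le_of_le_one_right (by linarith) hτ1
      gcongr
    have h5 : Real.log r ≤ Real.log c0 + (j+1) * Real.log X := by
      have := Real.log_le_log hr0 h4
      rw [Real.log_mul (by positivity) (by positivity), Real.log_pow] at this
      push_cast at this
      exact this
    have h6 : Real.log X ≤ X ^ (1/16 : ℝ) / (1/16 : ℝ) := Real.log_le_rpow_div hX0.le (by norm_num)
    have h7 : 1 ≤ X ^ (1/16 : ℝ) := Real.one_le_rpow hX1 (by norm_num)
    calc 1 + Real.log r ≤ (1 + Real.log c0) * 1 + (j+1) * (X ^ (1/16 : ℝ) / (1/16 : ℝ)) := by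
          have : ((j:ℝ)+1) * Real.log X ≤ (j+1) * (X ^ (1/16 : ℝ) / (1/16 : ℝ)) := by gcongr
          linarith
      _ ≤ (1 + Real.log c0) * X ^ (1/16 : ℝ) + (j+1) * (X ^ (1/16 : ℝ) / (1/16 : ℝ)) := by gcongr
      _ = _ := by rw [hCL]; ring
  have hDb : (D:ℝ) ^ (j+2) ≤ (Q:ℝ) ^ (j+2) * X ^ (1/16 : ℝ) := by
    rw [hD]; push_cast
    rw [mul_pow]
    gcongr
    calc (d:ℝ) ^ (j+2) ≤ (X ^ (1 / (16 * (((j+1 : ℕ):ℝ) + 1)))) ^ (j+2) := by gcongr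
      _ = X ^ (1/16:ℝ) := by
        rw [← Real.rpow_natCast, ← Real.rpow_mul hX0.le]
        congr 1
        push_cast
        field_simp
        ring
  have hKb : (K:ℝ) ^ j ≤ C1 ^ j * (2 * Q) * X ^ (1/16 : ℝ) := by
    calc (K:ℝ) ^ j ≤ Kr ^ j := by gcongr
      _ = C1 ^ j * (2 * Q * X) ^ (1/16:ℝ) := by
        rw [hKr, mul_pow, ← Real.rpow_natCast ((2 * Q * X) ^ _), ← Real.rpow_mul (by positivity)]
        congr 2
        rw [hε]; field_simp
      _ = C1 ^ j * ((2 * Q) ^ (1/16:ℝ) * X ^ (1/16:ℝ)) := by rw [Real.mul_rpow (by positivity) hX0.le]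
      _ ≤ C1 ^ j * ((2 * Q) * X ^ (1/16:ℝ)) := by
        gcongr
        conv_rhs => rw [← Real.rpow_one (2 * (Q:ℝ))]
        apply Real.rpow_le_rpow_of_exponent_le (by linarith) (by norm_num)
      _ = _ := by ring
  calc _ ≤ (j + 22) * ((C1 ^ j * (2 * Q) * X ^ (1/16 : ℝ)) * (CL * X ^ (1/16 : ℝ)) * ((Q:ℝ) ^ (j+2) * X ^ (1/16 : ℝ)) * (c0 * τ)) := by
        gcongr
    _ = (j + 22) * (C1 ^ j * (2 * Q) * CL * (Q:ℝ) ^ (j + 2) * c0) * (X ^ (1/16 : ℝ) * X ^ (1/16 : ℝ) * X ^ (1/16 : ℝ)) * τ := by ring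
    _ ≤ _ := by
        rw [← Real.rpow_add hX0, ← Real.rpow_add hX0]
        gcongr
        norm_num

lemma PT_nonneg (N k : ℕ) (ξ : ℝ) : 0 ≤ PT N k ξ := by
  unfold PT
  apply div_nonneg _ (by positivity)
  apply TT_nonneg
  intro m
  exact GG_nonneg (Nat.cast_nonneg N) _

lemma expsum_PT (k : ℕ) (hk : 1 ≤ k) (g : Polynomial ℤ) (hg : g.natDegree = k) (D N : ℕ) (hN : 1 ≤ N) (hD : 1 ≤ D)
    (t : ℕ) (u v : ℤ) (huv : v - u ≤ N) (α : ℝ) :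
    ‖∑ m ∈ Finset.Ico u v, e (((g.eval ((t:ℤ) + (D : ℤ) * m) : ℤ) : ℝ) * α)‖ ≤
      2 * N * (PT N k (k.factorial * (α * (g.leadingCoeff * (D:ℝ) ^ k)))) ^ (((2 ^ (k - 1) : ℕ) : ℝ)⁻¹) := by
  obtain ⟨j, rfl⟩ : ∃ j, k = j + 1 := ⟨k - 1, by omega⟩
  simp only [Nat.add_sub_cancel]
  have hD0 : (D:ℝ) ≠ 0 := by
    have : (0:ℝ) < D := by exact_mod_cast hD
    exact this.ne'
  set h : Polynomial ℝ := Polynomial.C (D:ℝ) * Polynomial.X + Polynomial.C (t:ℝ) with hh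
  set φ : Polynomial ℝ := Polynomial.C α * (g.map (Int.castRingHom ℝ)).comp h with hφ
  have hgdeg : (g.map (Int.castRingHom ℝ)).natDegree = j + 1 := by
    rw [Polynomial.natDegree_map_eq_of_injective (RingHom.injective_int _), hg]
  have hhdeg : h.natDegree = 1 := Polynomial.natDegree_linear hD0
  have hhl : h.leadingCoeff = D := Polynomial.leadingCoeff_linear hD0
  have hdeg : φ.natDegree ≤ j + 1 := by
    refine (Polynomial.natDegree_C_mul_le _ _).trans ?_
    rw [Polynomial.natDegree_comp, hgdeg, hhdeg, mul_one]
  have hcoeff : φ.coeff (j+1) = α * (g.leadingCoeff * (D:ℝ) ^ (j+1)) := by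
    rw [hφ, Polynomial.coeff_C_mul]
    congr 1
    have h1 := Polynomial.coeff_comp_degree_mul_degree (p := g.map (Int.castRingHom ℝ)) (q := h) (by rw [hhdeg]; norm_num)
    rw [hgdeg, hhdeg, mul_one, hhl] at h1
    rw [h1, Polynomial.leadingCoeff_map_of_injective (RingHom.injective_int _)]
    simp
  have heval : ∀ m : ℤ, φ.eval (m:ℝ) = ((g.eval ((t:ℤ) + (D : ℤ) * m) : ℤ) : ℝ) * α := by
    intro m
    rw [hφ, Polynomial.eval_mul, Polynomial.eval_C, Polynomial.eval_comp, mul_comm]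
    congr 1
    have h2 : h.eval (m:ℝ) = Int.castRingHom ℝ ((t:ℤ) + (D : ℤ) * m) := by
      rw [hh]; simp; ring
    rw [h2, Polynomial.eval_map, Polynomial.eval₂_hom]
    simp
  have hw := weyl N hN j φ hdeg u v huv
  simp only [heval, hcoeff] at hw
  set S := ‖∑ m ∈ Finset.Ico u v, e (((g.eval ((t:ℤ) + (D : ℤ) * m) : ℤ) : ℝ) * α)‖ with hS
  set ξ := ((j+1).factorial * (α * (g.leadingCoeff * (D:ℝ) ^ (j+1))) : ℝ) with hξ
  have hN0 : (0:ℝ) < N := by exact_mod_cast hN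
  have hS0 : 0 ≤ S := norm_nonneg _
  have h3 : S ^ (2 ^ j) ≤ (2 * N : ℝ) ^ (2 ^ j) * PT N (j+1) ξ := by
    unfold PT
    simp only [Nat.add_sub_cancel]
    rw [mul_div_assoc', le_div_iff₀ (by positivity), mul_comm]
    exact hw
  have hn0 : (2 ^ j : ℕ) ≠ 0 := by positivity
  have hP0 := PT_nonneg N (j+1) ξ
  calc S = (S ^ (2 ^ j)) ^ (((2 ^ j : ℕ) : ℝ)⁻¹) := (Real.pow_rpow_inv_natCast hS0 hn0).symm
    _ ≤ ((2 * N : ℝ) ^ (2 ^ j) * PT N (j+1) ξ) ^ (((2 ^ j : ℕ) : ℝ)⁻¹) := by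
        apply Real.rpow_le_rpow (by positivity) h3 (by positivity)
    _ = _ := by
        rw [Real.mul_rpow (by positivity) hP0, Real.pow_rpow_inv_natCast (by positivity) hn0]

lemma gcd_bound (r Q d k : ℕ) (hr : 1 ≤ r) (hQ : 1 ≤ Q) : Nat.gcd r ((Q * d) ^ k) ≤ Q ^ k * (Nat.gcd r d) ^ k := by
  rw [mul_pow]
  have hg : 0 < Nat.gcd r d := Nat.gcd_pos_of_pos_left _ hr
  have h1 : Nat.gcd r (Q ^ k * d ^ k) ∣ Q ^ k * (Nat.gcd r d) ^ k := by
    refine (Nat.gcd_mul_right_dvd_mul_gcd r (Q ^ k) (d ^ k)).trans ?_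
    apply mul_dvd_mul (Nat.gcd_dvd_right _ _)
    exact gcd_pow_right_dvd_pow_gcd (a := r) (b := d) (k := k)
  exact Nat.le_of_dvd (by positivity) h1

set_option maxHeartbeats 1600000 in
lemma caseS (k : ℕ) (hk : 1 ≤ k) (c0 : ℝ) (hc0 : 1 ≤ c0) : ∃ C : ℝ, 1 ≤ C ∧ ∀ X : ℝ, 2 ≤ X → ∀ d : ℕ, 1 ≤ d →
    (d:ℝ) ≤ X ^ (1 / (16 * ((k:ℝ) + 1))) →
    ∀ (β : ℝ) (b : ℤ) (r : ℕ), 1 ≤ r → IsCoprime b (r:ℤ) → (r:ℝ) ≤ c0 * X ^ (1/2:ℝ) →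
    2 * ((⌊X⌋₊ / (k.factorial ^ 2 * d) + 1 : ℕ) : ℝ) ^ (k - 1) * (((k.factorial ^ 2 * d) ^ k : ℕ) : ℝ) * |β - b / r| ≤ 1 / r →
    PT (⌊X⌋₊ / (k.factorial ^ 2 * d) + 1) k ((((k.factorial ^ 2 * d) ^ k : ℕ) : ℝ) * β) ≤
      C * X ^ (-(1 / 4) : ℝ) + C * ((Nat.gcd r d : ℝ) ^ k / (r * max 1 (X ^ k * |β - b / r|))) ^ (3 / 4 : ℝ) := by
  obtain ⟨j, rfl⟩ : ∃ j, k = j + 1 := ⟨k - 1, by omega⟩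
  simp only [Nat.add_sub_cancel]
  set Q := (j+1).factorial ^ 2 with hQd
  have hQ : 1 ≤ Q := Nat.one_le_pow _ _ (Nat.factorial_pos _)
  have hQ1 : (1:ℝ) ≤ Q := by exact_mod_cast hQ
  set ε : ℝ := 1 / (4 * ((j:ℝ) + 1)) with hε
  obtain ⟨C2, hC2, hdiv⟩ := divisor_bound ε (by positivity)
  have hCA : 1 ≤ (j + 4) * c0 * Q := by
    have : (0:ℝ) ≤ j := Nat.cast_nonneg j
    apply one_le_mul_of_one_le_of_one_le (one_le_mul_of_one_le_of_one_le (by linarith) hc0) hQ1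
  have hCB : 1 ≤ (4 * C2) ^ j * (Q:ℝ) ^ (j+1) :=
    one_le_mul_of_one_le_of_one_le (one_le_pow₀ (by linarith)) (one_le_pow₀ hQ1)
  refine ⟨(j + 4) * c0 * Q + (4 * C2) ^ j * (Q:ℝ) ^ (j+1), by linarith, ?_⟩
  intro X hX d hd hdX β b r hr hbr hrX hη
  have hX0 : 0 < X := by linarith
  have hX1 : 1 ≤ X := by linarith
  have hdX16 : (d:ℝ) ≤ X ^ (1/16:ℝ) := by
    refine hdX.trans ?_
    apply Real.rpow_le_rpow_of_exponent_le hX1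
    apply one_div_le_one_div_of_le (by norm_num)
    push_cast
    have : (0:ℝ) ≤ j := Nat.cast_nonneg j
    linarith
  have hdX' : (d:ℝ) ≤ X := by
    refine hdX16.trans ?_
    conv_rhs => rw [← Real.rpow_one X]
    apply Real.rpow_le_rpow_of_exponent_le hX1
    norm_num
  obtain ⟨hN1, hN2⟩ := N_bounds X hX1 Q d hQ hd hdX'
  set D := Q * d with hD
  set N := ⌊X⌋₊ / D + 1 with hN
  have hNn : 1 ≤ N := Nat.le_add_left 1 _
  have hN0 : (0:ℝ) < N := by exact_mod_cast hNn
  have hDn : 1 ≤ D := Nat.mul_pos hQ hd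
  have hD0 : (0:ℝ) < D := by exact_mod_cast hDn
  have hr0 : (0:ℝ) < r := by exact_mod_cast hr
  have hr1' : (1:ℝ) ≤ r := by exact_mod_cast hr
  set η := |β - b / r| with hηd
  have hη0 : 0 ≤ η := abs_nonneg _
  set c := D ^ (j+1) with hc
  have hcn : 1 ≤ c := Nat.pow_pos hDn
  have hgpos : 0 < Nat.gcd r c := Nat.gcd_pos_of_pos_left _ hr
  set r1 := r / Nat.gcd r c with hr1
  have hr1n : 1 ≤ r1 := Nat.div_pos (Nat.le_of_dvd hr (Nat.gcd_dvd_left _ _)) hgpos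
  have hr10 : (0:ℝ) < r1 := by exact_mod_cast hr1n
  have hr11 : (1:ℝ) ≤ r1 := by exact_mod_cast hr1n
  set V := max 1 (X ^ (j+1) * η) with hV
  have hV1 : 1 ≤ V := le_max_left _ _
  have hV0 : 0 < V := by linarith
  -- third term
  have hτ : (r1.divisors.card : ℝ) ^ j ≤ C2 ^ j * (r1:ℝ) ^ (1/4:ℝ) := by
    calc (r1.divisors.card : ℝ) ^ j ≤ (C2 * (r1:ℝ) ^ ε) ^ j := by
          gcongr; exact hdiv r1 hr1n
      _ = C2 ^ j * (r1:ℝ) ^ (ε * j) := by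
          rw [mul_pow, ← Real.rpow_natCast ((r1:ℝ) ^ ε), ← Real.rpow_mul hr10.le]
      _ ≤ _ := by
          gcongr
          rw [hε, div_mul_eq_mul_div, div_le_div_iff₀ (by positivity) (by norm_num)]
          nlinarith
  have hfinal3 : (4:ℝ) ^ j * (r1.divisors.card : ℝ) ^ j / r1 * V ^ (-(3/4) : ℝ) ≤
      ((4 * C2) ^ j * (Q:ℝ) ^ (j+1)) * ((Nat.gcd r d : ℝ) ^ (j+1) / (r * V)) ^ (3 / 4 : ℝ) := by
    have h1 : (r1:ℝ) ^ (1/4:ℝ) / r1 = (r1:ℝ) ^ (-(3/4):ℝ) := by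
      rw [← Real.rpow_sub_one hr10.ne']; norm_num
    have h2 : (1:ℝ) / (r1 * V) ≤ (Q:ℝ) ^ (j+1) * ((Nat.gcd r d : ℝ) ^ (j+1) / (r * V)) := by
      have h3 : (r:ℝ) = r1 * (Nat.gcd r c : ℕ) := by
        have := Nat.div_mul_cancel (Nat.gcd_dvd_left r c)
        rw [hr1]; exact_mod_cast this.symm
      have h4 : ((Nat.gcd r c : ℕ) : ℝ) ≤ (Q:ℝ) ^ (j+1) * (Nat.gcd r d : ℝ) ^ (j+1) := by
        exact_mod_cast gcd_bound r Q d (j+1) hr hQ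
      rw [mul_div_assoc', div_le_div_iff₀ (by positivity) (by positivity), one_mul]
      calc (r:ℝ) * V = (Nat.gcd r c : ℕ) * (r1 * V) := by rw [h3]; ring
        _ ≤ _ := by gcongr
    calc _ ≤ (4:ℝ) ^ j * (C2 ^ j * (r1:ℝ) ^ (1/4:ℝ)) / r1 * V ^ (-(3/4) : ℝ) := by gcongr
      _ = (4 * C2) ^ j * ((1:ℝ) / (r1 * V)) ^ (3/4:ℝ) := by
          rw [mul_pow, one_div ((r1:ℝ) * V), Real.inv_rpow (by positivity), Real.mul_rpow hr10.le hV0.le, mul_inv,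
            ← Real.rpow_neg hr10.le, ← Real.rpow_neg hV0.le, ← h1]
          ring
      _ ≤ (4 * C2) ^ j * ((Q:ℝ) ^ (j+1) * ((Nat.gcd r d : ℝ) ^ (j+1) / (r * V))) ^ (3/4:ℝ) := by gcongr
      _ = (4 * C2) ^ j * (((Q:ℝ) ^ (j+1)) ^ (3/4:ℝ) * ((Nat.gcd r d : ℝ) ^ (j+1) / (r * V)) ^ (3/4:ℝ)) := by
          rw [Real.mul_rpow (by positivity) (by positivity)]
      _ ≤ (4 * C2) ^ j * (((Q:ℝ) ^ (j+1)) * ((Nat.gcd r d : ℝ) ^ (j+1) / (r * V)) ^ (3/4:ℝ)) := by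
          gcongr
          conv_rhs => rw [← Real.rpow_one ((Q:ℝ) ^ (j+1))]
          apply Real.rpow_le_rpow_of_exponent_le (one_le_pow₀ hQ1) (by norm_num)
      _ = _ := by ring
  have hfinal1 : ((j:ℝ) * (2 * N) ^ j + 4 * r * (2 * N) ^ j) / (2 * N) ^ (j+1) ≤ (j + 4) * c0 * Q * X ^ (-(1 / 4) : ℝ) := by
    have h1 : ((j:ℝ) * (2 * N) ^ j + 4 * r * (2 * N) ^ j) / (2 * N) ^ (j+1) = (j + 4 * r) / 2 * (1 / N) := by
      rw [pow_succ]; field_simp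
    have hinv : (1:ℝ) / N ≤ D / X := by
      rw [div_le_div_iff₀ hN0 hX0]; linarith
    rw [h1]
    have hj0 : (0:ℝ) ≤ j := Nat.cast_nonneg j
    calc ((j:ℝ) + 4 * r) / 2 * (1 / N) ≤ ((j + 4) * r) * (D / X) := by
          gcongr
          nlinarith
      _ ≤ ((j + 4) * (c0 * X ^ (1/2:ℝ))) * ((Q * X ^ (1/16:ℝ)) / X) := by
          rw [hD]; push_cast
          gcongr
      _ = (j + 4) * c0 * Q * ((X ^ (1/2:ℝ) * X ^ (1/16:ℝ)) / X) := by ring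
      _ ≤ _ := by
          rw [← Real.rpow_add hX0, ← Real.rpow_sub_one hX0.ne']
          gcongr
          norm_num
  have hthird : ∃ s : ℝ, 0 ≤ s ∧ s < 1 ∧ (s = 0 ∨ 0 < η) ∧
      (2 * N * (N * c * η) ^ (-s) * ((2 / (1 - s)) ^ j *
        (r1.divisors.card : ℝ) ^ j * ((N:ℝ) ^ (1 - s)) ^ j / r1)) / (2 * N) ^ (j+1) ≤
      (4:ℝ) ^ j * (r1.divisors.card : ℝ) ^ j / r1 * V ^ (-(3/4) : ℝ) := by
    rcases lt_or_ge (X ^ (j+1) * η) 1 with hlt | hge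
    · refine ⟨0, le_rfl, by norm_num, Or.inl rfl, ?_⟩
      have hVe : V = 1 := max_eq_left hlt.le
      rw [hVe]
      simp only [neg_zero, Real.rpow_zero, sub_zero, Real.rpow_one, Real.one_rpow, div_one, mul_one]
      have h1 : 2 * (N:ℝ) * ((2:ℝ) ^ j * (r1.divisors.card : ℝ) ^ j * (N:ℝ) ^ j / r1) / (2 * N) ^ (j+1) =
          1 * (r1.divisors.card : ℝ) ^ j / r1 := by
        rw [pow_succ, mul_pow]; field_simp
      rw [h1]
      gcongr
      exact one_le_pow₀ (by norm_num)
    · have hηpos : 0 < η := by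
        by_contra h
        have : η = 0 := le_antisymm (not_lt.mp h) hη0
        rw [this] at hge; norm_num at hge
      refine ⟨3/4, by norm_num, by norm_num, Or.inr hηpos, ?_⟩
      have hVe : V = X ^ (j+1) * η := max_eq_right hge
      have hc0' : (0:ℝ) < c := by exact_mod_cast hcn
      have h1 : ((N:ℝ) ^ (1 - 3/4:ℝ)) ^ j = (N:ℝ) ^ j * ((N:ℝ) ^ j) ^ (-(3/4):ℝ) := by
        rw [← Real.rpow_natCast ((N:ℝ) ^ (1 - 3/4:ℝ)), ← Real.rpow_natCast (N:ℝ) j, ← Real.rpow_mul hN0.le, ← Real.rpow_mul hN0.le,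
          ← Real.rpow_add hN0]
        congr 1; ring
      have h2 : V ≤ (N * c * η) * (N:ℝ) ^ j := by
        rw [hVe, hc]; push_cast
        calc X ^ (j+1) * η ≤ (N * D) ^ (j+1) * η := by gcongr
          _ = _ := by ring
      have h3 : (N * c * η) ^ (-(3/4):ℝ) * ((N:ℝ) ^ j) ^ (-(3/4):ℝ) ≤ V ^ (-(3/4) : ℝ) := by
        rw [← Real.mul_rpow (by positivity) (by positivity)]
        exact Real.rpow_le_rpow_of_nonpos hV0 h2 (by norm_num)
      have h4 : (2:ℝ) / (1 - 3/4) = 2 * 4 := by norm_num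
      rw [h1, h4]
      calc _ = (4:ℝ) ^ j * (r1.divisors.card : ℝ) ^ j / r1 * ((N * c * η) ^ (-(3/4):ℝ) * ((N:ℝ) ^ j) ^ (-(3/4):ℝ)) := by
            rw [mul_pow 2 4, pow_succ, mul_pow 2 (N:ℝ)]
            field_simp
        _ ≤ _ := by gcongr
  obtain ⟨s, hs0, hs1, hsη, hs⟩ := hthird
  have hmain := weylS N hNn j β b r hr hbr c hcn s hs0 hs1 hsη hη
  have hPT : PT N (j+1) ((c:ℝ) * β) ≤ ((j:ℝ) * (2 * N) ^ j + 4 * r * (2 * N) ^ j) / (2 * N) ^ (j+1) +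
      (2 * N * (N * c * η) ^ (-s) * ((2 / (1 - s)) ^ j *
        (r1.divisors.card : ℝ) ^ j * ((N:ℝ) ^ (1 - s)) ^ j / r1)) / (2 * N) ^ (j+1) := by
    rw [← add_div]
    unfold PT
    simp only [Nat.add_sub_cancel]
    apply div_le_div_of_nonneg_right hmain (by positivity)
  calc _ ≤ _ := hPT
    _ ≤ (j + 4) * c0 * Q * X ^ (-(1 / 4) : ℝ) + ((4 * C2) ^ j * (Q:ℝ) ^ (j+1)) * ((Nat.gcd r d : ℝ) ^ (j+1) / (r * V)) ^ (3 / 4 : ℝ) :=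
        add_le_add hfinal1 (hs.trans hfinal3)
    _ ≤ _ := by
        gcongr <;> linarith

lemma lower_bd (A q r F a : ℕ) (b : ℤ) (α W ρ : ℝ) (hF : 1 ≤ F) (hA : 1 ≤ A) (hq : 1 ≤ q) (hr : 1 ≤ r)
    (haq : Nat.gcd a q = 1) (hα : |α - (a:ℝ) / q| < 1 / (q:ℝ) ^ 2) (hW : 0 < W)
    (h1 : (A:ℝ) / q ≤ ρ) (h2 : (q:ℝ) / W ≤ ρ) :
    1 ≤ 2 * F * ρ * (r * max 1 (W * |F * A * α - b / r|)) := by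
  have hq0 : (0:ℝ) < q := by exact_mod_cast hq
  have hr0 : (0:ℝ) < r := by exact_mod_cast hr
  have hA0 : (0:ℝ) < A := by exact_mod_cast hA
  have hF1 : (1:ℝ) ≤ F := by exact_mod_cast hF
  set η := |F * A * α - b / r| with hη
  have hη0 : 0 ≤ η := abs_nonneg _
  set M := max 1 (W * η) with hM
  have hM1 : 1 ≤ M := le_max_left _ _
  have hM2 : W * η ≤ M := le_max_right _ _
  have hρ : 0 < ρ := lt_of_lt_of_le (by positivity) h1
  have key : 1 ≤ r * q * η + r * F * (A / q) := by
    by_cases hz : b * q = F * A * a * r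
    · have hd : (q:ℤ) ∣ (a:ℤ) * (F * A * r) := ⟨b, by linarith⟩
      have hd2 : q ∣ a * (F * A * r) := by exact_mod_cast hd
      have hd3 : q ∣ F * A * r := (Nat.Coprime.symm haq).dvd_of_dvd_mul_left hd2
      have hle : q ≤ F * A * r := Nat.le_of_dvd (by positivity) hd3
      have hle' : (q:ℝ) ≤ F * A * r := by exact_mod_cast hle
      have : (1:ℝ) ≤ r * F * (A / q) := by
        rw [mul_div_assoc', le_div_iff₀ hq0]; linarith
      have : 0 ≤ r * q * η := by positivity
      linarith
    · have hz1 : (1:ℝ) ≤ |(b:ℝ) * q - F * A * a * r| := by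
        have : (1:ℤ) ≤ |b * q - F * A * a * r| := Int.one_le_abs (sub_ne_zero.mpr hz)
        exact_mod_cast this
      have he : (b:ℝ) * q - F * A * a * r = r * q * (F * A * (α - a / q) - (F * A * α - b / r)) := by
        field_simp; ring
      have h3 : |F * A * (α - a / q) - (F * A * α - b / r)| ≤ F * A * (1 / (q:ℝ)^2) + η := by
        refine (abs_sub _ _).trans ?_
        rw [abs_mul, abs_of_pos (by positivity : (0:ℝ) < F * A)]
        gcongr
      rw [he, abs_mul, abs_of_pos (by positivity : (0:ℝ) < r * q)] at hz1
      calc (1:ℝ) ≤ _ := hz1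
        _ ≤ r * q * (F * A * (1 / (q:ℝ)^2) + η) := by gcongr
        _ = _ := by field_simp; ring
  have hqW : (q:ℝ) ≤ ρ * W := by rwa [div_le_iff₀ hW] at h2
  calc (1:ℝ) ≤ _ := key
    _ ≤ r * (ρ * W) * η + r * F * ρ := by gcongr
    _ = r * ρ * (W * η) + r * F * ρ * 1 := by ring
    _ ≤ F * (r * ρ) * M + r * F * ρ * M := by
        have : r * ρ * (W * η) ≤ F * (r * ρ) * M := by
          calc r * ρ * (W * η) ≤ 1 * (r * ρ) * M := by rw [one_mul]; gcongr
            _ ≤ _ := by gcongr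
        gcongr
    _ = _ := by ring

set_option maxHeartbeats 1600000 in
lemma unified (k : ℕ) (hk : 1 ≤ k) : ∃ C : ℝ, 1 ≤ C ∧ ∀ X Z : ℝ, 2 ≤ X → 2 ≤ Z →
    ∀ A a q : ℕ, 1 ≤ A → 1 ≤ q → Nat.gcd a q = 1 → ∀ α : ℝ, |α - (a:ℝ) / q| < 1 / (q:ℝ) ^ 2 →
    ∀ ρ : ℝ, ρ = (A:ℝ) / q + A * Z / X + q * Z ^ k / X ^ k → ρ ≤ 1 →
    ∃ r : ℕ, 1 ≤ r ∧ ∃ V : ℝ, 1 ≤ V ∧ 1 ≤ C * ρ * (r * V) ∧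
      ∀ d : ℕ, 1 ≤ d → (d:ℝ) ≤ X ^ (1 / (16 * ((k:ℝ) + 1))) →
        PT (⌊X⌋₊ / (k.factorial ^ 2 * d) + 1) k (k.factorial * (α * (A * ((k.factorial ^ 2 * d : ℕ) : ℝ) ^ k))) ≤
          C * ρ ^ (1/2:ℝ) + C * ((Nat.gcd r d : ℝ) ^ k / (r * V)) ^ (3 / 4 : ℝ) := by
  set F := k.factorial with hF
  have hF1 : 1 ≤ F := Nat.factorial_pos k
  have hF1' : (1:ℝ) ≤ F := by exact_mod_cast hF1
  set c0 : ℝ := 4 * (2 * (F:ℝ)^2) ^ k with hc0d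
  have hQ1 : (1:ℝ) ≤ (F:ℝ)^2 := one_le_pow₀ hF1'
  have hP1 : (1:ℝ) ≤ (2 * (F:ℝ)^2) ^ k := one_le_pow₀ (by linarith)
  have hc0 : 1 ≤ c0 := by linarith
  obtain ⟨C3, hC3, hS⟩ := caseS k hk c0 hc0
  obtain ⟨C1, hC1, hL1⟩ : ∃ C : ℝ, 1 ≤ C ∧ (2 ≤ k → ∀ X : ℝ, 2 ≤ X → ∀ d : ℕ, 1 ≤ d →
    (d:ℝ) ≤ X ^ (1 / (16 * ((k:ℝ) + 1))) → ∀ τ : ℝ, 0 < τ → τ ≤ 1 →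
    ∀ (β : ℝ) (b : ℤ) (r c1 : ℕ), 1 ≤ r → IsCoprime b (r:ℤ) → |β - b / r| ≤ 1 / (r:ℝ) ^ 2 → 1 ≤ c1 →
    (c1:ℝ) / r ≤ c0 * τ → (c1:ℝ) / X ≤ c0 * τ → (r:ℝ) / X ^ k ≤ c0 * τ →
    PT (⌊X⌋₊ / (k.factorial ^ 2 * d) + 1) k (((c1 * (k.factorial ^ 2 * d) ^ k : ℕ) : ℝ) * β) ≤ C * X ^ (1 / 4 : ℝ) * τ) := by
    by_cases h : 2 ≤ k
    · obtain ⟨C, h1, h2⟩ := caseL k h c0 hc0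
      exact ⟨C, h1, fun _ => h2⟩
    · exact ⟨1, le_rfl, fun h' => absurd h' h⟩
  have hFc0 : (F:ℝ) ≤ c0 := by
    calc (F:ℝ) ≤ (F:ℝ)^2 := le_self_pow₀ hF1' (by norm_num)
      _ ≤ 2 * (F:ℝ)^2 := by linarith
      _ ≤ (2 * (F:ℝ)^2)^k := le_self_pow₀ (by linarith) (by omega)
      _ ≤ c0 := by linarith
  refine ⟨C1 + C3 + 2 * F, by linarith, ?_⟩
  set C := C1 + C3 + 2 * F with hC
  intro X Z hX hZ A a q hA hq haq α hα ρ hρd hρ1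
  have hX0 : 0 < X := by linarith
  have hX1 : 1 ≤ X := by linarith
  have hq0 : (0:ℝ) < q := by exact_mod_cast hq
  have hA0 : (0:ℝ) < A := by exact_mod_cast hA
  have hA1 : (1:ℝ) ≤ A := by exact_mod_cast hA
  have hZ0 : 0 < Z := by linarith
  have hρA : (A:ℝ) / q ≤ ρ := by
    have : 0 ≤ A * Z / X := by positivity
    have : 0 ≤ q * Z ^ k / X ^ k := by positivity
    linarith
  have hρX : (A:ℝ) / X ≤ ρ := by
    have : 0 ≤ (A:ℝ) / q := by positivity
    have : 0 ≤ q * Z ^ k / X ^ k := by positivity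
    have : (A:ℝ) / X ≤ A * Z / X := by
      gcongr
      exact le_mul_of_one_le_right hA0.le (by linarith)
    linarith
  have hρq : (q:ℝ) / X ^ k ≤ ρ := by
    have : 0 ≤ (A:ℝ) / q := by positivity
    have : 0 ≤ A * Z / X := by positivity
    have : (q:ℝ) / X ^ k ≤ q * Z ^ k / X ^ k := by
      gcongr
      have : 1 ≤ Z ^ k := one_le_pow₀ (by linarith)
      exact le_mul_of_one_le_right hq0.le this
    linarith
  have hρ0 : 0 < ρ := lt_of_lt_of_le (by positivity) hρA
  set s : ℝ := X ^ (1/2:ℝ) with hs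
  have hs0 : 0 < s := by positivity
  have hss : s * s = X := by rw [hs, ← Real.rpow_add hX0]; norm_num
  have hs1 : 1 ≤ s := Real.one_le_rpow hX1 (by norm_num)
  have hsX : s ≤ X := by
    rw [← hss]; exact le_mul_of_one_le_left hs0.le hs1
  have hρhalf : ρ = ρ ^ (1/2:ℝ) * ρ ^ (1/2:ℝ) := by rw [← Real.rpow_add hρ0]; norm_num
  have hinvs : (1 / s) = X ^ (-(1/2):ℝ) := by rw [one_div, hs, Real.rpow_neg hX0.le]
  have hinvs4 : (1 / s) ^ (1/2:ℝ) = X ^ (-(1/4):ℝ) := by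
    rw [hinvs, ← Real.rpow_mul hX0.le]; norm_num
  have hX4 : X ^ (1/4:ℝ) * X ^ (-(1/4):ℝ) = 1 := by rw [← Real.rpow_add hX0]; norm_num
  -- the degenerate choice
  have hdeg : (∀ d : ℕ, 1 ≤ d → (d:ℝ) ≤ X ^ (1 / (16 * ((k:ℝ) + 1))) →
        PT (⌊X⌋₊ / (F ^ 2 * d) + 1) k (F * (α * (A * ((F ^ 2 * d : ℕ) : ℝ) ^ k))) ≤ C1 * ρ ^ (1/2:ℝ)) →
      ∃ r : ℕ, 1 ≤ r ∧ ∃ V : ℝ, 1 ≤ V ∧ 1 ≤ C * ρ * (r * V) ∧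
      ∀ d : ℕ, 1 ≤ d → (d:ℝ) ≤ X ^ (1 / (16 * ((k:ℝ) + 1))) →
        PT (⌊X⌋₊ / (F ^ 2 * d) + 1) k (F * (α * (A * ((F ^ 2 * d : ℕ) : ℝ) ^ k))) ≤
          C * ρ ^ (1/2:ℝ) + C * ((Nat.gcd r d : ℝ) ^ k / (r * V)) ^ (3 / 4 : ℝ) := by
    intro h
    refine ⟨1, le_rfl, 1 / ρ, one_le_one_div hρ0 hρ1, ?_, ?_⟩
    · have : C * ρ * (((1:ℕ):ℝ) * (1/ρ)) = C := by push_cast; field_simp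
      rw [this]; linarith
    · intro d hd hdX
      refine (h d hd hdX).trans ?_
      have h1 : C1 * ρ ^ (1/2:ℝ) ≤ C * ρ ^ (1/2:ℝ) := by gcongr; linarith
      have h2 : 0 ≤ C * ((Nat.gcd 1 d : ℝ) ^ k / ((1:ℕ) * (1/ρ))) ^ (3 / 4 : ℝ) := by
        have : 0 ≤ C := by linarith
        positivity
      linarith
  rcases le_or_gt ρ (1 / s) with hcase | hcase
  · apply hdeg
    intro d hd hdX
    have hk2 : 2 ≤ k := by
      by_contra hlt
      have hk1 : k = 1 := by omega
      rw [hk1, pow_one, pow_one] at hρd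
      have h1 : ρ * ρ ≤ 1 / X := by
        calc ρ * ρ ≤ (1/s) * (1/s) := by gcongr
          _ = 1 / X := by rw [← hss]; field_simp
      have h2 : 4 * ((A:ℝ)/q * (q * Z / X)) ≤ ρ * ρ := by
        have hge : (A:ℝ)/q + q * Z / X ≤ ρ := by
          have : 0 ≤ A * Z / X := by positivity
          linarith
        have hp : 0 ≤ (A:ℝ)/q := by positivity
        have hp2 : 0 ≤ q * Z / X := by positivity
        calc 4 * ((A:ℝ)/q * (q * Z / X)) ≤ ((A:ℝ)/q + q * Z / X) * ((A:ℝ)/q + q * Z / X) := by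
              nlinarith [sq_nonneg ((A:ℝ)/q - q * Z / X)]
          _ ≤ _ := by gcongr
      have h3 : (A:ℝ)/q * (q * Z / X) = A * Z * (1 / X) := by field_simp
      have h4 : 1 * (1/X) ≤ A * Z * (1/X) := by gcongr; exact one_le_mul_of_one_le_of_one_le hA1 (by linarith)
      have h5 : 0 < 1 / X := by positivity
      rw [h3] at h2
      linarith
    have hm := hL1 hk2 X hX d hd hdX ρ hρ0 hρ1 α a q (F * A) hq
      (Nat.isCoprime_iff_coprime.mpr haq) (by simpa using hα.le) (Nat.mul_pos hF1 hA)
      (by push_cast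
          calc (F:ℝ) * A / q = F * (A / q) := by ring
            _ ≤ c0 * ρ := by gcongr)
      (by push_cast
          calc (F:ℝ) * A / X = F * (A / X) := by ring
            _ ≤ c0 * ρ := by gcongr)
      (by calc (q:ℝ) / X ^ k = 1 * (q / X ^ k) := by ring
            _ ≤ c0 * ρ := by gcongr)
    have he : (((F * A * (F ^ 2 * d) ^ k : ℕ) : ℝ) * α) = (F * (α * (A * ((F ^ 2 * d : ℕ) : ℝ) ^ k))) := by
      push_cast; ring
    rw [← hF, he] at hm
    refine hm.trans ?_
    have h6 : ρ ^ (1/2:ℝ) ≤ X ^ (-(1/4):ℝ) := by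
      rw [← hinvs4]; exact Real.rpow_le_rpow hρ0.le hcase (by norm_num)
    calc C1 * X ^ (1/4:ℝ) * ρ = C1 * (X ^ (1/4:ℝ) * ρ ^ (1/2:ℝ)) * ρ ^ (1/2:ℝ) := by
          rw [mul_assoc, mul_assoc, mul_assoc, ← hρhalf]
      _ ≤ C1 * (X ^ (1/4:ℝ) * X ^ (-(1/4):ℝ)) * ρ ^ (1/2:ℝ) := by gcongr
      _ = _ := by rw [hX4, mul_one]
  · have h6 : X ^ (-(1/4):ℝ) ≤ ρ ^ (1/2:ℝ) := by
      rw [← hinvs4]; exact Real.rpow_le_rpow (by positivity) hcase.le (by norm_num)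
    set T : ℝ := 2 * (2 * (F:ℝ)^2) ^ k * (X ^ (k-1) * s) with hT
    have hXs : 1 ≤ X ^ (k-1) * s := one_le_mul_of_one_le_of_one_le (one_le_pow₀ hX1) hs1
    have hT1 : 1 ≤ T := by rw [hT]; exact one_le_mul_of_one_le_of_one_le (by linarith) hXs
    set R := ⌈T⌉₊ with hR
    have hTR : T ≤ R := Nat.le_ceil T
    have hRT : (R:ℝ) ≤ c0 * (X ^ (k-1) * s) := by
      have := (Nat.ceil_lt_add_one (by linarith : 0 ≤ T)).le
      calc (R:ℝ) ≤ T + 1 := this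
        _ ≤ 2 * T := by linarith
        _ = _ := by rw [hT, hc0d]; ring
    have hRpos : 0 < R := Nat.ceil_pos.mpr (by linarith)
    set β : ℝ := F * A * α with hβ
    obtain ⟨w, hw1, hw2⟩ := Real.exists_rat_abs_sub_le_and_den_le β hRpos
    obtain ⟨b, r, hr, hbr, hw⟩ : ∃ (b : ℤ) (r : ℕ), 1 ≤ r ∧ IsCoprime b (r:ℤ) ∧ (w:ℝ) = b / r ∧ r = w.den := by
      refine ⟨w.num, w.den, w.pos, ?_, Rat.cast_def w, rfl⟩
      rw [Int.isCoprime_iff_gcd_eq_one]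
      exact w.reduced
    obtain ⟨hw, hwr⟩ := hw
    rw [hw, ← hwr] at hw1
    rw [← hwr] at hw2
    have hr0 : (0:ℝ) < r := by exact_mod_cast hr
    have hw2' : (r:ℝ) ≤ R := by exact_mod_cast hw2
    have heξ : ∀ d : ℕ, (((1 * (F ^ 2 * d) ^ k : ℕ) : ℝ) * β) = (F * (α * (A * ((F ^ 2 * d : ℕ) : ℝ) ^ k))) := by
      intro d
      rw [hβ]; push_cast; ring
    rcases le_or_gt (r:ℝ) (c0 * s) with hrs | hrs
    · refine ⟨r, hr, max 1 (X ^ k * |β - b / r|), le_max_left _ _, ?_, ?_⟩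
      · have := lower_bd A q r F a b α (X^k) ρ hF1 hA hq hr haq hα (by positivity) hρA hρq
        refine this.trans ?_
        gcongr
        linarith
      · intro d hd hdX
        have hdX16 : (d:ℝ) ≤ s := by
          refine hdX.trans ?_
          apply Real.rpow_le_rpow_of_exponent_le hX1
          apply one_div_le_one_div_of_le (by norm_num)
          have : (0:ℝ) ≤ k := Nat.cast_nonneg k
          linarith
        have hdX' : (d:ℝ) ≤ X := hdX16.trans hsX
        obtain ⟨hN1, hN2⟩ := N_bounds X hX1 (F^2) d (Nat.one_le_pow _ _ hF1) hd hdX'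
        have hm := hS X hX d hd hdX β b r hr hbr hrs (by
          rw [← hF]
          set N := ⌊X⌋₊ / (F^2 * d) + 1 with hN
          have hND : 2 * (N:ℝ) ^ (k-1) * (((F^2*d)^k : ℕ):ℝ) ≤ R := by
            refine le_trans ?_ hTR
            obtain ⟨j, hj⟩ : ∃ j, k = j + 1 := ⟨k - 1, by omega⟩
            push_cast at hN2
            rw [hT, hj, Nat.add_sub_cancel]
            push_cast
            calc 2 * (N:ℝ)^j * ((F:ℝ)^2 * d)^(j+1) = 2 * (N * ((F:ℝ)^2 * d)) ^ j * ((F:ℝ)^2 * d) := by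
                  rw [pow_succ, mul_pow (N:ℝ)]; ring
              _ ≤ 2 * (2 * (F:ℝ)^2 * X)^j * ((2 * (F:ℝ)^2) * s) := by
                  gcongr
                  linarith
              _ = _ := by rw [mul_pow _ X, pow_succ]; ring
          calc _ ≤ (R:ℝ) * |β - b / r| := by gcongr
            _ ≤ R * (1 / ((R + 1) * r)) := by gcongr
            _ = (R / (R+1)) * (1 / r) := by field_simp
            _ ≤ 1 * (1/r) := by
                gcongr
                rw [div_le_one (by positivity)]; linarith
            _ = _ := one_mul _)
        have := heξ d
        rw [one_mul] at this
        rw [← hF, this] at hm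
        refine hm.trans ?_
        have hCC : C3 ≤ C := by linarith
        have hC0 : 0 ≤ C := by linarith
        gcongr
    · apply hdeg
      intro d hd hdX
      have hk2 : 2 ≤ k := by
        by_contra hlt
        have hk1 : k = 1 := by omega
        rw [hk1] at hRT
        simp only [Nat.sub_self, pow_zero, one_mul] at hRT
        linarith
      have h1s : s ≤ r := (le_mul_of_one_le_left hs0.le hc0).trans hrs.le
      have h1X : 1 / X ≤ 1 / s := one_div_le_one_div_of_le hs0 hsX
      have hm := hL1 hk2 X hX d hd hdX (1/s) (by positivity) (by rw [div_le_one hs0]; exact hs1) β b r 1 hr hbr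
        (by refine hw1.trans ?_
            apply one_div_le_one_div_of_le (by positivity)
            rw [pow_two]; gcongr; linarith) le_rfl
        (by push_cast
            calc 1 / (r:ℝ) ≤ 1 * (1 / s) := by rw [one_mul]; exact one_div_le_one_div_of_le hs0 h1s
              _ ≤ _ := by gcongr)
        (by push_cast
            calc 1 / X ≤ 1 * (1 / s) := by rw [one_mul]; exact h1X
              _ ≤ _ := by gcongr)
        (by calc (r:ℝ) / X ^ k ≤ c0 * (X ^ (k-1) * s) / X ^ k := by gcongr; linarith
              _ = c0 * (1/s) := by
                  obtain ⟨j, hj⟩ : ∃ j, k = j + 1 := ⟨k - 1, by omega⟩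
                  rw [hj, Nat.add_sub_cancel, pow_succ, ← hss]
                  field_simp)
      rw [← hF, heξ d] at hm
      refine hm.trans ?_
      have h7 : X ^ (1/4:ℝ) * (1/s) = X ^ (-(1/4):ℝ) := by
        rw [hinvs, ← Real.rpow_add hX0]; norm_num
      rw [mul_assoc, h7]
      gcongr

lemma two_pow_omega (r : ℕ) (hr : 1 ≤ r) : 2 ^ r.primeFactors.card ≤ r.divisors.card := by
  rw [Nat.card_divisors (by omega), ← Finset.prod_const]
  apply Finset.prod_le_prod' 
  intro p hp
  have := (Nat.prime_of_mem_primeFactors hp).factorization_pos_of_dvd (by omega) (Nat.dvd_of_mem_primeFactors hp)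
  omega

lemma gcd_prod_le (r : ℕ) (hr : 1 ≤ r) (S : Finset ℕ) : Nat.gcd r (∏ p ∈ S, p) ≤ ∏ p ∈ S, Nat.gcd r p := by
  induction S using Finset.induction_on with
  | empty => simp
  | insert p S hp ih =>
    rw [Finset.prod_insert hp, Finset.prod_insert hp]
    have h1 : 0 < Nat.gcd r p := Nat.gcd_pos_of_pos_left _ hr
    have h2 : 0 < Nat.gcd r (∏ p ∈ S, p) := Nat.gcd_pos_of_pos_left _ hr
    exact (Nat.le_of_dvd (by positivity) (Nat.gcd_mul_right_dvd_mul_gcd r p _)).trans (Nat.mul_le_mul_left _ ih)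

lemma gcdsum (k : ℕ) (hk : 1 ≤ k) (θ : ℝ) (hθ : 0 < θ) : ∃ C : ℝ, 1 ≤ C ∧ ∀ r : ℕ, 1 ≤ r → ∀ Y : ℝ, 2 ≤ Y →
    ∑ S ∈ (PP k Y).powerset, ((k - 1 : ℕ):ℝ) ^ S.card * ((Nat.gcd r (∏ p ∈ S, p) : ℝ) / ((∏ p ∈ S, p : ℕ) : ℝ)) ≤
      C * Real.log Y ^ (2 * (k - 1)) * (r:ℝ) ^ θ := by
  obtain ⟨C1, hC1, hP⟩ := prodP k hk 0 le_rfl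
  have hk0 : (0:ℝ) < k := by exact_mod_cast hk
  obtain ⟨C2, hC2, hD⟩ := divisor_bound (θ / k) (by positivity)
  refine ⟨C1 * C2 ^ k, one_le_mul_of_one_le_of_one_le hC1 (one_le_pow₀ hC2), ?_⟩
  intro r hr Y hY
  have hr0 : (0:ℝ) < r := by exact_mod_cast hr
  have hY0 : (0:ℝ) ≤ Y := by linarith
  set κ : ℝ := ((k - 1 : ℕ):ℝ) with hκ
  have hκ0 : 0 ≤ κ := Nat.cast_nonneg _
  have hκk : 1 + κ = k := by rw [hκ]; push_cast [hk]; ring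
  have hk1 : (1:ℝ) ≤ k := by exact_mod_cast hk
  have h1 : ∑ S ∈ (PP k Y).powerset, κ ^ S.card * ((Nat.gcd r (∏ p ∈ S, p) : ℝ) / ((∏ p ∈ S, p : ℕ) : ℝ)) ≤
      ∏ p ∈ PP k Y, (1 + κ * ((Nat.gcd r p : ℝ) / p)) := by
    rw [← expand_prod]
    apply Finset.sum_le_sum
    intro S _
    rw [Finset.prod_div_distrib]
    push_cast
    gcongr
    exact_mod_cast gcd_prod_le r hr S
  have h2 : ∏ p ∈ PP k Y, (1 + κ * ((Nat.gcd r p : ℝ) / p)) ≤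
      ∏ p ∈ PP k Y, ((1 + κ * (p:ℝ) ^ ((0:ℝ) / Real.log Y - 1)) * (if p ∣ r then (k:ℝ) else 1)) := by
    apply Finset.prod_le_prod
    · intro p _; positivity
    · intro p hp
      have hpp := ((mem_PP hY0).mp hp).1
      have hp0 : (0:ℝ) < p := by exact_mod_cast hpp.pos
      rw [zero_div, zero_sub, Real.rpow_neg_one]
      split_ifs with hdvd
      · rw [Nat.gcd_eq_right hdvd, div_self hp0.ne', mul_one, hκk]
        have : 0 ≤ κ * (p:ℝ)⁻¹ := by positivity
        nlinarith
      · have : Nat.gcd r p = 1 := by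
          rw [Nat.gcd_comm]; exact (Nat.Prime.coprime_iff_not_dvd hpp).mpr hdvd
        rw [this]; simp
  have h3 : ∏ p ∈ PP k Y, (if p ∣ r then (k:ℝ) else 1) ≤ C2 ^ k * (r:ℝ) ^ θ := by
    rw [Finset.prod_ite, Finset.prod_const_one, mul_one, Finset.prod_const]
    have hsub : (PP k Y).filter (fun p => p ∣ r) ⊆ r.primeFactors := by
      intro p hp
      rw [Finset.mem_filter] at hp
      exact Nat.mem_primeFactors.mpr ⟨((mem_PP hY0).mp hp.1).1, hp.2, by omega⟩
    have hk2 : (k:ℝ) ≤ 2 ^ k := by exact_mod_cast Nat.lt_two_pow_self.le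
    calc (k:ℝ) ^ ((PP k Y).filter (fun p => p ∣ r)).card ≤ (k:ℝ) ^ r.primeFactors.card :=
          pow_le_pow_right₀ hk1 (Finset.card_le_card hsub)
      _ ≤ (2 ^ k) ^ r.primeFactors.card := by gcongr
      _ = (2 ^ r.primeFactors.card) ^ k := by rw [← pow_mul, ← pow_mul, mul_comm]
      _ ≤ (r.divisors.card : ℝ) ^ k := by
          gcongr
          exact_mod_cast two_pow_omega r hr
      _ ≤ (C2 * (r:ℝ) ^ (θ / k)) ^ k := by gcongr; exact hD r hr
      _ = _ := by
          rw [mul_pow, ← Real.rpow_natCast ((r:ℝ) ^ (θ / k)), ← Real.rpow_mul hr0.le, div_mul_cancel₀ _ hk0.ne']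
  have h4 := hP Y hY
  have hlog : 0 ≤ Real.log Y := Real.log_nonneg (by linarith)
  calc _ ≤ _ := h1
    _ ≤ _ := h2
    _ = _ := Finset.prod_mul_distrib
    _ ≤ (C1 * Real.log Y ^ (2 * (k - 1))) * (C2 ^ k * (r:ℝ) ^ θ) := by
        apply mul_le_mul h4 h3 _ (by positivity)
        apply Finset.prod_nonneg
        intro p _; split_ifs <;> positivity
    _ = _ := by ring

lemma PT_root (k : ℕ) (hk : 1 ≤ k) (C P ρ R : ℝ) (g : ℕ) (hg : 1 ≤ g) (hC : 1 ≤ C) (hP : 0 ≤ P) (hρ : 0 < ρ) (hR : 0 < R)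
    (h : P ≤ C * ρ ^ (1/2:ℝ) + C * ((g:ℝ) ^ k / R) ^ (3/4:ℝ)) :
    P ^ (((2 ^ (k - 1) : ℕ) : ℝ)⁻¹) ≤ C * (ρ ^ ((2:ℝ) ^ (-(k:ℝ))) + g * R ^ (-(3/2 * (2:ℝ) ^ (-(k:ℝ))))) := by
  set θ : ℝ := (2:ℝ) ^ (-(k:ℝ)) with hθ
  set σ : ℝ := (((2 ^ (k - 1) : ℕ) : ℝ)⁻¹) with hσ
  have hg1 : (1:ℝ) ≤ g := by exact_mod_cast hg
  have hpow : (1:ℝ) ≤ (2 ^ (k-1) : ℕ) := by exact_mod_cast Nat.one_le_two_pow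
  have hσ0 : 0 < σ := by rw [hσ]; positivity
  have hσ1 : σ ≤ 1 := inv_le_one_of_one_le₀ hpow
  have hσθ : σ = 2 * θ := by
    obtain ⟨j, rfl⟩ : ∃ j, k = j + 1 := ⟨k - 1, by omega⟩
    rw [hσ, hθ, Real.rpow_neg (by norm_num), Real.rpow_natCast, Nat.add_sub_cancel, pow_succ]
    push_cast
    field_simp
  have hkσ : k * σ ≤ 1 := by
    rw [hσ, ← div_eq_mul_inv, div_le_one (by linarith)]
    have : k ≤ 2 ^ (k-1) := by
      have : k - 1 < 2 ^ (k-1) := Nat.lt_two_pow_self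
      omega
    exact_mod_cast this
  have hg0 : (0:ℝ) < g := by linarith
  calc P ^ σ ≤ (C * ρ ^ (1/2:ℝ) + C * ((g:ℝ) ^ k / R) ^ (3/4:ℝ)) ^ σ := Real.rpow_le_rpow hP h hσ0.le
    _ = C ^ σ * (ρ ^ (1/2:ℝ) + ((g:ℝ) ^ k / R) ^ (3/4:ℝ)) ^ σ := by
        rw [← mul_add, Real.mul_rpow (by linarith) (by positivity)]
    _ ≤ C ^ (1:ℝ) * ((ρ ^ (1/2:ℝ)) ^ σ + (((g:ℝ) ^ k / R) ^ (3/4:ℝ)) ^ σ) := by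
        gcongr
        exact Real.rpow_add_le_add_rpow (by positivity) (by positivity) hσ0.le hσ1
    _ = C * (ρ ^ θ + (g:ℝ) ^ (k * (3/4 * σ)) * R ^ (-(3/2 * θ))) := by
        rw [Real.rpow_one, ← Real.rpow_mul hρ.le, ← Real.rpow_mul (by positivity), Real.div_rpow (by positivity) hR.le,
          ← Real.rpow_natCast, ← Real.rpow_mul hg0.le, Real.rpow_neg hR.le]
        have e1 : 1 / 2 * σ = θ := by rw [hσθ]; ring
        have e2 : 3 / 4 * σ = 3 / 2 * θ := by rw [hσθ]; ring
        rw [e1, e2]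
        ring
    _ ≤ C * (ρ ^ θ + (g:ℝ) ^ (1:ℝ) * R ^ (-(3/2 * θ))) := by
        gcongr
        nlinarith
    _ = _ := by rw [Real.rpow_one]

open scoped Classical in
lemma main_bd (k : ℕ) (hk : 0 < k) : ∃ C : ℝ, 1 ≤ C ∧
    ∀ g : Polynomial ℤ, g.natDegree = k → ∀ A : ℕ, 1 ≤ A → g.leadingCoeff = A →
    ∀ X Y Z : ℝ, 2 ≤ X → 2 ≤ Y → 2 ≤ Z → Y * Z ≤ X →
    ∀ a q : ℕ, 1 ≤ q → Nat.gcd a q = 1 → ∀ α : ℝ, |α - (a:ℝ) / q| < 1 / (q:ℝ) ^ 2 →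
    ∀ ρ : ℝ, ρ = (A:ℝ) / q + A * Z / X + q * Z ^ k / X ^ k → ρ ≤ 1 →
    ‖∑ n ∈ (Finset.Icc 1 ⌊X⌋₊).filter (fun n : ℕ => (n : ℤ) ∈ WSet g Y),
                  e (((g.eval (n : ℤ) : ℤ) : ℝ) * α)‖ ≤
      C * Real.log Y ^ (2 * (k - 1)) * X * (Real.exp (-Real.log Z / Real.log Y) + ρ ^ ((2:ℝ) ^ (-(k:ℝ)))) := by
  set θ : ℝ := (2:ℝ) ^ (-(k:ℝ)) with hθ
  have hθ0 : 0 < θ := by positivity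
  have hθ1 : θ ≤ 1 := by
    rw [hθ]; apply Real.rpow_le_one_of_one_le_of_nonpos (by norm_num); simp
  set B : ℝ := 16 * ((k:ℝ) + 1) with hB
  have hB1 : 1 ≤ B := by
    have : (0:ℝ) ≤ k := Nat.cast_nonneg k
    linarith
  obtain ⟨C1, hC1, hsieve⟩ := sieve_main k hk B hB1
  obtain ⟨C2, hC2, huni⟩ := unified k hk
  obtain ⟨C3, hC3, hgcd⟩ := gcdsum k hk (θ/2) (by positivity)
  set Q : ℝ := ((k.factorial ^ 2 : ℕ):ℝ) with hQ
  have hQ1 : 1 ≤ Q := by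
    rw [hQ]; exact_mod_cast Nat.one_le_pow _ _ (Nat.factorial_pos k)
  refine ⟨C1 + 8 * Q * C2 * C2 * C3, ?_, ?_⟩
  · have : 0 ≤ 8 * Q * C2 * C2 * C3 := by positivity
    linarith
  intro g hg A hA hlc X Y Z hX hY hZ hYZ a q hq haq α hα ρ hρd hρ1
  have hX0 : 0 < X := by linarith
  have hX1 : 1 ≤ X := by linarith
  have hq0 : (0:ℝ) < q := by exact_mod_cast hq
  have hA0 : (0:ℝ) < A := by exact_mod_cast hA
  have hZ0 : 0 < Z := by linarith
  have hZX : Z ≤ X := by nlinarith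
  have hρ0 : 0 < ρ := by rw [hρd]; positivity
  have hL0 : 0 ≤ Real.log Y := Real.log_nonneg (by linarith)
  obtain ⟨r, hr, V, hV, hrV, hPT⟩ := huni X Z hX hZ A a q hA hq haq α hα ρ hρd hρ1
  have hr0 : (0:ℝ) < r := by exact_mod_cast hr
  have hV0 : 0 < V := by linarith
  set R : ℝ := r * V with hR
  have hR0 : 0 < R := by positivity
  have hrR : (r:ℝ) ≤ R := by rw [hR]; nlinarith
  have hs := hsieve g hg X Y Z hX hY hZ hYZ α
    (fun d => 4 * C2 * X * (ρ ^ θ * ((Nat.gcd 1 d : ℝ) / d) + R ^ (-(3/2 * θ)) * ((Nat.gcd r d : ℝ) / d)))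
    (fun d => by positivity) (by
      intro d hd hdZ t u v huv
      have hd0 : (0:ℝ) < d := by exact_mod_cast hd
      have hdX : (d:ℝ) ≤ X ^ (1 / B) := hdZ.trans (Real.rpow_le_rpow hZ0.le hZX (by positivity))
      have hdX' : (d:ℝ) ≤ X := by
        refine hdX.trans ?_
        conv_rhs => rw [← Real.rpow_one X]
        apply Real.rpow_le_rpow_of_exponent_le hX1
        rw [div_le_one (by linarith)]; exact hB1
      have hQn : 1 ≤ k.factorial ^ 2 := Nat.one_le_pow _ _ (Nat.factorial_pos k)
      obtain ⟨hN1, hN2⟩ := N_bounds X hX1 (k.factorial ^ 2) d hQn hd hdX'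
      have hp := hPT d hd hdX
      have hex := expsum_PT k hk g hg (k.factorial ^ 2 * d) (⌊X⌋₊ / (k.factorial ^ 2 * d) + 1) (Nat.le_add_left 1 _)
        (Nat.mul_pos hQn hd) t u v huv α
      refine hex.trans ?_
      rw [hlc, Int.cast_natCast]
      set N := ⌊X⌋₊ / (k.factorial ^ 2 * d) + 1 with hN
      have hroot := PT_root k hk C2 _ ρ R (Nat.gcd r d) (Nat.gcd_pos_of_pos_left _ hr) hC2 (PT_nonneg _ _ _) hρ0 hR0 hp
      have hNle : 2 * (N:ℝ) ≤ 4 * X / d := by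
        rw [le_div_iff₀ hd0]
        rw [Nat.cast_mul, ← hQ] at hN2
        have : Q * (2 * N * d) ≤ Q * (4 * X) := by nlinarith
        exact le_of_mul_le_mul_left this (by linarith)
      calc _ ≤ (4 * X / d) * (C2 * (ρ ^ θ + (Nat.gcd r d : ℝ) * R ^ (-(3/2 * θ)))) := by
            gcongr
            exact Real.rpow_nonneg (PT_nonneg _ _ _) _
        _ = _ := by
          rw [Nat.gcd_one_left]; push_cast; ring)
  refine hs.trans ?_
  clear hs hsieve huni hPT
  set L := Real.log Y ^ (2 * (k - 1)) with hL
  have hLL : 0 ≤ L := by positivity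
  have g1 := hgcd 1 le_rfl Y hY
  have g2 := hgcd r hr Y hY
  rw [Nat.cast_one, Real.one_rpow, mul_one] at g1
  have hRθ : R ^ (-(3/2 * θ)) * (r:ℝ) ^ (θ/2) ≤ C2 * ρ ^ θ := by
    calc R ^ (-(3/2 * θ)) * (r:ℝ) ^ (θ/2) ≤ R ^ (-(3/2 * θ)) * R ^ (θ/2) := by gcongr
      _ = (1 / R) ^ θ := by
          rw [← Real.rpow_add hR0, one_div, Real.inv_rpow hR0.le, ← Real.rpow_neg hR0.le]; congr 1; ring
      _ ≤ (C2 * ρ) ^ θ := by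
          apply Real.rpow_le_rpow (by positivity) _ hθ0.le
          rw [div_le_iff₀ hR0]; exact hrV
      _ = C2 ^ θ * ρ ^ θ := Real.mul_rpow (by linarith) hρ0.le
      _ ≤ C2 ^ (1:ℝ) * ρ ^ θ := by gcongr
      _ = _ := by rw [Real.rpow_one]
  have hsum : ∑ S ∈ (PP k Y).powerset.filter (fun S => ((∏ p ∈ S, p : ℕ) : ℝ) ≤ Z ^ (1 / B)),
        Q * ((k - 1 : ℕ):ℝ) ^ S.card * (4 * C2 * X * (ρ ^ θ * ((Nat.gcd 1 (∏ p ∈ S, p) : ℝ) / ((∏ p ∈ S, p : ℕ):ℝ)) +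
          R ^ (-(3/2 * θ)) * ((Nat.gcd r (∏ p ∈ S, p) : ℝ) / ((∏ p ∈ S, p : ℕ):ℝ)))) ≤ 8 * Q * C2 * C2 * C3 * L * X * ρ ^ θ := by
    calc _ ≤ ∑ S ∈ (PP k Y).powerset,
        Q * ((k - 1 : ℕ):ℝ) ^ S.card * (4 * C2 * X * (ρ ^ θ * ((Nat.gcd 1 (∏ p ∈ S, p) : ℝ) / ((∏ p ∈ S, p : ℕ):ℝ)) +
          R ^ (-(3/2 * θ)) * ((Nat.gcd r (∏ p ∈ S, p) : ℝ) / ((∏ p ∈ S, p : ℕ):ℝ)))) := by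
          apply Finset.sum_le_sum_of_subset_of_nonneg (Finset.filter_subset _ _)
          intro S _ _
          positivity
      _ = Q * (4 * C2 * X) * (ρ ^ θ * ∑ S ∈ (PP k Y).powerset, ((k - 1 : ℕ):ℝ) ^ S.card * ((Nat.gcd 1 (∏ p ∈ S, p) : ℝ) / ((∏ p ∈ S, p : ℕ) : ℝ))
          + R ^ (-(3/2 * θ)) * ∑ S ∈ (PP k Y).powerset, ((k - 1 : ℕ):ℝ) ^ S.card * ((Nat.gcd r (∏ p ∈ S, p) : ℝ) / ((∏ p ∈ S, p : ℕ) : ℝ))) := by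
          rw [Finset.mul_sum, Finset.mul_sum, ← Finset.sum_add_distrib, Finset.mul_sum]
          apply Finset.sum_congr rfl
          intro S _
          ring
      _ ≤ Q * (4 * C2 * X) * (ρ ^ θ * (C3 * L) + R ^ (-(3/2 * θ)) * (C3 * L * (r:ℝ) ^ (θ/2))) := by gcongr
      _ = Q * (4 * C2 * X) * (1 * ρ ^ θ * (C3 * L) + (R ^ (-(3/2 * θ)) * (r:ℝ) ^ (θ/2)) * (C3 * L)) := by ring
      _ ≤ Q * (4 * C2 * X) * (C2 * ρ ^ θ * (C3 * L) + (C2 * ρ ^ θ) * (C3 * L)) := by gcongr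
      _ = _ := by ring
  have hE : 0 ≤ Real.exp (-Real.log Z / Real.log Y) := (Real.exp_pos _).le
  calc _ ≤ 8 * Q * C2 * C2 * C3 * L * X * ρ ^ θ + C1 * L * X * Real.exp (-Real.log Z / Real.log Y) :=
        add_le_add_left hsum _
    _ ≤ 8 * Q * C2 * C2 * C3 * L * X * ρ ^ θ + C1 * L * X * Real.exp (-Real.log Z / Real.log Y) +
        (C1 * L * X * ρ ^ θ + 8 * Q * C2 * C2 * C3 * L * X * Real.exp (-Real.log Z / Real.log Y)) :=
        le_add_of_nonneg_right (by positivity)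
    _ = _ := by ring

lemma logY_bound (k : ℕ) (hk : 0 < k) : ∃ C : ℝ, 1 ≤ C ∧ ∀ Y : ℝ, 2 ≤ Y →
    Real.log Y ^ (2 * (k - 1)) ≤ C * Real.log Y ^ (Real.exp 1 * k) ∧ 1 ≤ C * Real.log Y ^ (Real.exp 1 * k) := by
  have hl2 : 0 < Real.log 2 := Real.log_pos (by norm_num)
  have hl2' : Real.log 2 ≤ 1 := by
    have := Real.log_two_lt_d9; linarith
  have hk0 : (0:ℝ) < k := by exact_mod_cast hk
  have he : 2 ≤ Real.exp 1 := by
    have := Real.exp_one_gt_d9; linarith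
  have hx : 0 ≤ Real.exp 1 * k := by positivity
  have gen : ∀ m : ℕ, (m:ℝ) ≤ Real.exp 1 * k → ∀ Y : ℝ, 2 ≤ Y →
      Real.log Y ^ m ≤ (1 / Real.log 2) ^ (Real.exp 1 * k) * Real.log Y ^ (Real.exp 1 * k) := by
    intro m hm Y hY
    have hlY : Real.log 2 ≤ Real.log Y := Real.log_le_log (by norm_num) hY
    have hlY0 : 0 < Real.log Y := by linarith
    rw [← Real.mul_rpow (by positivity) hlY0.le, ← Real.rpow_natCast]
    have h1 : 1 ≤ 1 / Real.log 2 * Real.log Y := by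
      rw [one_div, inv_mul_eq_div, le_div_iff₀ hl2]; linarith
    calc Real.log Y ^ (m:ℝ) ≤ (1 / Real.log 2 * Real.log Y) ^ (m:ℝ) := by
          apply Real.rpow_le_rpow hlY0.le _ (Nat.cast_nonneg m)
          rw [one_div, inv_mul_eq_div, le_div_iff₀ hl2]; nlinarith
      _ ≤ _ := Real.rpow_le_rpow_of_exponent_le h1 hm
  refine ⟨(1 / Real.log 2) ^ (Real.exp 1 * k), Real.one_le_rpow (one_le_one_div hl2 hl2') hx, ?_⟩
  intro Y hY
  refine ⟨gen _ ?_ Y hY, ?_⟩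
  · have : ((2 * (k-1) : ℕ):ℝ) ≤ 2 * k := by exact_mod_cast Nat.mul_le_mul_left 2 (Nat.sub_le k 1)
    nlinarith
  · simpa using gen 0 (by simpa using hx) Y hY

lemma cont_pos (g : Polynomial ℤ) (k : ℕ) (hk : 0 < k) (hg : g.natDegree = k) : 1 ≤ cont g := by
  rw [Nat.one_le_iff_ne_zero]
  intro h
  unfold cont at h
  rw [Finset.gcd_eq_zero_iff] at h
  have h1 := h g.natDegree (by rw [Finset.mem_Icc]; omega)
  rw [Int.natAbs_eq_zero] at h1
  have h2 : g = 0 := Polynomial.leadingCoeff_eq_zero.mp h1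
  rw [h2] at hg
  simp at hg
  omega

open scoped Classical in
/-- Lemma 4.5 (Rice): the Weyl-type minor-arc bound for
`∑_{1 ≤ n ≤ X, n ∈ W(g;Y)} e(g(n)α)` when `|α - a/q| < 1/q²`. -/
theorem stmt11 (k : ℕ) (hk : 0 < k) :
    ∃ C : ℝ, 0 < C ∧
      ∀ g : Polynomial ℤ, g.natDegree = k → 0 < g.leadingCoeff →
        ∀ X Y Z : ℝ, 2 ≤ X → 2 ≤ Y → 2 ≤ Z → Y * Z ≤ X →
          ∀ a q : ℕ, 0 < a → 0 < q → Nat.gcd a q = 1 →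
            ∀ α : ℝ, |α - (a : ℝ) / q| < 1 / (q : ℝ) ^ 2 →
              ‖∑ n ∈ (Finset.Icc 1 ⌊X⌋₊).filter (fun n => (n : ℤ) ∈ WSet g Y),
                  e (((g.eval (n : ℤ) : ℤ) : ℝ) * α)‖ ≤
                C * (cont g : ℝ) ^ 6 * Real.log Y ^ (Real.exp 1 * k) * X *
                  (Real.exp (-Real.log Z / Real.log Y) +
                    ((g.leadingCoeff : ℝ) *
                        Real.log ((g.leadingCoeff : ℝ) * q * X) ^ (k ^ 2) *
                        ((q : ℝ)⁻¹ + Z / X + (q : ℝ) * Z ^ k /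
                          ((g.leadingCoeff : ℝ) * X ^ k))) ^ ((2 : ℝ) ^ (-(k : ℝ)))) := by
  obtain ⟨C1, hC1, hmain⟩ := main_bd k hk
  obtain ⟨C2, hC2, hlog⟩ := logY_bound k hk
  refine ⟨C1 * C2, by positivity, ?_⟩
  intro g hg hlc X Y Z hX hY hZ hYZ a q ha hq haq α hα
  have hsum : ∑ n ∈ (Finset.Icc 1 ⌊X⌋₊).filter (fun n => (n : ℤ) ∈ WSet g Y),
                  e (((g.eval (n : ℤ) : ℤ) : ℝ) * α) = ∑ n ∈ (Finset.Icc 1 ⌊X⌋₊).filter (fun n : ℕ => (n : ℤ) ∈ WSet g Y),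
                  e (((g.eval (n : ℤ) : ℤ) : ℝ) * α) := by
    have h : (do let a ← Finset.Icc 1 ⌊X⌋₊; pure (a:ℤ) : Finset ℤ) = (Finset.Icc 1 ⌊X⌋₊).image (fun a : ℕ => (a:ℤ)) := by
      ext x
      simp [Finset.bind_def]
    rw [h, Finset.filter_image, Finset.sum_image (by intro a _ b _ h; simpa using h)]
  rw [hsum]
  clear hsum
  obtain ⟨A, hAeq⟩ : ∃ A : ℕ, g.leadingCoeff = A := ⟨g.leadingCoeff.toNat, (Int.toNat_of_nonneg hlc.le).symm⟩
  have hA : 1 ≤ A := by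
    rw [hAeq] at hlc; exact_mod_cast hlc
  rw [hAeq, Int.cast_natCast]
  have hA0 : (0:ℝ) < A := by exact_mod_cast hA
  have hA1 : (1:ℝ) ≤ A := by exact_mod_cast hA
  have hq0 : (0:ℝ) < q := by exact_mod_cast hq
  have hq1 : (1:ℝ) ≤ q := by exact_mod_cast hq
  have hX0 : 0 < X := by linarith
  have hZ0 : 0 < Z := by linarith
  have hX4 : 4 ≤ X := by nlinarith
  have hθ0 : 0 < (2:ℝ) ^ (-(k:ℝ)) := by positivity
  set θ : ℝ := (2:ℝ) ^ (-(k:ℝ)) with hθ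
  set ρ : ℝ := (A:ℝ) / q + A * Z / X + q * Z ^ k / X ^ k with hρ
  have hρ0 : 0 < ρ := by rw [hρ]; positivity
  have hlogA : 1 ≤ Real.log ((A:ℝ) * q * X) := by
    rw [Real.le_log_iff_exp_le (by positivity)]
    have h1 := Real.exp_one_lt_d9
    have h2 : 1 ≤ (A:ℝ) * q := one_le_mul_of_one_le_of_one_le hA1 hq1
    nlinarith
  have hbr : ρ ≤ (A:ℝ) * Real.log ((A:ℝ) * q * X) ^ (k ^ 2) * ((q : ℝ)⁻¹ + Z / X + (q : ℝ) * Z ^ k / ((A : ℝ) * X ^ k)) := by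
    have h1 : ρ = (A:ℝ) * 1 * ((q : ℝ)⁻¹ + Z / X + (q : ℝ) * Z ^ k / ((A : ℝ) * X ^ k)) := by
      rw [hρ]; field_simp
    rw [h1]
    gcongr
    exact one_le_pow₀ hlogA
  have hbrθ := Real.rpow_le_rpow hρ0.le hbr hθ0.le
  set br := ((A:ℝ) * Real.log ((A:ℝ) * q * X) ^ (k ^ 2) * ((q : ℝ)⁻¹ + Z / X + (q : ℝ) * Z ^ k / ((A : ℝ) * X ^ k))) ^ θ with hbrd
  have hE : 0 ≤ Real.exp (-Real.log Z / Real.log Y) := (Real.exp_pos _).le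
  have hρθ0 : 0 ≤ ρ ^ θ := by positivity
  have hcont : (1:ℝ) ≤ (cont g : ℝ) ^ 6 := one_le_pow₀ (by exact_mod_cast cont_pos g k hk hg)
  obtain ⟨hl1, hl2⟩ := hlog Y hY
  have hL0 : 0 ≤ Real.log Y := Real.log_nonneg (by linarith)
  set LY := Real.log Y ^ (Real.exp 1 * k) with hLY
  have hLY0 : 0 ≤ LY := by positivity
  have hfin : ∀ T : ℝ, 0 ≤ T → C1 * (C2 * LY) * X * T ≤ C1 * C2 * (cont g : ℝ) ^ 6 * LY * X * T := by
    intro T hT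
    calc C1 * (C2 * LY) * X * T = C1 * C2 * 1 * LY * X * T := by ring
      _ ≤ _ := by gcongr
  rcases le_or_gt ρ 1 with h1 | h1
  · calc _ ≤ _ := hmain g hg A hA hAeq X Y Z hX hY hZ hYZ a q hq haq α hα ρ hρ h1
      _ ≤ C1 * (C2 * LY) * X * (Real.exp (-Real.log Z / Real.log Y) + br) := by gcongr
      _ ≤ _ := hfin _ (by linarith)
  · have htriv : ‖∑ n ∈ (Finset.Icc 1 ⌊X⌋₊).filter (fun n : ℕ => (n : ℤ) ∈ WSet g Y),
                  e (((g.eval (n : ℤ) : ℤ) : ℝ) * α)‖ ≤ X := by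
      calc _ ≤ ∑ n ∈ (Finset.Icc 1 ⌊X⌋₊).filter (fun n : ℕ => (n : ℤ) ∈ WSet g Y),
                  ‖e (((g.eval (n : ℤ) : ℤ) : ℝ) * α)‖ := norm_sum_le _ _
        _ = (((Finset.Icc 1 ⌊X⌋₊).filter (fun n : ℕ => (n : ℤ) ∈ WSet g Y)).card : ℝ) := by
            simp [norm_e]
        _ ≤ ((Finset.Icc 1 ⌊X⌋₊).card : ℝ) := by exact_mod_cast Finset.card_filter_le _ _
        _ = (⌊X⌋₊ : ℝ) := by simp
        _ ≤ X := Nat.floor_le hX0.le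
    have h2 : 1 ≤ ρ ^ θ := Real.one_le_rpow h1.le hθ0.le
    calc _ ≤ X := htriv
      _ = 1 * 1 * X * 1 := by ring
      _ ≤ C1 * (C2 * LY) * X * (Real.exp (-Real.log Z / Real.log Y) + br) := by
          gcongr
          linarith
      _ ≤ _ := hfin _ (by linarith)
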